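/- arXiv:math/0612508 — 5 statements merged into one kernel-verified Lean document; each statement's English description precedes it below -/
import Mathlib

section
/- Let σ ∈ S_n have cycle type 1^{λ_1} 2^{λ_2} ⋯ n^{λ_n} and let Z_σ be its centralizer in S_n. Then the abelianization Z_σ/Z_σ' is isomorphic to (∏_{i : λ_i = 1} C_i) × (∏_{i : λ_i ≥ 2} (C_i × C_2)), where C_k denotes the cyclic group of order k. -/
section Aux
open Equiv

/-- The wreath product `C ≀ Perm F`. -/
abbrev Wr (F C : Type*) [CommGroup C] := (F → C) ⋊[(mulAutArrow : Perm F →* MulAut (F → C))] Perm F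

/-- The action of the wreath product on `F × C`. -/
def wrPerm (F C : Type*) [CommGroup C] : Wr F C →* Perm (F × C) where
  toFun w :=
    { toFun := fun x => (w.right x.1, w.left (w.right x.1) * x.2)
      invFun := fun y => (w.right.symm y.1, (w.left y.1)⁻¹ * y.2)
      left_inv := fun x => by simp
      right_inv := fun x => by simp }
  map_one' := by ext x <;> simp
  map_mul' w v := by
    ext x
    · simp
    · change w.left (w.right (v.right x.1)) * v.left (w.right.symm (w.right (v.right x.1))) * x.2 =
        w.left (w.right (v.right x.1)) * (v.left (v.right x.1) * x.2)
      rw [Equiv.symm_apply_apply, mul_assoc]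

lemma wrPerm_injective (F C : Type*) [CommGroup C] : Function.Injective (wrPerm F C) := by
  intro w v h
  have h' : ∀ j k, (w.right j, w.left (w.right j) * k) = (v.right j, v.left (v.right j) * k) :=
    fun j k => DFunLike.congr_fun h (j, k)
  have hr : w.right = v.right := by
    ext j; exact congrArg Prod.fst (h' j 1)
  refine SemidirectProduct.ext (funext fun j => ?_) hr
  have := congrArg Prod.snd (h' (w.right.symm j) 1)
  rw [hr] at this
  simpa using this

/-- The abelianization map of the wreath product. -/
def wrHom (F C : Type*) [CommGroup C] [Fintype F] [DecidableEq F] : Wr F C →* C × ℤˣ where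
  toFun w := (∏ j, w.left j, Perm.sign w.right)
  map_one' := by ext <;> simp
  map_mul' w v := by
    ext
    · simp only [SemidirectProduct.mul_left, Pi.mul_apply, Finset.prod_mul_distrib, Prod.fst_mul]
      congr 1
      exact Equiv.prod_comp w.right.symm v.left
    · simp

lemma hom_perm_sign {F A : Type*} [CommGroup A] [Fintype F] [DecidableEq F] (f : Perm F →* A)
    (τ : Perm F) (hτ : Perm.sign τ = 1) : f τ = 1 := by
  rcases subsingleton_or_nontrivial F with hF | hF
  · rw [Subsingleton.elim τ 1, map_one]
  obtain ⟨x, y, hxy⟩ := exists_pair_ne F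
  have hs : f (swap x y) * f (swap x y) = 1 := by rw [← map_mul, swap_mul_self, map_one]
  have key : ∀ τ : Perm F, ∃ m : ℕ, f τ = f (swap x y) ^ m ∧ Perm.sign τ = (-1) ^ m := by
    intro τ
    induction τ using Perm.swap_induction_on with
    | one => exact ⟨0, by simp⟩
    | swap_mul g a b hab ih =>
      obtain ⟨m, h1, h2⟩ := ih
      refine ⟨m + 1, ?_, ?_⟩
      · obtain ⟨c, hc⟩ := isConj_iff.1 (Perm.isConj_swap hxy hab)
        rw [map_mul, h1, ← hc, map_mul, map_mul, map_inv, pow_succ']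
        congr 1
        rw [mul_comm (f c), mul_inv_cancel_right]
      · rw [Perm.sign_mul, Perm.sign_swap hab, h2, pow_succ']
  obtain ⟨m, h1, h2⟩ := key τ
  rw [hτ] at h2
  have hm : Even m := by
    by_contra h
    rw [Nat.not_even_iff_odd] at h
    rw [h.neg_one_pow] at h2
    exact absurd h2 (by decide)
  obtain ⟨k, rfl⟩ := hm
  rw [h1, pow_add, ← mul_pow, hs, one_pow]

lemma wrHom_ker (F C : Type*) [CommGroup C] [Fintype F] [DecidableEq F] (w : Wr F C)
    (hw : wrHom F C w = 1) : w ∈ commutator (Wr F C) := by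
  obtain ⟨h1, h2⟩ := Prod.ext_iff.1 hw
  change ∏ j, w.left j = 1 at h1
  change Perm.sign w.right = 1 at h2
  rw [← Abelianization.ker_of, MonoidHom.mem_ker]
  set f : Wr F C →* Abelianization (Wr F C) := Abelianization.of
  rw [← SemidirectProduct.inl_left_mul_inr_right w, map_mul]
  have hr : f (SemidirectProduct.inr w.right) = 1 :=
    hom_perm_sign (f.comp SemidirectProduct.inr) w.right h2
  rw [hr, mul_one]
  rcases isEmpty_or_nonempty F with hF | ⟨⟨j0⟩⟩
  · rw [Subsingleton.elim w.left 1, map_one, map_one]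
  set g : (F → C) →* Abelianization (Wr F C) := f.comp SemidirectProduct.inl with hg
  change g w.left = 1
  have hconj : ∀ j a, g (Pi.mulSingle j a) = g (Pi.mulSingle j0 a) := by
    intro j a
    have : (Pi.mulSingle j a : F → C) =
        (mulAutArrow (swap j0 j) : MulAut (F → C)) (Pi.mulSingle j0 a) := by
      ext x
      change _ = (Pi.mulSingle j0 a : F → C) (swap j0 j x)
      simp only [Pi.mulSingle_apply]
      congr 1
      rw [swap_apply_eq_iff]; simp
    rw [this, hg, MonoidHom.comp_apply, SemidirectProduct.inl_aut, map_mul, map_mul, mul_comm,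
      ← mul_assoc, ← map_mul, ← map_mul, ← map_mul, inv_mul_cancel, map_one, one_mul]
    rfl
  rw [← Finset.univ_prod_mulSingle w.left, map_prod]
  simp_rw [hconj]
  have : ∀ a, g (Pi.mulSingle j0 a) = (g.comp (MonoidHom.mulSingle (fun _ : F => C) j0)) a :=
    fun _ => rfl
  simp_rw [this]
  rw [← map_prod, h1, map_one]

lemma wr_target (F : Type*) [Fintype F] (i l : ℕ) (hl : Fintype.card F = l) :
    ∃ φ : Wr F (Multiplicative (ZMod i)) →*
      Multiplicative (ZMod (if l = 0 then 1 else i)) ×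
          Multiplicative (ZMod (if 2 ≤ l then 2 else 1)),
      Function.Surjective φ ∧ φ.ker = commutator _ := by
  classical
  have sing : ∀ (j : F) (a : Multiplicative (ZMod i)),
      ∏ x, (Pi.mulSingle j a : F → Multiplicative (ZMod i)) x = a := fun j a => by
    simp
  suffices ∃ φ : Wr F (Multiplicative (ZMod i)) →*
      Multiplicative (ZMod (if l = 0 then 1 else i)) ×
          Multiplicative (ZMod (if 2 ≤ l then 2 else 1)),
      Function.Surjective φ ∧ φ.ker ≤ commutator _ by
    obtain ⟨φ, h1, h2⟩ := this
    exact ⟨φ, h1, le_antisymm h2 (Abelianization.commutator_subset_ker φ)⟩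
  rcases Nat.lt_or_ge 1 l with h | h
  · have e1 : (if l = 0 then 1 else i) = i := if_neg (by omega)
    have e2 : (if 2 ≤ l then 2 else 1) = 2 := if_pos h
    rw [e1, e2]
    have : Nontrivial F := Fintype.one_lt_card_iff_nontrivial.1 (by omega)
    obtain ⟨x, y, hxy⟩ := exists_pair_ne F
    have hc : Nat.card ℤˣ = Nat.card (Multiplicative (ZMod 2)) := by simp
    have : Fact (Nat.Prime 2) := ⟨Nat.prime_two⟩
    let e : ℤˣ ≃* Multiplicative (ZMod 2) := mulEquivOfPrimeCardEq (p := 2) (by simp) (by simp)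
    let E := MulEquiv.prodCongr (MulEquiv.refl (Multiplicative (ZMod i))) e
    refine ⟨E.toMonoidHom.comp (wrHom F _), E.surjective.comp ?_, ?_⟩
    · rintro ⟨a, u⟩
      rcases Int.units_eq_one_or u with rfl | rfl
      · exact ⟨⟨Pi.mulSingle x a, 1⟩, Prod.ext (sing _ _) (by simp [wrHom])⟩
      · exact ⟨⟨Pi.mulSingle x a, swap x y⟩, Prod.ext (sing _ _) (Perm.sign_swap hxy)⟩
    · intro w hw
      refine wrHom_ker _ _ w (E.injective ?_)
      rw [map_one]; exact hw
  have hsub : Subsingleton F := Fintype.card_le_one_iff_subsingleton.1 (by omega)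
  have e2 : (if 2 ≤ l then 2 else 1) = 1 := if_neg (by omega)
  rw [e2]
  rcases Nat.eq_zero_or_pos l with h0 | h0
  · have e1 : (if l = 0 then 1 else i) = 1 := if_pos h0
    rw [e1]
    have : IsEmpty F := Fintype.card_eq_zero_iff.1 (by omega)
    refine ⟨1, fun b => ⟨1, ?_⟩, fun w _ => ?_⟩
    · have : Subsingleton (Multiplicative (ZMod 1)) := inferInstanceAs (Subsingleton (Fin 1))
      exact Subsingleton.elim _ _
    · have : w = 1 := SemidirectProduct.ext (Subsingleton.elim _ _) (Subsingleton.elim _ _)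
      rw [this]; exact one_mem _
  · have e1 : (if l = 0 then 1 else i) = i := if_neg (by omega)
    rw [e1]
    obtain ⟨x⟩ : Nonempty F := Fintype.card_pos_iff.1 (by omega)
    refine ⟨((MonoidHom.fst _ _).comp (wrHom F _)).prod 1, ?_, ?_⟩
    · rintro ⟨a, u⟩
      have : Subsingleton (Multiplicative (ZMod 1)) := inferInstanceAs (Subsingleton (Fin 1))
      exact ⟨⟨Pi.mulSingle x a, 1⟩, Prod.ext (by simp [wrHom]) (Subsingleton.elim _ _)⟩
    · intro w hw
      rw [MonoidHom.mem_ker, MonoidHom.prod_apply] at hw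
      refine wrHom_ker _ _ w (Prod.ext (Prod.ext_iff.1 hw).1 ?_)
      change Perm.sign w.right = 1
      rw [Subsingleton.elim w.right 1, map_one]

lemma abelianization_pi {ι : Type*} [Finite ι] (G A : ι → Type*) [∀ i, Group (G i)]
    [∀ i, CommGroup (A i)]
    (h : ∀ i, ∃ φ : G i →* A i, Function.Surjective φ ∧ φ.ker = commutator (G i)) :
    Nonempty (Abelianization (∀ i, G i) ≃* ∀ i, A i) := by
  choose φ hs hk using h
  let Φ : (∀ i, G i) →* ∀ i, A i := MonoidHom.pi fun i => (φ i).comp (Pi.evalMonoidHom G i)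
  have hS : Function.Surjective Φ := fun b => by
    choose g hg using fun i => hs i (b i)
    exact ⟨g, funext hg⟩
  have hK : commutator (∀ i, G i) = Φ.ker := by
    have h1 : commutator (∀ i, G i) = Subgroup.pi Set.univ fun i => commutator (G i) := by
      simp only [commutator_def]
      rw [← Subgroup.commutator_pi_pi_of_finite, Subgroup.pi_top]
    rw [h1]
    ext g
    simp only [Subgroup.mem_pi, ← hk, MonoidHom.mem_ker, Set.mem_univ, forall_true_left]
    exact ⟨fun h => funext h, fun h i => congrFun h i⟩
  exact ⟨(QuotientGroup.quotientMulEquivOfEq hK).trans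
    (QuotientGroup.quotientKerEquivOfSurjective Φ hS)⟩

lemma centralizer_struct {α Q : Type*} [Finite Q] (N : ℕ) (σ : Perm α) (r : Q → α) (p : Q → ℕ)
    (hu : ∀ q q', σ.SameCycle (r q) (r q') → q = q')
    (hs : ∀ x, ∃ q, σ.SameCycle (r q) x)
    (hp : ∀ q (a : ℤ), (σ ^ a) (r q) = r q ↔ (p q : ℤ) ∣ a)
    (hb : ∀ q, p q < N) :
    Nonempty ((∀ i : Fin N, Wr {q // p q = i} (Multiplicative (ZMod i))) ≃*
      Subgroup.centralizer ({σ} : Set (Perm α))) := by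
  let X : Fin N → Type _ := fun i => {q // p q = i} × Multiplicative (ZMod i)
  let E : (Σ i, X i) → α := fun x => (σ ^ (x.2.2.toAdd.cast : ℤ)) (r x.2.1)
  have hEa : ∀ (i : Fin N) (q : {q // p q = i}) (a : ℤ),
      E ⟨i, q, Multiplicative.ofAdd (a : ZMod i)⟩ = (σ ^ a) (r q) := by
    intro i q a
    have key : ∀ m : ℤ, (m : ZMod i) = a → (σ ^ m) (r q) = (σ ^ a) (r q) := by
      intro m hm
      rw [ZMod.intCast_eq_intCast_iff_dvd_sub] at hm
      have h2 := (hp q _).2 (q.2.symm ▸ hm)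
      nth_rw 1 [← h2]
      rw [← Perm.mul_apply, ← zpow_add, add_sub_cancel]
    exact key _ (ZMod.intCast_zmod_cast _)
  have hsur : ∀ (i : ℕ) (k : Multiplicative (ZMod i)), ∃ a : ℤ,
      k = Multiplicative.ofAdd (a : ZMod i) := fun i k => by
    obtain ⟨a, ha⟩ := ZMod.intCast_surjective k.toAdd
    exact ⟨a, by rw [ha]; rfl⟩
  have hmk : ∀ (i : ℕ) (a b : ℤ), Multiplicative.ofAdd (a : ZMod i) * Multiplicative.ofAdd (b : ZMod i)
      = Multiplicative.ofAdd ((a + b : ℤ) : ZMod i) := fun i a b => by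
    rw [← ofAdd_add]; push_cast; rfl
  have hinj : Function.Injective E := by
    rintro ⟨i, ⟨q, hq⟩, k⟩ ⟨i', ⟨q', hq'⟩, k'⟩ h
    obtain ⟨a, rfl⟩ := hsur _ k
    obtain ⟨b, rfl⟩ := hsur _ k'
    rw [hEa, hEa] at h
    simp only at h
    have : q = q' := by
      apply hu
      refine ⟨a - b, ?_⟩
      rw [sub_eq_neg_add, zpow_add, Perm.mul_apply, h, ← Perm.mul_apply, ← zpow_add]; simp
    subst this
    have : i = i' := Fin.ext (hq.symm.trans hq')
    subst this
    have h3 : (σ ^ (b - a)) (r q) = r q := by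
      rw [sub_eq_neg_add, zpow_add, Perm.mul_apply, ← h, ← Perm.mul_apply, ← zpow_add]; simp
    rw [hp, hq, ← ZMod.intCast_eq_intCast_iff_dvd_sub] at h3
    rw [h3]
  have hsurj : Function.Surjective E := by
    intro x
    obtain ⟨q, a, ha⟩ := hs x
    exact ⟨⟨⟨p q, hb q⟩, ⟨q, rfl⟩, Multiplicative.ofAdd (a : ZMod (p q))⟩, by
      rw [← ha]; exact hEa ⟨p q, hb q⟩ ⟨q, rfl⟩ a⟩
  let e : (Σ i, X i) ≃ α := Equiv.ofBijective E ⟨hinj, hsurj⟩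
  let Ψ : (∀ i : Fin N, Wr {q // p q = i} (Multiplicative (ZMod i))) →* Perm α :=
    (e.permCongrHom.toMonoidHom.comp (Perm.sigmaCongrRightHom X)).comp
      (MonoidHom.pi fun i => (wrPerm _ _).comp (Pi.evalMonoidHom _ i))
  have hΨ : ∀ w i q k, Ψ w (E ⟨i, q, k⟩) =
      E ⟨i, (w i).right q, (w i).left ((w i).right q) * k⟩ := by
    intro w i q k
    have : e.symm (E ⟨i, q, k⟩) = ⟨i, q, k⟩ := e.symm_apply_apply _
    change E (Perm.sigmaCongrRightHom X (fun i => wrPerm _ _ (w i)) (e.symm (E ⟨i, q, k⟩))) = _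
    rw [this]; rfl
  have hΨinj : Function.Injective Ψ := by
    refine (e.permCongrHom.injective.comp Perm.sigmaCongrRightHom_injective).comp ?_
    intro w v h
    funext i
    exact wrPerm_injective _ _ (congrFun h i)
  have hσE : ∀ i q (a : ℤ) (k : Multiplicative (ZMod (i : Fin N))),
      (σ ^ a) (E ⟨i, q, k⟩) = E ⟨i, q, k * Multiplicative.ofAdd (a : ZMod i)⟩ := by
    intro i q a k
    obtain ⟨b, rfl⟩ := hsur _ k
    rw [hmk, hEa, hEa, ← Perm.mul_apply, ← zpow_add, add_comm]
  have hrange : Ψ.range = Subgroup.centralizer ({σ} : Set (Perm α)) := by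
    ext z
    rw [Subgroup.mem_centralizer_singleton_iff, MonoidHom.mem_range]
    constructor
    · rintro ⟨w, rfl⟩
      ext x
      obtain ⟨⟨i, q, k⟩, rfl⟩ := hsurj x
      have h1 := fun q k => hσE i q 1 k
      simp only [zpow_one] at h1
      simp only [Perm.mul_apply, h1, hΨ, mul_assoc]
    · intro hz
      have hc : ∀ (a : ℤ) x, z ((σ ^ a) x) = (σ ^ a) (z x) := fun a x => by
        have : Commute z (σ ^ a) := Commute.zpow_right hz a
        exact DFunLike.congr_fun this.eq x
      have hex : ∀ (i : Fin N) (q : {q // p q = i}), ∃ (q' : {q // p q = i}) (c : ℤ),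
          z (r q) = (σ ^ c) (r q') := by
        rintro i ⟨q, hq⟩
        obtain ⟨q', c, hc'⟩ := hs (z (r q))
        refine ⟨⟨q', ?_⟩, c, hc'.symm⟩
        have hiff : ∀ a : ℤ, (p q' : ℤ) ∣ a ↔ (p q : ℤ) ∣ a := by
          intro a
          rw [← hp, ← hp, ← (σ ^ c).injective.eq_iff, ← Perm.mul_apply, ← zpow_add, add_comm,
            zpow_add, Perm.mul_apply, hc', ← hc, z.injective.eq_iff]
        rw [← hq]
        exact Nat.dvd_antisymm (Int.natCast_dvd_natCast.1 ((hiff _).2 dvd_rfl))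
          (Int.natCast_dvd_natCast.1 ((hiff _).1 dvd_rfl))
      choose t c htc using hex
      have htinj : ∀ i, Function.Injective (t i) := by
        intro i q q' h
        have h1 := htc i q
        have h2 := htc i q'
        rw [← h] at h2
        apply Subtype.ext
        apply hu
        refine ⟨c i q' - c i q, z.injective ?_⟩
        rw [hc, h1, h2, ← Perm.mul_apply, ← zpow_add]; simp
      let τ : ∀ i : Fin N, Perm {q // p q = i} := fun i =>
        Equiv.ofBijective (t i) (Finite.injective_iff_bijective.1 (htinj i))
      refine ⟨fun i => ⟨fun q => Multiplicative.ofAdd (c i ((τ i).symm q) : ZMod i), τ i⟩, ?_⟩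
      ext x
      obtain ⟨⟨i, q, k⟩, rfl⟩ := hsurj x
      rw [hΨ]
      obtain ⟨a, rfl⟩ := hsur _ k
      simp only [Equiv.symm_apply_apply]
      rw [hmk, hEa, hEa, hc, htc, ← Perm.mul_apply, ← zpow_add, add_comm]
      rfl
  exact ⟨(MonoidHom.ofInjective hΨinj).trans (MulEquiv.subgroupCongr hrange)⟩

end Aux


/-- Let `σ ∈ S_n` have cycle type `1^{λ_1} 2^{λ_2} ⋯ n^{λ_n}` (where `λ_1` counts the
fixed points and, for `i ≥ 2`, `λ_i` counts the cycles of length `i` in the disjoint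
cycle decomposition of `σ`), and let `Z_σ` be its centralizer in `S_n`.  Then the
abelianization `Z_σ/Z_σ'` is isomorphic to
`(∏_{i : λ_i = 1} C_i) × (∏_{i : λ_i ≥ 2} (C_i × C_2))`.  Below, the `i`-th factor of
the direct product over `i = 0, 1, …, n` is `C_i × C_1 ≅ C_i` when `λ_i = 1`,
`C_i × C_2` when `λ_i ≥ 2`, and `C_1 × C_1 ≅ 1` when `λ_i = 0`; the cyclic group `C_k`
is realized as `Multiplicative (ZMod k)`. -/
theorem abelianization_centralizer_perm (n : ℕ) (σ : Equiv.Perm (Fin n))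
    (lam : ℕ → ℕ)
    (h0 : lam 0 = 0)
    (h1 : lam 1 = (Finset.univ.filter fun x : Fin n => σ x = x).card)
    (h2 : ∀ i, 2 ≤ i → lam i = Multiset.count i σ.cycleType) :
    Nonempty
      (Abelianization (Subgroup.centralizer ({σ} : Set (Equiv.Perm (Fin n)))) ≃*
        (∀ i : Fin (n + 1),
          Multiplicative (ZMod (if lam (i : ℕ) = 0 then 1 else (i : ℕ))) ×
          Multiplicative (ZMod (if 2 ≤ lam (i : ℕ) then 2 else 1)))) := by
  obtain ⟨b⟩ := Equiv.Perm.Basis.nonempty σ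
  let Q := σ.cycleFactorsFinset ⊕ {x : Fin n // σ x = x}
  let r : Q → Fin n := Sum.elim b Subtype.val
  let p : Q → ℕ := Sum.elim (fun c => c.val.support.card) (fun _ => 1)
  have hfix : ∀ x y, σ x = x → σ.SameCycle x y → x = y := by
    rintro x y hx ⟨a, ha⟩
    rw [← ha, Equiv.Perm.zpow_apply_eq_self_of_apply_eq_self hx]
  have hbs : ∀ c, σ (b c) ≠ b c := fun c => by
    rw [← Equiv.Perm.mem_support]
    exact Equiv.Perm.mem_cycleFactorsFinset_support_le c.2 (b.mem_support_self c)
  have hu : ∀ q q', σ.SameCycle (r q) (r q') → q = q' := by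
    rintro (c | x) (c' | x') h
    · have := h.cycleOf_eq
      change σ.cycleOf (b c) = σ.cycleOf (b c') at this
      rw [b.cycleOf_eq, b.cycleOf_eq] at this
      rw [Subtype.ext this]
    · have : x'.1 = b c := hfix _ _ x'.2 h.symm
      exact absurd (this ▸ x'.2) (hbs c)
    · have : x.1 = b c' := hfix _ _ x.2 h
      exact absurd (this ▸ x.2) (hbs c')
    · rw [Subtype.ext (hfix _ _ x.2 h)]
  have hs : ∀ x, ∃ q, σ.SameCycle (r q) x := by
    intro x
    by_cases hx : σ x = x
    · exact ⟨Sum.inr ⟨x, hx⟩, Equiv.Perm.SameCycle.refl _ _⟩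
    · have : σ.cycleOf x ∈ σ.cycleFactorsFinset := by
        rwa [Equiv.Perm.cycleOf_mem_cycleFactorsFinset_iff, Equiv.Perm.mem_support]
      exact ⟨Sum.inl ⟨_, this⟩, b.sameCycle this⟩
  have hp : ∀ q (a : ℤ), (σ ^ a) (r q) = r q ↔ (p q : ℤ) ∣ a := by
    rintro (c | x) a
    · exact (Equiv.Perm.isCycleOn_support_of_mem_cycleFactorsFinset c.2).zpow_apply_eq
        (b.mem_support_self c)
    · simpa [p, r] using Equiv.Perm.zpow_apply_eq_self_of_apply_eq_self x.2 a
  have hb : ∀ q, p q < n + 1 := by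
    rintro (c | x)
    · exact Nat.lt_succ_of_le ((Finset.card_le_univ _).trans (by simp))
    · have := x.1.pos
      change 1 < n + 1
      omega
  obtain ⟨M⟩ := centralizer_struct (n + 1) σ r p hu hs hp hb
  have h2le : ∀ c : σ.cycleFactorsFinset, 2 ≤ c.val.support.card := fun c =>
    (Equiv.Perm.mem_cycleFactorsFinset_iff.1 c.2).1.two_le_card_support
  have hcard : ∀ i : ℕ, Fintype.card {q // p q = i} = lam i := by
    intro i
    rcases Nat.lt_or_ge i 2 with hi | hi
    · interval_cases i
      · rw [h0, Fintype.card_eq_zero_iff]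
        refine ⟨?_⟩
        rintro ⟨c | x, h⟩
        · have := h2le c
          change c.val.support.card = 0 at h
          omega
        · exact one_ne_zero h
      · rw [h1, ← Fintype.card_subtype]
        symm
        refine Fintype.card_of_bijective (f := fun x => ⟨Sum.inr x, rfl⟩) ⟨?_, ?_⟩
        · intro x y h
          exact Sum.inr_injective (congrArg Subtype.val h)
        · rintro ⟨c | x, h⟩
          · have := h2le c
            change c.val.support.card = 1 at h
            omega
          · exact ⟨x, rfl⟩
    · rw [h2 i hi, Equiv.Perm.CycleType.count_def]
      symm
      refine Fintype.card_of_bijective (f := fun x => ⟨Sum.inl x.1, x.2⟩) ⟨?_, ?_⟩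
      · intro x y h
        exact Subtype.ext (Sum.inl_injective (congrArg Subtype.val h))
      · rintro ⟨c | x, h⟩
        · exact ⟨⟨c, h⟩, rfl⟩
        · change 1 = i at h
          omega
  obtain ⟨K⟩ := abelianization_pi _ _ fun i : Fin (n + 1) =>
    wr_target {q // p q = i} i (lam i) (hcard i)
  exact ⟨M.symm.abelianizationCongr.trans K⟩
end

section
/- Let σ ∈ S_n have cycle type 1^{λ_1} 2^{λ_2} ⋯ n^{λ_n}, let Z_σ be its centralizer in S_n, and let F be a field containing a primitive root of unity of order |Z_σ|. Then the number of group homomorphisms Z_σ → Fˣ equals γ_C := (∏_{i : λ_i = 1} i) · (∏_{i : λ_i ≥ 2} 2i). -/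
namespace CardChar
open Equiv

/-- The wreath product of `C` with the symmetric group on `L`. -/
abbrev W (L C : Type*) [CommGroup C] :=
  SemidirectProduct (L → C) (Perm L) (mulAutArrow (G := Perm L) (A := L) (M := C))

theorem arrow_apply {L C : Type*} [CommGroup C] (g : Perm L) (n : L → C) (l : L) :
    (mulAutArrow (G := Perm L) (A := L) (M := C)) g n l = n (g⁻¹ l) := rfl

/-- action of the wreath product -/
def act (L C : Type*) [CommGroup C] : W L C →* Perm (L × C) :=
  MonoidHom.mk' (fun w =>
    { toFun := fun p => (w.right p.1, p.2 * w.left (w.right p.1))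
      invFun := fun p => (w.right⁻¹ p.1, p.2 * (w.left p.1)⁻¹)
      left_inv := fun p => by simp
      right_inv := fun p => by simp }) (by
    intro a b
    ext p
    · simp
    · change p.2 * (a.left (a.right (b.right p.1)) *
        b.left (a.right⁻¹ (a.right (b.right p.1)))) =
        p.2 * b.left (b.right p.1) * a.left (a.right (b.right p.1))
      rw [← Perm.mul_apply a.right⁻¹, inv_mul_cancel, Perm.one_apply, mul_comm (a.left _), mul_assoc])

theorem act_apply {L C : Type*} [CommGroup C] (w : W L C) (p : L × C) :
    act L C w p = (w.right p.1, p.2 * w.left (w.right p.1)) := rfl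

/-- The shift. -/
def shift (L C : Type*) [CommGroup C] (c : C) : Perm (L × C) :=
  Equiv.prodCongr (Equiv.refl L) (Equiv.mulRight c)

theorem shift_apply {L C : Type*} [CommGroup C] (c : C) (p : L × C) :
    shift L C c p = (p.1, p.2 * c) := rfl

theorem shift_zpow_apply {L C : Type*} [CommGroup C] (c : C) (k : ℤ) (p : L × C) :
    (shift L C c ^ k) p = (p.1, p.2 * c ^ k) := by
  have h : ∀ (k : ℕ) (p : L × C), (shift L C c ^ k) p = (p.1, p.2 * c ^ k) := by
    intro k
    induction k with
    | zero => intro p; simp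
    | succ k ih => intro p; rw [pow_succ, Perm.mul_apply, ih, shift_apply, pow_succ']; simp [mul_assoc]
  obtain ⟨m, rfl | rfl⟩ := k.eq_nat_or_neg
  · simpa using h m p
  · rw [zpow_neg, Perm.inv_eq_iff_eq, zpow_natCast, h]; simp

theorem exists_wreath_equiv (L C : Type*) [CommGroup C] (c : C)
    (hc : ∀ x, x ∈ Subgroup.zpowers c) :
    Nonempty (W L C ≃* Subgroup.centralizer ({shift L C c} : Set (Perm (L × C)))) := by
  have hmem : ∀ w, act L C w ∈ Subgroup.centralizer ({shift L C c} : Set (Perm (L × C))) := by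
    intro w
    rw [Subgroup.mem_centralizer_singleton_iff]
    ext p
    · simp [act_apply, shift_apply]
    · simp [act_apply, shift_apply, mul_right_comm]
  refine ⟨MulEquiv.ofBijective ((act L C).codRestrict _ hmem) ⟨?_, ?_⟩⟩
  · rw [MonoidHom.injective_codRestrict, injective_iff_map_eq_one]
    intro w hw
    have h1 : ∀ l, w.right l = l := fun l => by
      have := congrArg (fun f => (f (l, (1 : C))).1) hw
      simpa [act_apply] using this
    have h2 : ∀ l, w.left l = 1 := fun l => by
      have := congrArg (fun f => (f (l, (1 : C))).2) hw
      simpa [act_apply, h1] using this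
    ext l
    · simp [h2]
    · simp [h1]
  · rintro ⟨t, ht⟩
    have key : ∀ s ∈ Subgroup.centralizer ({shift L C c} : Set (Perm (L × C))), ∀ l x,
        s (l, x) = ((s (l, 1)).1, x * (s (l, 1)).2) := by
      intro s hs l x
      obtain ⟨k, rfl⟩ := hc x
      rw [Subgroup.mem_centralizer_singleton_iff] at hs
      have h := (Commute.zpow_right (show Commute s (shift L C c) from hs) k).eq
      have := congrArg (fun f => f (l, (1 : C))) h
      simp only [Perm.mul_apply, shift_zpow_apply, one_mul] at this
      simp only [this, mul_comm]
    have ht' := Subgroup.inv_mem _ ht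
    let π : Perm L :=
      { toFun := fun l => (t (l, 1)).1
        invFun := fun l => (t⁻¹ (l, 1)).1
        left_inv := fun l => by
          have : t⁻¹ (t (l, 1)) = (l, 1) := by simp
          rw [show t (l, 1) = ((t (l, 1)).1, (t (l, 1)).2) from rfl, key _ ht'] at this
          exact congrArg Prod.fst this
        right_inv := fun l => by
          have : t (t⁻¹ (l, 1)) = (l, 1) := by simp
          rw [show t⁻¹ (l, 1) = ((t⁻¹ (l, 1)).1, (t⁻¹ (l, 1)).2) from rfl, key _ ht] at this
          exact congrArg Prod.fst this }
    refine ⟨⟨fun l => (t (π⁻¹ l, 1)).2, π⟩, ?_⟩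
    apply Subtype.ext
    apply Equiv.ext
    rintro ⟨l, x⟩
    rw [key t ht]
    change act L C _ _ = _
    rw [act_apply]
    simp only [← Perm.mul_apply, inv_mul_cancel, Perm.one_apply]
    rfl

/-- Conjugating centralizers. -/
def centralizerCongr {G H : Type*} [Group G] [Group H] (f : G ≃* H) (g : G) (h : H)
    (e : f g = h) :
    Subgroup.centralizer ({g} : Set G) ≃* Subgroup.centralizer ({h} : Set H) where
  toFun x := ⟨f x, by
    have := x.2
    rw [Subgroup.mem_centralizer_singleton_iff] at this ⊢
    rw [← e, ← map_mul, ← map_mul, this]⟩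
  invFun x := ⟨f.symm x, by
    have := x.2
    rw [Subgroup.mem_centralizer_singleton_iff] at this ⊢
    apply f.injective
    rw [map_mul, map_mul, f.apply_symm_apply, e, this]⟩
  left_inv x := by simp
  right_inv x := by simp
  map_mul' x y := by ext; simp

/-- Characters of the wreath product. -/
theorem card_hom_wreath (L C A : Type*) [CommGroup C] [CommGroup A] [Finite L] [Nonempty L] :
    Nat.card (W L C →* A) = Nat.card (C →* A) * Nat.card (Perm L →* A) := by
  classical
  have := Fintype.ofFinite L
  obtain ⟨l0⟩ := ‹Nonempty L›
  rw [← Nat.card_prod]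
  symm
  let S : (C →* A) → ((L → C) →* A) := fun f =>
    { toFun := fun n => ∏ l, f (n l)
      map_one' := by simp
      map_mul' := by intro a b; simp [Finset.prod_mul_distrib] }
  have hS : ∀ f n, S f n = ∏ l, f (n l) := fun _ _ => rfl
  refine Nat.card_congr (Equiv.ofBijective (fun p : (C →* A) × (Perm L →* A) =>
    (SemidirectProduct.lift (S p.1) p.2 (by
      intro g
      refine MonoidHom.ext fun n => ?_
      simp only [MonoidHom.comp_apply, MulEquiv.coe_toMonoidHom, MulAut.conj_apply, hS,
        arrow_apply]
      rw [mul_inv_cancel_comm]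
      exact Equiv.prod_comp (g⁻¹) (fun l => p.1 (n l))) : W L C →* A)) ⟨?_, ?_⟩)
  · rintro ⟨f, g⟩ ⟨f', g'⟩ h
    have h1 := congrArg (fun F => F.comp SemidirectProduct.inl) h
    have h2 := congrArg (fun F => F.comp SemidirectProduct.inr) h
    simp only [SemidirectProduct.lift_comp_inl, SemidirectProduct.lift_comp_inr] at h1 h2
    refine Prod.ext ?_ h2
    ext c
    have := DFunLike.congr_fun h1 (Pi.mulSingle l0 c)
    simp only [hS] at this
    rw [Finset.prod_eq_single l0, Finset.prod_eq_single l0] at this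
    · simpa using this
    all_goals simp +contextual [Pi.mulSingle_eq_of_ne]
  · intro F
    refine ⟨((F.comp SemidirectProduct.inl).comp (MonoidHom.mulSingle (fun _ : L => C) l0),
      F.comp SemidirectProduct.inr), ?_⟩
    apply SemidirectProduct.hom_ext
    · simp only [SemidirectProduct.lift_comp_inl]
      apply MonoidHom.pi_ext
      intro l c
      rw [hS, Finset.prod_eq_single l]
      · simp only [Pi.mulSingle_eq_same, MonoidHom.comp_apply, MonoidHom.mulSingle_apply]
        have : (Pi.mulSingle l c : L → C) =
            (mulAutArrow (G := Perm L) (A := L) (M := C)) (swap l0 l) (Pi.mulSingle l0 c) := by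
          funext m
          rw [arrow_apply, swap_inv]
          by_cases hm : m = l
          · subst hm; simp
          · rw [Pi.mulSingle_eq_of_ne hm, Pi.mulSingle_eq_of_ne]
            intro h
            apply hm
            have h3 := congrArg (swap l0 l) h
            rwa [swap_apply_self, swap_apply_left] at h3
        rw [this, SemidirectProduct.inl_aut, map_mul, map_mul, mul_right_comm, ← map_mul F,
          ← map_mul SemidirectProduct.inr, mul_inv_cancel, map_one, map_one, one_mul]
      · intro b _ hb; simp [Pi.mulSingle_eq_of_ne hb]
      · simp
    · simp only [SemidirectProduct.lift_comp_inr]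

theorem card_hom_perm (L F : Type*) [Field F] [Finite L] [Nontrivial L] (hF : (-1 : F) ≠ 1) :
    Nat.card (Perm L →* Fˣ) = 2 := by
  classical
  have := Fintype.ofFinite L
  obtain ⟨a, b, hab⟩ := exists_pair_ne L
  have hinj : ∀ f g : Perm L →* Fˣ, f (swap a b) = g (swap a b) → f = g := by
    intro f g h
    refine MonoidHom.eq_of_eqOn_dense Perm.closure_isSwap ?_
    rintro _ ⟨x, y, hxy, rfl⟩
    have hc := Perm.isConj_swap hab hxy
    rw [← isConj_iff_eq.1 (f.map_isConj hc), ← isConj_iff_eq.1 (g.map_isConj hc), h]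
  have hne : (-1 : Fˣ) ≠ 1 := fun h => hF (by simpa using congrArg Units.val h)
  let sg : Perm L →* Fˣ := (Units.map (Int.castRingHom F).toMonoidHom).comp Perm.sign
  have hsg : sg (swap a b) = -1 := by
    simp [sg, Perm.sign_swap hab]
  have hall : ∀ f : Perm L →* Fˣ, f = 1 ∨ f = sg := by
    intro f
    have h : f (swap a b) * f (swap a b) = 1 := by rw [← map_mul, swap_mul_self, map_one]
    have h' : ((f (swap a b) : Fˣ) : F) * (f (swap a b) : Fˣ) = 1 := by
      rw [← Units.val_mul, h, Units.val_one]
    rcases mul_self_eq_one_iff.1 h' with h | h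
    · left; exact hinj _ _ (by ext; simpa using h)
    · right; exact hinj _ _ (by rw [hsg]; ext; simpa using h)
  rw [Nat.card_eq_two_iff]
  refine ⟨1, sg, ?_, ?_⟩
  · intro h
    apply hne
    rw [← hsg, ← h]; rfl
  · ext f; simpa using hall f


theorem exists_model (X : Type) [Finite X] (s : Perm X) (i : ℕ) (hi : 0 < i)
    (hs : ∀ x, Function.minimalPeriod s x = i) :
    ∃ (L : Type) (_ : Finite L) (e : X ≃ L × Multiplicative (ZMod i)),
      e.permCongrHom s = shift L _ (Multiplicative.ofAdd 1) := by
  have : NeZero i := ⟨hi.ne'⟩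
  let L := Quotient (Perm.SameCycle.setoid s)
  have hper : ∀ (x : X) (j : ℕ), (s ^ ((j : ZMod i).val)) x = (s ^ j) x := by
    intro x j
    rw [ZMod.val_natCast, ← Perm.iterate_eq_pow, ← Perm.iterate_eq_pow]
    conv_lhs => rw [← hs x]
    exact Function.iterate_mod_minimalPeriod_eq
  let f : L × Multiplicative (ZMod i) → X := fun p => (s ^ (p.2.toAdd.val)) p.1.out
  have hf : ∀ l k, (Quotient.mk (Perm.SameCycle.setoid s) (f (l, k)) : L) = l := by
    intro l k
    conv_rhs => rw [← l.out_eq]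
    apply Quotient.sound
    exact (Perm.sameCycle_pow_left).2 (Perm.SameCycle.refl _ _)
  have hbij : Function.Bijective f := by
    constructor
    · rintro ⟨l, k⟩ ⟨l', k'⟩ h
      have hl : l = l' := by rw [← hf l k, h, hf]
      subst hl
      simp only [f] at h
      have : k.toAdd.val = k'.toAdd.val := by
        rw [← Perm.iterate_eq_pow, ← Perm.iterate_eq_pow] at h
        refine (Function.iterate_eq_iterate_iff_of_lt_minimalPeriod ?_ ?_).1 h
        · rw [hs]; exact ZMod.val_lt _
        · rw [hs]; exact ZMod.val_lt _
      have := ZMod.val_injective i this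
      exact Prod.ext rfl (Multiplicative.toAdd.injective this)
    · intro x
      have h : Perm.SameCycle s (Quotient.mk (Perm.SameCycle.setoid s) x).out x :=
        Quotient.mk_out (s := Perm.SameCycle.setoid s) x
      obtain ⟨j, -, hj⟩ := h.exists_pow_eq'
      refine ⟨(Quotient.mk _ x, Multiplicative.ofAdd (j : ZMod i)), ?_⟩
      simp only [f, toAdd_ofAdd]
      rw [hper, hj]
  refine ⟨L, inferInstance, (Equiv.ofBijective f hbij).symm, ?_⟩
  apply Equiv.ext
  rintro ⟨l, k⟩
  change (Equiv.ofBijective f hbij).symm (s (f (l, k))) = _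
  rw [Equiv.symm_apply_eq, shift_apply]
  change _ = (s ^ ((k * Multiplicative.ofAdd 1).toAdd.val)) l.out
  have : (k * Multiplicative.ofAdd 1).toAdd = ((k.toAdd.val + 1 : ℕ) : ZMod i) := by simp
  rw [this, hper, pow_succ', Perm.mul_apply]

theorem exists_split {X ι : Type*} (s : Perm X) (p : X → ι)
    (hp : ∀ t ∈ Subgroup.centralizer ({s} : Set (Perm X)), ∀ x, p (t x) = p x)
    (hs : ∀ i x, p (s x) = i ↔ p x = i) :
    Nonempty (Subgroup.centralizer ({s} : Set (Perm X)) ≃*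
      ∀ i, Subgroup.centralizer ({s.subtypePerm (p := fun x => p x = i) (hs i)} :
        Set (Perm {x // p x = i}))) := by
  let f : Subgroup.centralizer ({s} : Set (Perm X)) →*
      ∀ i, Subgroup.centralizer ({s.subtypePerm (p := fun x => p x = i) (hs i)} :
        Set (Perm {x // p x = i})) :=
    { toFun := fun t i => ⟨t.1.subtypePerm (p := fun x => p x = i)
          (fun x => by rw [hp t.1 t.2]), by
        have := t.2
        rw [Subgroup.mem_centralizer_singleton_iff] at this ⊢
        ext x
        exact congrArg (fun f => f x.1) this⟩
      map_one' := by ext; rfl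
      map_mul' := by intros; ext; rfl }
  have hf : ∀ t i x, (((f t i).1 x : {x // p x = i}) : X) = t.1 x := fun _ _ _ => rfl
  refine ⟨MulEquiv.ofBijective f ⟨?_, ?_⟩⟩
  · intro t t' h
    apply Subtype.ext
    apply Equiv.ext
    intro x
    have := hf t (p x) ⟨x, rfl⟩
    rw [h, hf] at this
    exact this.symm
  · intro u
    let t : Perm X := (Equiv.sigmaFiberEquiv p).permCongr
      (Equiv.sigmaCongrRight fun i => (u i).1)
    have ht : ∀ i (x : {x // p x = i}), t x = ((u i).1 x : {x // p x = i}) := by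
      rintro i ⟨x, rfl⟩
      rfl
    refine ⟨⟨t, ?_⟩, ?_⟩
    · rw [Subgroup.mem_centralizer_singleton_iff]
      apply Equiv.ext
      intro x
      have h := (u (p x)).2
      rw [Subgroup.mem_centralizer_singleton_iff] at h
      have h' := congrArg (fun f => (f ⟨x, rfl⟩ : X)) h
      have h1 := ht (p x) (s.subtypePerm (p := fun y => p y = p x) (hs (p x)) ⟨x, rfl⟩)
      have h2 := ht (p x) ⟨x, rfl⟩
      simp only [Perm.mul_apply] at h' ⊢
      rw [← h1] at h'
      rw [h2]
      exact h'
    · funext i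
      apply Subtype.ext
      apply Equiv.ext
      intro x
      apply Subtype.ext
      rw [hf]
      exact ht i x

theorem minimalPeriod_comm {X : Type*} (s t : Perm X)
    (ht : t ∈ Subgroup.centralizer ({s} : Set (Perm X))) (x : X) :
    Function.minimalPeriod s (t x) = Function.minimalPeriod s x := by
  rw [Subgroup.mem_centralizer_singleton_iff] at ht
  rw [Function.minimalPeriod_eq_minimalPeriod_iff]
  intro n
  have h := (Commute.pow_right (show Commute t s from ht) n).eq
  have h' : t ((s ^ n) x) = (s ^ n) (t x) := congrArg (fun f => f x) h
  simp only [Function.IsPeriodicPt, Function.IsFixedPt, Perm.iterate_eq_pow]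
  rw [← h', t.injective.eq_iff]

theorem minimalPeriod_eq_card {n : ℕ} (s : Perm (Fin n)) (x : Fin n) (hx : s x ≠ x) :
    Function.minimalPeriod s x = (s.cycleOf x).support.card := by
  have h := s.isCycleOn_support_cycleOf x
  have hx' : x ∈ (s.cycleOf x).support := by
    rw [Perm.mem_support_cycleOf_iff' hx]
  have key : ∀ m, Function.IsPeriodicPt s m x ↔ (s.cycleOf x).support.card ∣ m := by
    intro m
    rw [← h.pow_apply_eq hx', Function.IsPeriodicPt, Function.IsFixedPt, Perm.iterate_eq_pow]
  apply Nat.dvd_antisymm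
  · exact ((key _).2 dvd_rfl).minimalPeriod_dvd
  · exact (key _).1 (Function.isPeriodicPt_minimalPeriod _ _)

theorem card_period {n : ℕ} (s : Perm (Fin n)) (i : ℕ) (hi : 2 ≤ i) :
    Nat.card {x // Function.minimalPeriod s x = i} = Multiset.count i s.cycleType * i := by
  classical
  rw [Nat.card_eq_fintype_card, Fintype.card_subtype]
  rw [Perm.cycleType_def, Multiset.count_map]
  change _ = (s.cycleFactorsFinset.filter (fun a => i = (Finset.card ∘ Perm.support) a)).card * i
  have hx : ∀ x, Function.minimalPeriod s x = i → s x ≠ x := by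
    intro x h h'
    rw [Function.minimalPeriod_eq_one_iff_isFixedPt.2 h'] at h
    omega
  rw [Finset.card_eq_sum_card_fiberwise (f := fun x => s.cycleOf x)
    (t := s.cycleFactorsFinset.filter (fun a => i = (Finset.card ∘ Perm.support) a))]
  · apply Finset.sum_const_nat
    intro c hc
    rw [Finset.mem_filter] at hc
    rw [hc.2]
    refine congrArg Finset.card ?_
    ext x
    rw [Finset.mem_filter, Finset.mem_filter]
    constructor
    · rintro ⟨⟨-, h⟩, rfl⟩
      rw [← hc.2] at h
      exact (Perm.mem_support_cycleOf_iff' (hx x h)).2 (Perm.SameCycle.refl _ _)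
    · intro h
      have hc' := Perm.cycle_is_cycleOf h hc.1
      have : s x ≠ x := by
        have := Perm.mem_cycleFactorsFinset_support_le hc.1 h
        simpa using this
      refine ⟨⟨Finset.mem_univ _, ?_⟩, hc'.symm⟩
      rw [minimalPeriod_eq_card s x this, ← hc']
      rfl
  · intro x h
    have h' : Function.minimalPeriod s x = i := by simpa using h
    have := hx x h'
    simp only [Finset.coe_filter, Set.mem_ofPred_eq]
    refine ⟨?_, ?_⟩
    · rw [Perm.cycleOf_mem_cycleFactorsFinset_iff]; simpa using this
    · rw [← h', minimalPeriod_eq_card s x this]; rfl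

theorem card_hom_cyclic (F : Type*) [Field F] (N i : ℕ) (hN : 0 < N) (ζ : F)
    (hζ : IsPrimitiveRoot ζ N) (h : i ∣ N) :
    Nat.card (Multiplicative (ZMod i) →* Fˣ) = i := by
  have : NeZero N := ⟨hN.ne'⟩
  have hi : NeZero i := ⟨fun h0 => hN.ne' (by simpa [h0] using h)⟩
  have e : HasEnoughRootsOfUnity F N := ⟨⟨ζ, hζ⟩, inferInstance⟩
  have e' := HasEnoughRootsOfUnity.of_dvd F h
  have : HasEnoughRootsOfUnity F (Monoid.exponent (Multiplicative (ZMod i))) := by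
    rw [IsCyclic.exponent_eq_card]
    simpa using e'
  rw [CommGroup.card_monoidHom_of_hasEnoughRootsOfUnity]
  simp

theorem neg_one_ne (F : Type*) [Field F] (N : ℕ) (hN : 0 < N) (ζ : F)
    (hζ : IsPrimitiveRoot ζ N) (h : 2 ∣ N) : (-1 : F) ≠ 1 := by
  obtain ⟨m, rfl⟩ := h
  intro h1
  have h2 : ζ ^ m * ζ ^ m = 1 := by rw [← pow_add, ← two_mul]; exact hζ.pow_eq_one
  have h3 : ζ ^ m = 1 := by
    rcases mul_self_eq_one_iff.1 h2 with h | h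
    · exact h
    · rw [h, h1]
  have := Nat.le_of_dvd (by omega) (hζ.dvd_of_pow_eq_one m h3)
  omega

theorem card_hom_pi {ι : Type*} [Fintype ι] (G : ι → Type*) [∀ i, Group (G i)]
    (A : Type*) [CommGroup A] :
    Nat.card ((∀ i, G i) →* A) = ∏ i, Nat.card (G i →* A) := by
  classical
  rw [← Nat.card_pi, ← Nat.card_congr (MonoidHom.noncommPiCoprodEquiv (N := G) (M := A))]
  exact Nat.card_congr (Equiv.subtypeUnivEquiv fun f i j _ x y => Commute.all _ _)

/-- The characters of the centralizer of a permutation all of whose cycles have length `i`. -/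
theorem card_hom_block (X : Type) [Finite X] (s : Perm X) (i m : ℕ) (hi : 0 < i)
    (hs : ∀ x, Function.minimalPeriod s x = i) (hm : Nat.card X = m * i)
    (F : Type*) [Field F] (N : ℕ) (hN : 0 < N) (ζ : F) (hζ : IsPrimitiveRoot ζ N)
    (hd : Nat.card (Subgroup.centralizer ({s} : Set (Perm X))) ∣ N) :
    Nat.card (Subgroup.centralizer ({s} : Set (Perm X)) →* Fˣ) =
      (if m = 1 then i else 1) * (if 2 ≤ m then 2 * i else 1) := by
  have : NeZero i := ⟨hi.ne'⟩
  obtain ⟨L, hL, e, he⟩ := exists_model X s i hi hs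
  have hLm : Nat.card L = m := by
    have h := Nat.card_congr e
    rw [hm, Nat.card_prod] at h
    have h' : Nat.card (Multiplicative (ZMod i)) = i := by simp
    rw [h'] at h
    exact (Nat.eq_of_mul_eq_mul_right hi h).symm
  have hc : ∀ x, x ∈ Subgroup.zpowers (Multiplicative.ofAdd (1 : ZMod i)) := by
    intro x
    refine ⟨(x.toAdd.val : ℤ), ?_⟩
    apply Multiplicative.toAdd.injective
    simp
  obtain ⟨w⟩ := exists_wreath_equiv L (Multiplicative (ZMod i)) (Multiplicative.ofAdd 1) hc
  let E : W L (Multiplicative (ZMod i)) ≃* Subgroup.centralizer ({s} : Set (Perm X)) :=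
    w.trans (centralizerCongr e.permCongrHom s _ he).symm
  rw [← Nat.card_congr (E.monoidHomCongrLeftEquiv (N := Fˣ))]
  rw [← Nat.card_congr E.toEquiv, SemidirectProduct.card, Nat.card_fun, Nat.card_perm, hLm] at hd
  have h' : Nat.card (Multiplicative (ZMod i)) = i := by simp
  rw [h'] at hd
  rcases Nat.eq_zero_or_pos m with h0 | h0
  · subst h0
    have : IsEmpty L := (Nat.card_eq_zero.1 hLm).resolve_right (fun h => h.not_finite hL)
    have : Subsingleton (W L (Multiplicative (ZMod i))) :=
      SemidirectProduct.equivProd.subsingleton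
    have : Subsingleton (W L (Multiplicative (ZMod i)) →* Fˣ) :=
      ⟨fun f g => MonoidHom.ext fun x => by rw [Subsingleton.elim x 1, map_one, map_one]⟩
    simp
  · have : Nonempty L := (Nat.card_pos_iff.1 (hLm ▸ h0)).1
    have hid : i ∣ N := ((dvd_pow_self i h0.ne').trans (dvd_mul_right _ _)).trans hd
    rw [card_hom_wreath, card_hom_cyclic F N i hN ζ hζ hid]
    rcases Nat.lt_or_ge m 2 with h2 | h2
    · have h1 : m = 1 := by omega
      subst h1
      have : Subsingleton L := (Nat.card_eq_one_iff_unique.1 hLm).1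
      have : Subsingleton (Perm L →* Fˣ) :=
        ⟨fun f g => MonoidHom.ext fun x => by rw [Subsingleton.elim x 1, map_one, map_one]⟩
      simp
    · have : Nontrivial L := Finite.one_lt_card_iff_nontrivial.1 (by omega)
      have h2N : 2 ∣ N :=
        ((Nat.dvd_factorial (by norm_num) h2).trans (dvd_mul_left _ _)).trans hd
      rw [card_hom_perm L F (neg_one_ne F N hN ζ hζ h2N), if_neg (by omega), if_pos h2]
      ring

end CardChar

theorem card_characters_centralizer_perm (n : ℕ) (σ : Equiv.Perm (Fin n))
    (lam : ℕ → ℕ)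
    (h0 : lam 0 = 0)
    (h1 : lam 1 = (Finset.univ.filter fun x : Fin n => σ x = x).card)
    (h2 : ∀ i, 2 ≤ i → lam i = Multiset.count i σ.cycleType)
    (F : Type*) [Field F] (ζ : F)
    (hζ : IsPrimitiveRoot ζ
      (Nat.card (Subgroup.centralizer ({σ} : Set (Equiv.Perm (Fin n)))))) :
    Nat.card ((Subgroup.centralizer ({σ} : Set (Equiv.Perm (Fin n)))) →* Fˣ) =
      (∏ i ∈ (Finset.range (n + 1)).filter fun i => lam i = 1, i) *
      (∏ i ∈ (Finset.range (n + 1)).filter fun i => 2 ≤ lam i, 2 * i) := by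
  classical
  have hper : ∀ x, 0 < Function.minimalPeriod σ x := by
    intro x
    refine Function.IsPeriodicPt.minimalPeriod_pos (orderOf_pos σ) ?_
    rw [Function.IsPeriodicPt, Function.IsFixedPt, Equiv.Perm.iterate_eq_pow, pow_orderOf_eq_one]
    rfl
  have hle : ∀ x, Function.minimalPeriod σ x < n + 1 := by
    intro x
    have hinj : Set.InjOn (fun k => σ^[k] x) (Finset.range (Function.minimalPeriod σ x)) := by
      intro a ha b hb h
      exact Function.iterate_injOn_Iio_minimalPeriod (by simpa using ha) (by simpa using hb) h
    have := Finset.card_le_card_of_injOn (t := (Finset.univ : Finset (Fin n))) _ (by simp) hinj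
    simp at this
    omega
  let p : Fin n → Fin (n + 1) := fun x => ⟨Function.minimalPeriod σ x, hle x⟩
  have hpi : ∀ (i : Fin (n + 1)) x, p x = i ↔ Function.minimalPeriod σ x = i := by
    intro i x
    rw [Fin.ext_iff]
  have hp : ∀ t ∈ Subgroup.centralizer ({σ} : Set (Equiv.Perm (Fin n))), ∀ x, p (t x) = p x := by
    intro t ht x
    exact Fin.ext (CardChar.minimalPeriod_comm σ t ht x)
  have hs : ∀ i x, p (σ x) = i ↔ p x = i := by
    intro i x
    rw [hp σ (by rw [Subgroup.mem_centralizer_singleton_iff])]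
  obtain ⟨E⟩ := CardChar.exists_split σ p hp hs
  have hN : 0 < Nat.card (Subgroup.centralizer ({σ} : Set (Equiv.Perm (Fin n)))) := Nat.card_pos
  rw [Nat.card_congr (E.monoidHomCongrLeftEquiv (N := Fˣ)),
    CardChar.card_hom_pi]
  have hcard : ∀ i : Fin (n + 1), Nat.card {x // p x = i} = lam i * i := by
    intro i
    rw [Nat.card_congr (Equiv.subtypeEquivRight (hpi i))]
    rcases Nat.lt_or_ge i 2 with hi | hi
    · have : (i : ℕ) = 0 ∨ (i : ℕ) = 1 := by omega
      rcases this with h | h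
      · rw [h, mul_zero]
        have : IsEmpty {x // Function.minimalPeriod σ x = 0} := ⟨fun x => (hper x.1).ne' x.2⟩
        exact Nat.card_of_isEmpty
      · rw [h, mul_one, h1, Nat.card_eq_fintype_card, Fintype.card_subtype]
        refine congrArg Finset.card (Finset.filter_congr fun x _ => ?_)
        exact Function.minimalPeriod_eq_one_iff_isFixedPt
    · rw [CardChar.card_period σ i hi, h2 i hi]
  have key : ∀ i : Fin (n + 1), Nat.card (Subgroup.centralizer
      ({σ.subtypePerm (p := fun x => p x = i) (hs i)} : Set (Equiv.Perm {x // p x = i})) →* Fˣ) =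
      (if lam i = 1 then (i : ℕ) else 1) * (if 2 ≤ lam i then 2 * (i : ℕ) else 1) := by
    intro i
    have hd : Nat.card (Subgroup.centralizer
        ({σ.subtypePerm (p := fun x => p x = i) (hs i)} : Set (Equiv.Perm {x // p x = i}))) ∣
        Nat.card (Subgroup.centralizer ({σ} : Set (Equiv.Perm (Fin n)))) := by
      rw [Nat.card_congr E.toEquiv, Nat.card_pi]
      exact Finset.dvd_prod_of_mem (fun i => Nat.card (Subgroup.centralizer
        ({σ.subtypePerm (p := fun x => p x = i) (hs i)} : Set (Equiv.Perm {x // p x = i}))))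
        (Finset.mem_univ i)
    rcases Nat.eq_zero_or_pos (i : ℕ) with hi | hi
    · have : IsEmpty {x // p x = i} :=
        ⟨fun x => (hper x.1).ne' (((hpi i x.1).1 x.2).trans hi)⟩
      have : Subsingleton (Subgroup.centralizer
        ({σ.subtypePerm (p := fun x => p x = i) (hs i)} : Set (Equiv.Perm {x // p x = i})) →* Fˣ) :=
        ⟨fun f g => MonoidHom.ext fun x => by rw [Subsingleton.elim x 1, map_one, map_one]⟩
      simp [hi, h0]
    · refine CardChar.card_hom_block _ _ i (lam i) hi ?_ (hcard i) F _ hN ζ hζ hd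
      intro x
      have hx := (hpi i x.1).1 x.2
      rw [← hx, Function.minimalPeriod_eq_minimalPeriod_iff]
      intro k
      simp only [Function.IsPeriodicPt, Function.IsFixedPt, Equiv.Perm.iterate_eq_pow]
      rw [Subtype.ext_iff, Equiv.Perm.subtypePerm_pow]
      rfl
  rw [Finset.prod_congr rfl (fun i _ => key i), Finset.prod_mul_distrib,
    Finset.prod_filter, Finset.prod_filter,
    Finset.prod_range (fun i => if lam i = 1 then i else 1),
    Finset.prod_range (fun i => if 2 ≤ lam i then 2 * i else 1)]
end

section
/- Let G = S_n with n a positive integer, n ≠ 6, and let r be a ramification of G. Then the number N(G, r) of isomorphism classes of ramification systems with characters of G with ramification r equals ∏_{C ∈ K_r(G)} C(γ_C + r_C − 1, r_C), where C(a, b) is the binomial coefficient and, for a conjugacy class C of cycle type 1^{λ_1} 2^{λ_2} ⋯ n^{λ_n}, γ_C := (∏_{i : λ_i = 1} i) · (∏_{i : λ_i ≥ 2} 2i). -/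
/-- A ramification system with characters `RSC(G, r, χ⃗, u)` on a group `G`:
a ramification `r` assigning a nonnegative integer `r C` to each conjugacy class `C`
of `G`; a map `u` from conjugacy classes to `G` with `u C ∈ C`; and, for each
conjugacy class `C`, an `r C`-tuple of characters of the centralizer `Z_{u C}`
(one-dimensional representations, i.e. group homomorphisms `Z_{u C} → ℂˣ`).
For classes with `r C = 0` the tuple of characters is empty, so `χ` carries
information exactly for the classes in `K_r(G) = {C : r C ≠ 0}`. -/
structure RSC (G : Type*) [Group G] where
  /-- the ramification -/
  r : ConjClasses G → ℕ
  /-- a choice of representative of each conjugacy class -/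
  u : ConjClasses G → G
  hu : ∀ C : ConjClasses G, ConjClasses.mk (u C) = C
  /-- the tuple of characters of `Z_{u C}` attached to each conjugacy class `C` -/
  chi : ∀ C : ConjClasses G, Fin (r C) →
    (Subgroup.centralizer ({u C} : Set G) →* ℂˣ)

/-- Isomorphism of ramification systems with characters (over the same group `G`),
following the definition of the paper: `RSC(G, r, χ⃗, u) ≅ RSC(G, r', χ⃗', u')` if there
are a group automorphism `φ` of `G`, for each conjugacy class `C` an element `h_C ∈ G`
with `φ(h_C u(C) h_C⁻¹) = u'(φ(C))`, and for each `C ∈ K_r(G)` a bijection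
`φ_C : I_C(r) ≃ I_{φ(C)}(r')` such that
`χ'_{φ(C)}^{(φ_C(i))}(φ(h_C h h_C⁻¹)) = χ_C^{(i)}(h)` for all `h ∈ Z_{u(C)}` and
all `i`. -/
def RSC.Iso {G : Type*} [Group G] (A B : RSC G) : Prop :=
  ∃ φ : G ≃* G,
    ∀ C : ConjClasses G, ∃ h : G,
      φ (h * A.u C * h⁻¹) = B.u (ConjClasses.map (φ : G →* G) C) ∧
      (A.r C ≠ 0 →
        ∃ e : Fin (A.r C) ≃ Fin (B.r (ConjClasses.map (φ : G →* G) C)),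
          ∀ (i : Fin (A.r C)) (x : G)
            (hx : x ∈ Subgroup.centralizer ({A.u C} : Set G))
            (hx' : φ (h * x * h⁻¹) ∈
              Subgroup.centralizer ({B.u (ConjClasses.map (φ : G →* G) C)} : Set G)),
            B.chi (ConjClasses.map (φ : G →* G) C) (e i) ⟨φ (h * x * h⁻¹), hx'⟩ =
              A.chi C i ⟨x, hx⟩)

/-- `lamOf g i` is the number `λ_i` of cycles of length `i` in the disjoint cycle
decomposition of the permutation `g`, fixed points counted as cycles of length `1`,
so that `g` has cycle type `1^{λ_1} 2^{λ_2} ⋯ n^{λ_n}`. -/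
def lamOf {n : ℕ} (g : Equiv.Perm (Fin n)) (i : ℕ) : ℕ :=
  if i = 1 then (Finset.univ.filter fun x : Fin n => g x = x).card
  else Multiset.count i g.cycleType

section PermLemmas
open Equiv Equiv.Perm


lemma aux_fact (k : ℕ) (hk : 4 ≤ k) : 2 ^ (k-1) * k.factorial < (2*k-2).factorial := by
  induction k, hk using Nat.le_induction with
  | base => decide
  | succ k hk ih =>
    obtain ⟨j, rfl⟩ : ∃ j, k = j + 1 := ⟨k-1, by omega⟩
    have h1 : 2 * (j+1+1) - 2 = (2*(j+1)-2) + 1 + 1 := by omega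
    rw [h1, Nat.factorial_succ (2*(j+1)-2+1), Nat.factorial_succ (2*(j+1)-2), Nat.factorial_succ (j+1)]
    simp only [Nat.add_sub_cancel] at ih ⊢
    have h2 : 2 * (j+1) - 2 = 2 * j := by omega
    rw [h2] at ih ⊢
    have : 2 * (j+1+1) ≤ (2*j+1+1)*(2*j+1) := by nlinarith
    calc 2 ^ (j+1) * ((j+1+1) * (j+1).factorial) = (2*(j+1+1)) * (2^j * (j+1).factorial) := by ring
      _ < (2*(j+1+1)) * (2*j).factorial := by gcongr
      _ ≤ _ := by nlinarith [Nat.factorial_pos (2*j)]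

lemma aux_num (n k : ℕ) (h6 : n ≠ 6) (hk : 1 ≤ k) (hkn : 2 * k ≤ n)
    (h : (n-2).factorial * 2 = (n-2*k).factorial * 2^k * k.factorial) : k = 1 := by
  by_contra hk1
  obtain ⟨m, rfl⟩ : ∃ m, n = 2*k + m := ⟨n-2*k, by omega⟩
  rw [Nat.add_sub_cancel_left] at h
  have h1 : (2*k-2).factorial * m.factorial ∣ (2*k+m-2).factorial := by
    have := Nat.factorial_mul_factorial_dvd_factorial_add (2*k-2) m
    rwa [show 2*k-2+m = 2*k+m-2 by omega] at this
  have hmpos := Nat.factorial_pos m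
  rcases Nat.lt_or_ge k 4 with h4 | h4
  · have : k = 2 ∨ k = 3 := by omega
    rcases this with rfl | rfl
    · rw [show 2*2+m-2 = m+1+1 by omega, Nat.factorial_succ, Nat.factorial_succ] at h
      have h' : m.factorial * ((m+2)*(m+1)*2) = m.factorial * 8 := by
        simp only [Nat.factorial] at h; linear_combination h
      have := Nat.eq_of_mul_eq_mul_left hmpos h'
      rcases m with _ | m
      · omega
      · nlinarith
    · rw [show 2*3+m-2 = m+1+1+1+1 by omega, Nat.factorial_succ, Nat.factorial_succ, Nat.factorial_succ, Nat.factorial_succ] at h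
      have h' : m.factorial * ((m+4)*(m+3)*((m+2)*(m+1))*2) = m.factorial * 48 := by
        simp only [Nat.factorial] at h; linear_combination h
      have := Nat.eq_of_mul_eq_mul_left hmpos h'
      rcases m with _ | m
      · omega
      · have h1 : 20 ≤ (m+1+4)*(m+1+3) := by nlinarith
        have h2 : 6 ≤ (m+1+2)*(m+1+1) := by nlinarith
        have := Nat.mul_le_mul h1 h2
        omega
  · have := Nat.le_of_dvd (Nat.factorial_pos _) h1
    have h2 := aux_fact k h4
    have h3 : 2^k = 2^(k-1) * 2 := by rw [← pow_succ]; congr 1; omega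
    rw [h3] at h
    nlinarith

lemma card_centralizer_map {G : Type*} [Group G] (φ : G ≃* G) (g : G) :
    Nat.card (Subgroup.centralizer ({φ g} : Set G)) = Nat.card (Subgroup.centralizer ({g} : Set G)) := by
  refine (Nat.card_congr (φ.toEquiv.subtypeEquiv ?_)).symm
  intro a
  simp only [Subgroup.mem_centralizer_singleton_iff]
  show _ ↔ φ a * φ g = φ g * φ a
  rw [← map_mul, ← map_mul, φ.injective.eq_iff]

lemma isSwap_map {n : ℕ} (h6 : n ≠ 6) (φ : Perm (Fin n) ≃* Perm (Fin n)) {s : Perm (Fin n)}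
    (hs : s.IsSwap) : (φ s).IsSwap := by
  have ho : orderOf (φ s) = 2 := by rw [MulEquiv.orderOf_eq, hs.orderOf]
  obtain ⟨k, hk⟩ := cycleType_prime_order (σ := φ s) (by rw [ho]; exact Nat.prime_two)
  rw [ho] at hk
  have hs' : s.cycleType = {2} := hs.isCycle.cycleType.trans (by rw [card_support_eq_two.2 hs])
  have h1 := nat_card_centralizer (φ s)
  have h2 := nat_card_centralizer s
  rw [card_centralizer_map, h2, hs', hk] at h1
  have hle : (φ s).cycleType.sum ≤ n := by simpa using (φ s).sum_cycleType_le
  rw [hk] at hle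
  have hS : (Multiset.replicate (k+1) 2).sum = 2 * (k+1) := by simp; ring
  have hP : (Multiset.replicate (k+1) 2).prod = 2 ^ (k+1) := Multiset.prod_replicate _ _
  have hT : (Multiset.replicate (k+1) 2).toFinset = {2} := Multiset.toFinset_replicate _ _ |>.trans (by simp)
  rw [hS, hP, hT, Finset.prod_singleton, Multiset.count_replicate_self] at h1
  rw [hS] at hle
  have := aux_num n (k+1) h6 (by omega) hle (by rw [← Fintype.card_fin n]; simpa using h1)
  have hk0 : k = 0 := by omega
  subst hk0
  rw [← card_support_eq_two, ← sum_cycleType, hk]; rfl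

lemma swaps_share {α : Type*} [DecidableEq α] {s t : Perm α} (hs : s.IsSwap) (ht : t.IsSwap)
    (h : s * t ≠ t * s) : ∃ p a b, p ≠ a ∧ p ≠ b ∧ a ≠ b ∧ s = swap p a ∧ t = swap p b := by
  obtain ⟨x, y, hxy, rfl⟩ := hs
  obtain ⟨z, w, hzw, rfl⟩ := ht
  by_cases h1 : x = z
  · subst h1
    refine ⟨x, y, w, hxy, hzw, ?_, rfl, rfl⟩
    rintro rfl; exact h rfl
  by_cases h2 : x = w
  · subst h2
    refine ⟨x, y, z, hxy, hzw.symm, ?_, rfl, swap_comm _ _⟩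
    rintro rfl; exact h (by rw [swap_comm])
  by_cases h3 : y = z
  · subst h3
    refine ⟨y, x, w, hxy.symm, hzw, h2, swap_comm _ _, rfl⟩
  by_cases h4 : y = w
  · subst h4
    exact ⟨y, x, z, hxy.symm, hzw.symm, h1, swap_comm _ _, swap_comm _ _⟩
  exfalso
  apply h
  have : Perm.Disjoint (swap x y) (swap z w) := by
    intro u
    by_cases hu : u = x ∨ u = y
    · right; apply swap_apply_of_ne_of_ne <;> rcases hu with rfl | rfl <;> assumption
    · left; push Not at hu; exact swap_apply_of_ne_of_ne hu.1 hu.2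
  exact this.commute

lemma swap_ncomm {α : Type*} [DecidableEq α] {p a b : α} (h1 : p ≠ a) (h2 : p ≠ b) (h3 : a ≠ b) :
    swap p a * swap p b ≠ swap p b * swap p a := by
  intro h
  have := congrArg (fun f : Perm α => f a) h
  simp [swap_apply_of_ne_of_ne h1.symm h3] at this
  exact h2 this

lemma swap_triple {α : Type*} [DecidableEq α] {p a b : α} (h2 : p ≠ b) (h3 : a ≠ b) :
    swap p a * swap p b * swap p a = swap a b := by
  have := swap_apply_apply (swap p a) p b
  rw [swap_inv] at this
  rw [← this, swap_apply_left, swap_apply_of_ne_of_ne h2.symm h3.symm]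

theorem aut_inner {n : ℕ} (h6 : n ≠ 6) (φ : Perm (Fin n) ≃* Perm (Fin n)) :
    ∃ k : Perm (Fin n), ∀ x, φ x = k * x * k⁻¹ := by
  rcases Nat.lt_or_ge n 3 with h3 | h3
  · refine ⟨1, fun x => ?_⟩
    have hd : ∀ m < 3, ∀ x y : Perm (Fin m), x ≠ 1 → y ≠ 1 → y = x := by decide
    simp only [one_mul, inv_one, mul_one]
    by_cases hx : x = 1
    · simp [hx]
    · exact hd n h3 _ _ hx (by simpa using hx)
  obtain ⟨m, rfl⟩ : ∃ m, n = m + 3 := ⟨n-3, by omega⟩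
  have hsw : ∀ i : Fin (m+3), i ≠ 0 → (φ (swap 0 i)).IsSwap := fun i hi =>
    isSwap_map h6 φ ⟨0, i, hi.symm, rfl⟩
  have hnc : ∀ i j : Fin (m+3), i ≠ 0 → j ≠ 0 → i ≠ j →
      φ (swap 0 i) * φ (swap 0 j) ≠ φ (swap 0 j) * φ (swap 0 i) := by
    intro i j hi hj hij
    rw [← map_mul, ← map_mul, φ.injective.ne_iff]
    exact swap_ncomm hi.symm hj.symm hij
  have h10 : (1 : Fin (m+3)) ≠ 0 := by simp
  have h20 : (2 : Fin (m+3)) ≠ 0 := by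
    simp only [ne_eq, Fin.ext_iff, Fin.val_two, Fin.val_zero]; omega
  have h12 : (1 : Fin (m+3)) ≠ 2 := by
    simp only [ne_eq, Fin.ext_iff, Fin.val_two, Fin.val_one]; omega
  obtain ⟨p, a, b, hpa, hpb, hab, e1, e2⟩ := swaps_share (hsw 1 h10) (hsw 2 h20) (hnc _ _ h10 h20 h12)
  have key : ∀ i : Fin (m+3), i ≠ 0 → ∃ c, p ≠ c ∧ φ (swap 0 i) = swap p c := by
    intro i hi
    by_cases hi1 : i = 1
    · subst hi1; exact ⟨a, hpa, e1⟩
    by_cases hi2 : i = 2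
    · subst hi2; exact ⟨b, hpb, e2⟩
    have n1 := hnc i 1 hi h10 hi1
    have n2 := hnc i 2 hi h20 hi2
    have hne : φ (swap 0 i) ≠ swap a b := by
      rw [← swap_triple hpb hab, ← e1, ← e2, ← map_mul, ← map_mul, φ.injective.ne_iff,
        swap_triple h20.symm h12]
      intro h
      have := congrArg (fun f : Perm (Fin (m+3)) => f 0) h
      simp only [swap_apply_left] at this
      rw [swap_apply_of_ne_of_ne h10.symm h20.symm] at this
      exact hi this
    rw [e1] at n1
    rw [e2] at n2
    obtain ⟨z, w, hzw, hz⟩ := hsw i hi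
    rw [hz] at n1 n2 hne ⊢
    by_cases hzp : z = p
    · subst hzp; exact ⟨w, hzw, rfl⟩
    by_cases hwp : w = p
    · subst hwp; exact ⟨z, hzw.symm, swap_comm _ _⟩
    exfalso
    have hcomm : ∀ c, c ≠ z → c ≠ w → swap z w * swap p c = swap p c * swap z w := by
      intro c hcz hcw
      have : Perm.Disjoint (swap z w) (swap p c) := by
        intro u
        by_cases hu : u = z ∨ u = w
        · right; apply swap_apply_of_ne_of_ne <;> rcases hu with rfl | rfl <;> 
            first | assumption | (apply Ne.symm; assumption)
        · left; push Not at hu; exact swap_apply_of_ne_of_ne hu.1 hu.2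
      exact this.commute
    have c1 : a = z ∨ a = w := by
      by_contra hh; push Not at hh; exact n1 (hcomm a hh.1 hh.2)
    have c2 : b = z ∨ b = w := by
      by_contra hh; push Not at hh; exact n2 (hcomm b hh.1 hh.2)
    rcases c1 with rfl | rfl <;> rcases c2 with rfl | rfl
    · exact hab rfl
    · exact hne rfl
    · exact hne (swap_comm _ _)
    · exact hab rfl
  choose! f hf1 hf2 using key
  let F : Fin (m+3) → Fin (m+3) := fun i => if i = 0 then p else f i
  have hF0 : F 0 = p := by simp [F]
  have hFi : ∀ i, i ≠ 0 → F i = f i := fun i hi => by simp [F, hi]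
  have hinj : Function.Injective F := by
    intro i j hij
    by_cases hi : i = 0 <;> by_cases hj : j = 0
    · rw [hi, hj]
    · subst hi; rw [hF0, hFi j hj] at hij; exact (hf1 j hj hij).elim
    · subst hj; rw [hF0, hFi i hi] at hij; exact (hf1 i hi hij.symm).elim
    · rw [hFi i hi, hFi j hj] at hij
      have : φ (swap 0 i) = φ (swap 0 j) := by rw [hf2 i hi, hf2 j hj, hij]
      have := congrArg (fun f : Perm (Fin (m+3)) => f 0) (φ.injective this)
      simpa using this
  let k : Perm (Fin (m+3)) := Equiv.ofBijective F (Finite.injective_iff_bijective.1 hinj)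
  have hk : ∀ i, k i = F i := fun i => rfl
  have h0 : ∀ i, φ (swap 0 i) = k * swap 0 i * k⁻¹ := by
    intro i
    by_cases hi : i = 0
    · subst hi; simp [← Perm.one_def]
    · rw [hf2 i hi, ← swap_apply_apply, hk, hk, hF0, hFi i hi]
  refine ⟨k, fun x => ?_⟩
  have : (φ : Perm (Fin (m+3)) →* Perm (Fin (m+3))) = (MulAut.conj k).toMonoidHom := by
    refine MonoidHom.eq_of_eqOn_topM (M := Perm (Fin (m+3))) ?_
    rw [← mclosure_isSwap]
    apply MonoidHom.eqOn_closureM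
    rintro _ ⟨i, j, hij, rfl⟩
    show φ (swap i j) = k * swap i j * k⁻¹
    by_cases hi : i = 0
    · subst hi; exact h0 j
    by_cases hj : j = 0
    · subst hj; rw [swap_comm]; exact h0 i
    rw [← swap_triple (Ne.symm hj) hij, map_mul, map_mul, h0, h0]
    group
  exact DFunLike.congr_fun this x


lemma perm_hom_ext {K A : Type*} [DecidableEq K] [Finite K] [Group A]
    (f g : Perm K →* A) (h : ∀ x y, x ≠ y → f (swap x y) = g (swap x y)) : f = g := by
  refine MonoidHom.eq_of_eqOn_topM (M := Perm K) ?_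
  rw [← mclosure_isSwap]
  apply MonoidHom.eqOn_closureM
  rintro _ ⟨i, j, hij, rfl⟩
  exact h i j hij

lemma perm_hom_const {K A : Type*} [DecidableEq K] [CommGroup A]
    (f : Perm K →* A) {x y z w : K} (h1 : x ≠ y) (h2 : z ≠ w) : f (swap x y) = f (swap z w) := by
  obtain ⟨c, hc⟩ := isConj_iff.1 (isConj_swap h1 h2)
  rw [← hc, map_mul, map_mul, map_inv, mul_comm, inv_mul_cancel_left]

lemma card_perm_hom (K : Type*) [Finite K] :
    Nat.card (Perm K →* ℂˣ) = if 2 ≤ Nat.card K then 2 else 1 := by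
  classical
  have := Fintype.ofFinite K
  split_ifs with h
  · rw [Nat.card_eq_fintype_card] at h
    obtain ⟨a, b, hab⟩ := Fintype.one_lt_card_iff.1 h
    let sg : Perm K →* ℂˣ := (Units.map (Int.castRingHom ℂ).toMonoidHom).comp sign
    have hsg : ∀ x y : K, x ≠ y → sg (swap x y) = -1 := by
      intro x y hxy
      ext
      simp [sg, sign_swap hxy]
    have hne : (1 : Perm K →* ℂˣ) ≠ sg := by
      intro h
      have h1 := DFunLike.congr_fun h (swap a b)
      rw [hsg a b hab] at h1
      have h2 := congrArg Units.val h1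
      norm_num at h2
    rw [Nat.card_eq_two_iff]
    refine ⟨1, sg, hne, ?_⟩
    rw [Set.eq_univ_iff_forall]
    intro f
    have hsq : f (swap a b) * f (swap a b) = 1 := by
      rw [← map_mul, swap_mul_self, map_one]
    have : f (swap a b) = 1 ∨ f (swap a b) = -1 := by
      have h2 := congrArg Units.val hsq
      rw [Units.val_mul, Units.val_one, mul_self_eq_one_iff] at h2
      rcases h2 with h2 | h2
      · left; ext; exact h2
      · right; ext; simpa using h2
    rcases this with h1 | h1
    · left
      refine perm_hom_ext _ _ fun x y hxy => ?_
      rw [perm_hom_const f hxy hab, h1]; rfl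
    · right
      refine perm_hom_ext _ _ fun x y hxy => ?_
      rw [perm_hom_const f hxy hab, h1, hsg x y hxy]
  · rw [Nat.card_eq_fintype_card, not_le, Nat.lt_succ_iff, Fintype.card_le_one_iff_subsingleton] at h
    have : Subsingleton (Perm K →* ℂˣ) := ⟨fun f g => by
      ext x; rw [Subsingleton.elim x 1]; simp⟩
    exact Nat.card_unique

section W
variable (K : Type*) (m : ℕ)

/-- the shift -/
def shiftPerm : Perm (K × ZMod m) := Equiv.prodCongr (Equiv.refl K) (Equiv.addRight 1)

/-- its centralizer -/
abbrev WG : Subgroup (Perm (K × ZMod m)) := Subgroup.centralizer {shiftPerm K m}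

variable {K m}

lemma shiftPerm_apply (p : K × ZMod m) : shiftPerm K m p = (p.1, p.2 + 1) := rfl

lemma mem_WG {w : Perm (K × ZMod m)} : w ∈ WG K m ↔ ∀ k x, w (k, x + 1) = ((w (k,x)).1, (w (k,x)).2 + 1) := by
  rw [Subgroup.mem_centralizer_singleton_iff, Equiv.ext_iff]
  simp [shiftPerm_apply]

lemma WG_apply [NeZero m] (w : WG K m) (k : K) (x : ZMod m) :
    w.1 (k, x) = ((w.1 (k, 0)).1, (w.1 (k, 0)).2 + x) := by
  have h : ∀ t : ℕ, w.1 (k, (t : ZMod m)) = ((w.1 (k, 0)).1, (w.1 (k, 0)).2 + t) := by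
    intro t
    induction t with
    | zero => simp
    | succ t ih => push_cast; rw [mem_WG.1 w.2, ih]; simp [add_assoc]
  have := h x.val
  rwa [ZMod.natCast_zmod_val] at this

/-- underlying permutation of blocks -/
def WGperm [NeZero m] : WG K m →* Perm K :=
  MonoidHom.toHomPerm
  { toFun := fun w k => (w.1 (k, 0)).1
    map_one' := rfl
    map_mul' := fun w v => by
      refine funext fun k => ?_
      show (w.1 (v.1 (k, 0))).1 = (w.1 ((v.1 (k,0)).1, 0)).1
      rw [← Prod.mk.eta (p := v.1 (k, 0)), WG_apply w] }

lemma WGperm_apply [NeZero m] (w : WG K m) (k : K) : WGperm w k = (w.1 (k, 0)).1 := rfl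

/-- total shift -/
def WGsum [NeZero m] [Fintype K] : WG K m →* Multiplicative (ZMod m) where
  toFun w := ∏ k, Multiplicative.ofAdd (w.1 (k, 0)).2
  map_one' := by simp
  map_mul' w v := by
    rw [← Equiv.prod_comp (WGperm v) fun k => Multiplicative.ofAdd (w.1 (k, 0)).2,
      ← Finset.prod_mul_distrib]
    refine Finset.prod_congr rfl fun k _ => ?_
    rw [← ofAdd_add]
    congr 1
    show (w.1 (v.1 (k, 0))).2 = _
    rw [← Prod.mk.eta (p := v.1 (k, 0)), WG_apply w]
    rfl

/-- block permutations -/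
def WGi : Perm K →* WG K m where
  toFun σ := ⟨Equiv.prodCongr σ (Equiv.refl _), by rw [mem_WG]; intros; rfl⟩
  map_one' := rfl
  map_mul' _ _ := rfl

/-- shifts -/
def WGr : (K → Multiplicative (ZMod m)) →* WG K m where
  toFun a := ⟨
    { toFun := fun p => (p.1, p.2 + (a p.1).toAdd)
      invFun := fun p => (p.1, p.2 - (a p.1).toAdd)
      left_inv := fun p => by simp
      right_inv := fun p => by simp }, by
      rw [mem_WG]; intro k x; simp [add_right_comm]⟩
  map_one' := by ext p <;> simp
  map_mul' a b := by
    apply Subtype.ext; apply Equiv.ext; intro p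
    show (p.1, p.2 + (Multiplicative.toAdd (a p.1) + Multiplicative.toAdd (b p.1))) =
      (p.1, p.2 + Multiplicative.toAdd (b p.1) + Multiplicative.toAdd (a p.1))
    rw [add_assoc, add_comm (Multiplicative.toAdd (b _))]

lemma WG_decomp [NeZero m] (w : WG K m) :
    w = WGi (WGperm w) * WGr (fun k => Multiplicative.ofAdd (w.1 (k, 0)).2) := by
  apply Subtype.ext; apply Equiv.ext
  rintro ⟨k, x⟩
  rw [WG_apply, add_comm]
  rfl

lemma WGr_conj [DecidableEq K] (σ : Perm K) (k : K) (c : Multiplicative (ZMod m)) :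
    (WGr (Pi.mulSingle (σ k) c) : WG K m) = WGi σ * WGr (Pi.mulSingle k c) * (WGi σ)⁻¹ := by
  rw [eq_mul_inv_iff_mul_eq]
  apply Subtype.ext; apply Equiv.ext
  rintro ⟨j, x⟩
  show (σ j, x + Multiplicative.toAdd ((Pi.mulSingle (σ k) c : K → _) (σ j))) =
    (σ j, x + Multiplicative.toAdd ((Pi.mulSingle k c : K → _) j))
  simp [Pi.mulSingle_apply]

lemma WG_hom [NeZero m] [Fintype K] [DecidableEq K] {A : Type*} [CommGroup A] (χ : WG K m →* A)
    (k₀ : K) (w : WG K m) :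
    χ w = χ (WGr (Pi.mulSingle k₀ (WGsum w))) * χ (WGi (WGperm w)) := by
  have h1 : ∀ k c, χ (WGr (Pi.mulSingle k c)) = χ (WGr (Pi.mulSingle k₀ c)) := by
    intro k c
    have := WGr_conj (swap k₀ k) k₀ c
    rw [swap_apply_left] at this
    rw [this, map_mul, map_mul, map_inv, mul_comm, inv_mul_cancel_left]
  conv_lhs => rw [WG_decomp w]
  rw [map_mul, mul_comm]
  congr 1
  have h2 : ∀ a : K → Multiplicative (ZMod m), χ (WGr a) = ∏ k, χ (WGr (Pi.mulSingle k (a k))) := by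
    intro a
    have := map_prod (χ.comp WGr) (fun k => Pi.mulSingle k (a k)) Finset.univ
    rwa [Finset.univ_prod_mulSingle] at this
  rw [h2, Finset.prod_congr rfl fun k _ => h1 k _]
  have := map_prod ((χ.comp WGr).comp (MonoidHom.mulSingle (fun _ : K => Multiplicative (ZMod m)) k₀))
    (fun k => Multiplicative.ofAdd (w.1 (k, 0)).2) Finset.univ
  exact this.symm

/-- characters of the wreath product -/
def WGequiv [NeZero m] [Fintype K] [DecidableEq K] {A : Type*} [CommGroup A] (k₀ : K) :
    (WG K m →* A) ≃ (Multiplicative (ZMod m) →* A) × (Perm K →* A) where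
  toFun χ := ((χ.comp WGr).comp (MonoidHom.mulSingle (fun _ : K => Multiplicative (ZMod m)) k₀),
    χ.comp WGi)
  invFun p := (p.1.comp WGsum) * (p.2.comp WGperm)
  left_inv χ := by
    apply MonoidHom.ext; intro w
    rw [WG_hom χ k₀ w]
    rfl
  right_inv p := by
    obtain ⟨f, g⟩ := p
    ext1
    · apply MonoidHom.ext; intro c
      show f (WGsum (WGr (Pi.mulSingle k₀ c))) * g (WGperm (WGr (Pi.mulSingle k₀ c))) = f c
      have h1 : WGsum (WGr (Pi.mulSingle k₀ c) : WG K m) = c := by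
        show ∏ k, Multiplicative.ofAdd (0 + Multiplicative.toAdd ((Pi.mulSingle k₀ c : K → _) k)) = c
        simp
      have h2 : WGperm (WGr (Pi.mulSingle k₀ c) : WG K m) = 1 := by
        ext k; rfl
      rw [h1, h2, map_one, mul_one]
    · apply MonoidHom.ext; intro σ
      show f (WGsum (WGi σ)) * g (WGperm (WGi σ)) = g σ
      have h1 : WGsum (WGi σ : WG K m) = 1 := by
        show ∏ k : K, Multiplicative.ofAdd (0 : ZMod m) = 1
        simp
      have h2 : WGperm (WGi σ : WG K m) = σ := by
        ext k; rfl
      rw [h1, h2, map_one, one_mul]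

end W

lemma card_WG (K : Type*) [Finite K] (m : ℕ) [NeZero m] :
    Nat.card (WG K m →* ℂˣ) = if Nat.card K = 0 then 1 else if Nat.card K = 1 then m else 2 * m := by
  classical
  have := Fintype.ofFinite K
  by_cases h : IsEmpty K
  · have : Subsingleton (WG K m →* ℂˣ) := ⟨fun f g => by
      ext x; rw [Subsingleton.elim x 1]; simp⟩
    rw [Nat.card_unique]; simp
  · rw [not_isEmpty_iff] at h
    obtain ⟨k₀⟩ := h
    have h0 : Nat.card K ≠ 0 := Nat.card_ne_zero.2 ⟨⟨k₀⟩, inferInstance⟩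
    rw [Nat.card_congr (WGequiv k₀), Nat.card_prod, card_perm_hom, 
      CommGroup.card_monoidHom_of_hasEnoughRootsOfUnity, if_neg h0]
    have : Nat.card (Multiplicative (ZMod m)) = m := by simp
    rw [this]
    split_ifs <;> omega

section Restrict
variable {α I : Type*} (g : Perm α) (c : α → I)

/-- restriction to fibers -/
def restrHom (hg : ∀ x, c (g x) = c x)
    (hc : ∀ f ∈ Subgroup.centralizer ({g} : Set (Perm α)), ∀ x, c (f x) = c x) :
    Subgroup.centralizer ({g} : Set (Perm α)) →*
      ∀ i, Subgroup.centralizer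
        ({g.subtypePerm (p := fun x => c x = i) (fun x => by rw [hg])} : Set (Perm {x // c x = i})) where
  toFun f i := ⟨f.1.subtypePerm (fun x => by rw [hc f.1 f.2]), by
    rw [Subgroup.mem_centralizer_singleton_iff]
    have := Subgroup.mem_centralizer_singleton_iff.1 f.2
    ext x
    exact DFunLike.congr_fun this x.1⟩
  map_one' := rfl
  map_mul' _ _ := rfl

lemma restrHom_bij (hg : ∀ x, c (g x) = c x)
    (hc : ∀ f ∈ Subgroup.centralizer ({g} : Set (Perm α)), ∀ x, c (f x) = c x) :
    Function.Bijective (restrHom g c hg hc) := by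
  constructor
  · intro f f' h
    ext x
    have := congrArg (fun F => ((F (c x)).1 ⟨x, rfl⟩).1) h
    exact this
  · intro F
    let f : Perm α := (Equiv.sigmaFiberEquiv c).permCongr (Equiv.Perm.sigmaCongrRight fun i => (F i).1)
    have hf : ∀ i x (hx : c x = i), f x = ((F i).1 ⟨x, hx⟩).1 := by
      rintro i x rfl; rfl
    have hmem : f ∈ Subgroup.centralizer ({g} : Set (Perm α)) := by
      rw [Subgroup.mem_centralizer_singleton_iff]
      ext x
      show f (g x) = g (f x)
      rw [hf (c x) x rfl, hf (c x) (g x) (hg x)]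
      have := Subgroup.mem_centralizer_singleton_iff.1 (F (c x)).2
      exact congrArg Subtype.val (DFunLike.congr_fun this ⟨x, rfl⟩)
    refine ⟨⟨f, hmem⟩, ?_⟩
    funext i
    ext ⟨x, hx⟩
    exact hf i x hx

end Restrict

lemma card_hom_congr {G H : Type*} [Group G] [Group H] (e : G ≃* H) :
    Nat.card (G →* ℂˣ) = Nat.card (H →* ℂˣ) :=
  Nat.card_congr e.monoidHomCongrLeft.toEquiv

lemma card_hom_pi {I : Type*} [Fintype I] (H : I → Type*) [∀ i, Group (H i)] :
    Nat.card ((∀ i, H i) →* ℂˣ) = ∏ i, Nat.card (H i →* ℂˣ) := by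
  classical
  rw [← Nat.card_pi, ← Nat.card_congr (MonoidHom.noncommPiCoprodEquiv (N := H) (M := ℂˣ))]
  exact Nat.card_congr (Equiv.subtypeUnivEquiv fun _ _ _ _ _ _ => Commute.all _ _)

/-- equivariant bijections give isomorphic centralizers -/
lemma card_hom_centralizer_congr {α β : Type*} (e : α ≃ β) (g : Perm α) (h : Perm β)
    (he : ∀ x, e (g x) = h (e x)) :
    Nat.card (Subgroup.centralizer ({g} : Set (Perm α)) →* ℂˣ) =
      Nat.card (Subgroup.centralizer ({h} : Set (Perm β)) →* ℂˣ) := by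
  have hh : e.permCongrHom g = h := by
    ext y
    show e (g (e.symm y)) = h y
    rw [he, e.apply_symm_apply]
  subst hh
  apply card_hom_congr
  refine (e.permCongrHom.subgroupMap _).trans (MulEquiv.subgroupCongr ?_)
  ext y
  refine (Subgroup.mem_map_equiv (f := e.permCongrHom)).trans ?_
  rw [Subgroup.mem_centralizer_singleton_iff, Subgroup.mem_centralizer_singleton_iff,
    ← e.permCongrHom.injective.eq_iff, map_mul, map_mul, MulEquiv.apply_symm_apply]

lemma uniform_model {β : Type} [Finite β] (h : Perm β) (m : ℕ) (hm : 0 < m)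
    (hp : ∀ x, Function.minimalPeriod h x = m) :
    ∃ (K : Type) (_ : Finite K) (e : β ≃ K × ZMod m), ∀ x, e (h x) = shiftPerm K m (e x) := by
  have : NeZero m := ⟨hm.ne'⟩
  let S := SameCycle.setoid h
  let F : Quotient S × ZMod m → β := fun p => h^[p.2.val] p.1.out
  have hmod : ∀ x t, h^[t % m] x = h^[t] x := by
    intro x t
    have := Function.iterate_mod_minimalPeriod_eq (f := h) (x := x) (n := t)
    rwa [hp] at this
  have hmk : ∀ p, (Quotient.mk S (F p)) = p.1 := by
    intro p
    conv_rhs => rw [← p.1.out_eq]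
    apply Quotient.sound
    show SameCycle h _ _
    simp only [F]
    rw [Equiv.Perm.iterate_eq_pow]
    exact (sameCycle_pow_left).2 (SameCycle.refl _ _)
  have hF : Function.Bijective F := by
    constructor
    · rintro ⟨p, x⟩ ⟨q, y⟩ hpq
      have h1 : p = q := by
        have := congrArg (Quotient.mk S) hpq
        rwa [hmk, hmk] at this
      subst h1
      have := (Function.iterate_injOn_Iio_minimalPeriod (f := h) (x := p.out))
        (by simpa [hp] using ZMod.val_lt x) (by simpa [hp] using ZMod.val_lt y) hpq
      exact congrArg (Prod.mk p) (ZMod.val_injective m this)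
    · intro y
      have : SameCycle h (Quotient.mk S y).out y := Quotient.exact (Quotient.out_eq (Quotient.mk S y))
      obtain ⟨t, ht⟩ := this.exists_nat_pow_eq
      refine ⟨(Quotient.mk S y, (t : ZMod m)), ?_⟩
      simp only [F]
      rw [ZMod.val_natCast, hmod, Equiv.Perm.iterate_eq_pow, ht]
  refine ⟨Quotient S, inferInstance, (Equiv.ofBijective F hF).symm, fun x => ?_⟩
  rw [Equiv.symm_apply_eq]
  obtain ⟨p, rfl⟩ := hF.2 x
  have : (Equiv.ofBijective F hF).symm (F p) = p := (Equiv.ofBijective F hF).symm_apply_apply p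
  rw [this]
  show h (F p) = h^[(p.2 + 1).val] p.1.out
  rw [← Nat.cast_one (R := ZMod m), ← ZMod.natCast_zmod_val p.2, ← Nat.cast_add, ZMod.val_natCast, hmod,
    Function.iterate_succ_apply']

lemma period_cycle {α : Type*} [Fintype α] [DecidableEq α] (g : Perm α) (x : α) (hx : g x ≠ x) :
    Function.minimalPeriod g x = (g.cycleOf x).support.card := by
  apply Nat.dvd_antisymm
  · apply Function.IsPeriodicPt.minimalPeriod_dvd
    show g^[_] x = x
    have := pow_mod_card_support_cycleOf_self_apply g (g.cycleOf x).support.card x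
    rw [Nat.mod_self] at this
    rw [Equiv.Perm.iterate_eq_pow, ← this]; rfl
  · rw [← (isCycle_cycleOf g hx).orderOf]
    apply orderOf_dvd_of_pow_eq_one
    rw [(isCycle_cycleOf g hx).pow_eq_one_iff' (x := x) (by simpa using hx), cycleOf_pow_apply_self,
      ← Equiv.Perm.iterate_eq_pow]
    exact Function.iterate_minimalPeriod

lemma card_period {n : ℕ} (g : Perm (Fin n)) (i : ℕ) (hi : 0 < i) :
    lamOf g i * i = Nat.card {x // Function.minimalPeriod g x = i} := by
  rw [Nat.card_eq_fintype_card, Fintype.card_subtype]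
  unfold lamOf
  split_ifs with h1
  · subst h1
    rw [mul_one]
    congr 1; ext x
    simp only [Finset.mem_filter, Finset.mem_univ, true_and]
    exact Function.minimalPeriod_eq_one_iff_isFixedPt.symm
  · have hset : (Finset.univ.filter fun x => Function.minimalPeriod g x = i) =
      (g.cycleFactorsFinset.filter fun c => c.support.card = i).biUnion support := by
      ext x
      simp only [Finset.mem_filter, Finset.mem_univ, true_and, Finset.mem_biUnion]
      constructor
      · intro hx
        have hgx : g x ≠ x := fun h => h1 (by
          rw [← hx]; exact Function.minimalPeriod_eq_one_iff_isFixedPt.2 h)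
        refine ⟨g.cycleOf x, ⟨cycleOf_mem_cycleFactorsFinset_iff.2 (by simpa using hgx), ?_⟩, ?_⟩
        · rw [← period_cycle g x hgx, hx]
        · simpa [mem_support_cycleOf_iff] using hgx
      · rintro ⟨c, ⟨hc, hci⟩, hxc⟩
        have := cycle_is_cycleOf hxc hc
        subst this
        rw [period_cycle g x ?_, hci]
        intro h
        rw [(cycleOf_eq_one_iff g).2 h] at hxc
        simp at hxc
    rw [hset, Finset.card_biUnion, Finset.sum_congr rfl (g := fun _ => i), Finset.sum_const, smul_eq_mul,
      cycleType_def, Multiset.count_map]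
    · congr 1
      simp only [Finset.card, Finset.filter_val, Function.comp]
      congr 1
      exact Multiset.filter_congr fun c _ => eq_comm
    · intro c hc; exact (Finset.mem_filter.1 hc).2
    · intro c hc d hd hcd
      exact (g.cycleFactorsFinset_pairwise_disjoint (Finset.mem_filter.1 hc).1
        (Finset.mem_filter.1 hd).1 hcd).disjoint_support

lemma card_chars {n : ℕ} (g : Perm (Fin n)) :
    Nat.card (Subgroup.centralizer ({g} : Set (Perm (Fin n))) →* ℂˣ) =
      (∏ i ∈ (Finset.range (n + 1)).filter fun i => lamOf g i = 1, i) *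
        (∏ i ∈ (Finset.range (n + 1)).filter fun i => 2 ≤ lamOf g i, 2 * i) := by
  have hpos : ∀ x, 0 < Function.minimalPeriod g x := fun x =>
    Function.minimalPeriod_pos_of_mem_periodicPts
      (Function.Injective.mem_periodicPts g.injective x)
  have hle : ∀ x, Function.minimalPeriod g x < n + 1 := by
    intro x
    by_cases hx : g x = x
    · rw [Function.minimalPeriod_eq_one_iff_isFixedPt.2 hx]
      have := x.2; omega
    · rw [period_cycle g x hx]
      have := Finset.card_le_univ (g.cycleOf x).support
      simp at this; omega
  let c : Fin n → Fin (n+1) := fun x => ⟨Function.minimalPeriod g x, hle x⟩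
  have hc : ∀ f ∈ Subgroup.centralizer ({g} : Set (Perm (Fin n))), ∀ x, c (f x) = c x := by
    intro f hf x
    rw [Subgroup.mem_centralizer_singleton_iff] at hf
    have hcm : Function.Commute f g := fun y => DFunLike.congr_fun hf y
    apply Fin.ext
    show Function.minimalPeriod g (f x) = Function.minimalPeriod g x
    rw [Function.minimalPeriod_eq_minimalPeriod_iff]
    intro t
    show g^[t] (f x) = f x ↔ g^[t] x = x
    rw [← (hcm.iterate_right t) x, f.injective.eq_iff]
  have hg : ∀ x, c (g x) = c x := hc g (by rw [Subgroup.mem_centralizer_singleton_iff])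
  rw [card_hom_congr (MulEquiv.ofBijective _ (restrHom_bij g c hg hc)), card_hom_pi,
    Finset.prod_filter, Finset.prod_filter, ← Finset.prod_mul_distrib,
    Finset.prod_range]
  refine Finset.prod_congr rfl fun i _ => ?_
  rcases Nat.eq_zero_or_pos i.1 with hi | hi
  · have : IsEmpty {x // c x = i} := ⟨fun ⟨x, hx⟩ => by
      have := hpos x
      have h2 : Function.minimalPeriod g x = i.1 := congrArg Fin.val hx
      omega⟩
    have hl : lamOf g i.1 = 0 := by
      rw [hi, lamOf, if_neg (by norm_num), Multiset.count_eq_zero]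
      intro h
      have := two_le_of_mem_cycleType h
      omega
    have : Subsingleton (Subgroup.centralizer
        ({g.subtypePerm (p := fun x => c x = i) (fun x => by rw [hg])} : Set (Perm {x // c x = i})) →* ℂˣ) :=
      ⟨fun f g => by
        apply MonoidHom.ext; intro x; rw [Subsingleton.elim x 1]; simp⟩
    rw [Nat.card_unique, hl]; simp
  · have hp : ∀ y : {x // c x = i}, Function.minimalPeriod
        (g.subtypePerm (p := fun x => c x = i) (fun x => by rw [hg])) y = i.1 := by
      rintro ⟨x, hx⟩
      have h2 : Function.minimalPeriod g x = i.1 := congrArg Fin.val hx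
      rw [← h2, Function.minimalPeriod_eq_minimalPeriod_iff]
      intro t
      have hsc : Function.Semiconj (Subtype.val : {x // c x = i} → Fin n)
        (g.subtypePerm (p := fun x => c x = i) (fun x => by rw [hg])) g := fun y => rfl
      show _ = _ ↔ g^[t] x = x
      rw [← (hsc.iterate_right t) ⟨x, hx⟩]
      exact Subtype.ext_iff
    obtain ⟨K, hK, e, he⟩ := uniform_model _ i.1 hi hp
    have : NeZero i.1 := ⟨hi.ne'⟩
    have hcard : Nat.card K = lamOf g i.1 := by
      have h1 := Nat.card_congr e
      rw [Nat.card_prod, Nat.card_zmod] at h1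
      have h2 := card_period g i.1 hi
      have h3 : Nat.card {x // c x = i} = Nat.card {x // Function.minimalPeriod g x = i.1} :=
        Nat.card_congr (Equiv.subtypeEquivRight fun x => Fin.ext_iff)
      rw [← h3, h1] at h2
      exact (Nat.eq_of_mul_eq_mul_right hi h2).symm
    rw [card_hom_centralizer_congr e _ _ he, card_WG, hcard]
    split_ifs <;> omega

end PermLemmas

section P4
variable {G : Type*} [Group G]

lemma conj_mem {u v h : G} (e : h * u * h⁻¹ = v) {x : G}
    (hx : x ∈ Subgroup.centralizer ({v} : Set G)) :
    h⁻¹ * x * h ∈ Subgroup.centralizer ({u} : Set G) := by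
  rw [Subgroup.mem_centralizer_singleton_iff] at *
  subst e
  have : h⁻¹ * (x * (h * u * h⁻¹)) * h = h⁻¹ * (h * u * h⁻¹ * x) * h := by rw [hx]
  simpa [mul_assoc] using this

/-- transport of characters along conjugation -/
def trChar {u v : G} (h : G) (e : h * u * h⁻¹ = v)
    (χ : Subgroup.centralizer ({u} : Set G) →* ℂˣ) :
    Subgroup.centralizer ({v} : Set G) →* ℂˣ where
  toFun x := χ ⟨h⁻¹ * x.1 * h, conj_mem e x.2⟩
  map_one' := by
    rw [← map_one χ]; congr 1; ext; simp
  map_mul' x y := by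
    rw [← map_mul χ]; congr 1; ext; simp [mul_assoc]

lemma trChar_apply {u v : G} (h : G) (e : h * u * h⁻¹ = v)
    (χ : Subgroup.centralizer ({u} : Set G) →* ℂˣ) (x : G) (hx) (hx') :
    trChar h e χ ⟨x, hx⟩ = χ ⟨h⁻¹ * x * h, hx'⟩ := rfl

lemma trChar_indep {u v : G} (h k : G) (e : h * u * h⁻¹ = v) (e' : k * u * k⁻¹ = v)
    (χ : Subgroup.centralizer ({u} : Set G) →* ℂˣ) : trChar h e χ = trChar k e' χ := by
  ext ⟨x, hx⟩
  congr 1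
  rw [trChar_apply _ _ _ _ _ (conj_mem e hx), trChar_apply _ _ _ _ _ (conj_mem e' hx)]
  have hz : k⁻¹ * h ∈ Subgroup.centralizer ({u} : Set G) := by
    rw [Subgroup.mem_centralizer_singleton_iff]
    rw [← e'] at e
    have : k⁻¹ * (h * u * h⁻¹) * h = k⁻¹ * (k * u * k⁻¹) * h := by rw [e]
    simpa [mul_assoc] using this
  let z : Subgroup.centralizer ({u} : Set G) := ⟨k⁻¹ * h, hz⟩
  have : (⟨k⁻¹ * x * k, conj_mem e' hx⟩ : Subgroup.centralizer ({u} : Set G)) =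
      z * ⟨h⁻¹ * x * h, conj_mem e hx⟩ * z⁻¹ := by
    ext; simp [z, mul_assoc]
  rw [this, map_mul, map_mul, map_inv, mul_comm, inv_mul_cancel_left]

lemma trChar_trChar {u v w : G} (h k : G) (e : h * u * h⁻¹ = v) (e' : k * v * k⁻¹ = w)
    (χ : Subgroup.centralizer ({u} : Set G) →* ℂˣ) :
    trChar k e' (trChar h e χ) = trChar (k * h) (by rw [← e', ← e]; group) χ := by
  ext ⟨x, hx⟩
  simp only [trChar, MonoidHom.coe_mk, OneHom.coe_mk]
  congr 2; ext; simp [mul_assoc]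

lemma trChar_one {u : G} (e : 1 * u * 1⁻¹ = u)
    (χ : Subgroup.centralizer ({u} : Set G) →* ℂˣ) : trChar 1 e χ = χ := by
  ext ⟨x, hx⟩
  simp only [trChar, MonoidHom.coe_mk, OneHom.coe_mk]
  congr 2; ext; simp

/-- a representative of a conjugacy class -/
noncomputable def cOut (C : ConjClasses G) : G := (ConjClasses.exists_rep C).choose

lemma cOut_spec (C : ConjClasses G) : ConjClasses.mk (cOut C) = C :=
  (ConjClasses.exists_rep C).choose_spec

lemma exists_conj_out (A : RSC G) (C : ConjClasses G) :
    ∃ h : G, h * A.u C * h⁻¹ = cOut C := by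
  have : ConjClasses.mk (A.u C) = ConjClasses.mk (cOut C) := by
    rw [A.hu]; exact (cOut_spec C).symm
  rw [ConjClasses.mk_eq_mk_iff_isConj, isConj_iff] at this
  exact this

/-- the multiset of characters -/
noncomputable def charMS (A : RSC G) (C : ConjClasses G) :
    Multiset (Subgroup.centralizer ({cOut C} : Set G) →* ℂˣ) :=
  Finset.univ.val.map fun i : Fin (A.r C) =>
    trChar (exists_conj_out A C).choose (exists_conj_out A C).choose_spec (A.chi C i)

lemma charMS_eq (A : RSC G) (C : ConjClasses G) (h : G) (e : h * A.u C * h⁻¹ = cOut C) :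
    charMS A C = Finset.univ.val.map fun i : Fin (A.r C) => trChar h e (A.chi C i) := by
  unfold charMS
  congr 1; ext1 i; apply trChar_indep

lemma exists_equiv_of_map_eq {m : ℕ} {β : Type*} (f g : Fin m → β)
    (h : Finset.univ.val.map f = Finset.univ.val.map g) : ∃ e : Fin m ≃ Fin m, ∀ i, g (e i) = f i := by
  classical
  have hc : ∀ c, Nonempty ({a // f a = c} ≃ {b // g b = c}) := by
    intro c
    have := congrArg (Multiset.count c) h
    rw [Multiset.count_map, Multiset.count_map] at this
    rw [← Fintype.card_eq, Fintype.card_subtype, Fintype.card_subtype]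
    simpa [Finset.card, eq_comm] using this
  exact ⟨Equiv.ofFiberEquiv fun c => (hc c).some, fun i => Equiv.ofFiberEquiv_map _ i⟩

/-- Iso when every automorphism is inner -/
lemma iso_iff (hin : ∀ φ : G ≃* G, ∃ k : G, ∀ x, φ x = k * x * k⁻¹) (A B : RSC G)
    (hr : A.r = B.r) :
    A.Iso B ↔ ∀ C, ∃ h : G, ∃ e : h * A.u C * h⁻¹ = B.u C,
        ∃ σ : Fin (A.r C) ≃ Fin (B.r C), ∀ i, B.chi C (σ i) = trChar h e (A.chi C i) := by
  constructor
  · rintro ⟨φ, hφ⟩ C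
    obtain ⟨k, hk⟩ := hin φ
    have hC : ConjClasses.map (φ : G →* G) C = C := by
      obtain ⟨a, rfl⟩ := ConjClasses.exists_rep C
      show ConjClasses.mk (φ a) = ConjClasses.mk a
      rw [ConjClasses.mk_eq_mk_iff_isConj, isConj_comm, isConj_iff]
      exact ⟨k, (hk a).symm⟩
    have h1 := hφ C
    rw [hC] at h1
    obtain ⟨h, e, hσ⟩ := h1
    have e' : (k * h) * A.u C * (k * h)⁻¹ = B.u C := by
      rw [← e, hk]; group
    refine ⟨k * h, e', ?_⟩
    by_cases h0 : A.r C = 0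
    · refine ⟨finCongr (by rw [hr]), fun i => ?_⟩
      rw [h0] at i; exact i.elim0
    · obtain ⟨σ, hσ⟩ := hσ h0
      refine ⟨σ, fun i => ?_⟩
      ext ⟨x, hx⟩
      have hm := conj_mem e' hx
      have hx2 : φ (h * ((k * h)⁻¹ * x * (k * h)) * h⁻¹) = x := by
        rw [hk]; group
      have := hσ i _ hm (by rw [hx2]; exact hx)
      rw [trChar_apply _ _ _ _ _ hm, ← this]
      congr 3; exact hx2.symm
  · intro H
    refine ⟨MulEquiv.refl G, fun C => ?_⟩
    have hC : ConjClasses.map ((MulEquiv.refl G : G ≃* G) : G →* G) C = C := by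
      obtain ⟨a, rfl⟩ := ConjClasses.exists_rep C
      rfl
    rw [hC]
    obtain ⟨h, e, σ, hσ⟩ := H C
    refine ⟨h, e, fun _ => ⟨σ, fun i x hx hx' => ?_⟩⟩
    rw [hσ]
    have hm : h⁻¹ * (h * x * h⁻¹) * h ∈ Subgroup.centralizer ({A.u C} : Set G) := by
      simpa [mul_assoc] using hx
    refine (trChar_apply h e _ (h * x * h⁻¹) hx' hm).trans ?_
    congr 2; group

lemma iso_iff_charMS (hin : ∀ φ : G ≃* G, ∃ k : G, ∀ x, φ x = k * x * k⁻¹) (A B : RSC G)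
    (hr : A.r = B.r) :
    A.Iso B ↔ ∀ C, charMS A C = charMS B C := by
  rw [iso_iff hin A B hr]
  refine forall_congr' fun C => ?_
  obtain ⟨k, hk⟩ := exists_conj_out B C
  constructor
  · rintro ⟨h, e, σ, hσ⟩
    rw [charMS_eq B C k hk, charMS_eq A C (k * h) (by rw [← hk, ← e]; group),
      ← Multiset.map_univ_val_equiv σ, Multiset.map_map]
    congr 1; ext1 i
    simp only [Function.comp]
    rw [hσ, trChar_trChar]
  · intro H
    obtain ⟨h, e⟩ := exists_conj_out A C
    have e2 : (k⁻¹ * h) * A.u C * (k⁻¹ * h)⁻¹ = B.u C := by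
      have : (k⁻¹ * h) * A.u C * (k⁻¹ * h)⁻¹ = k⁻¹ * (h * A.u C * h⁻¹) * k := by group
      rw [this, e, ← hk]; group
    refine ⟨k⁻¹ * h, e2, ?_⟩
    rw [charMS_eq B C k hk, charMS_eq A C h e] at H
    have key : ∀ (m m' : ℕ) (hm : m = m') {β : Type _} (f : Fin m → β) (g : Fin m' → β),
      Finset.univ.val.map f = Finset.univ.val.map g → ∃ e : Fin m ≃ Fin m', ∀ i, g (e i) = f i := by
      rintro m _ rfl β f g h
      exact exists_equiv_of_map_eq f g h
    obtain ⟨σ, hσ⟩ := key _ _ (by rw [hr]) _ _ H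
    refine ⟨σ, fun i => ?_⟩
    have e3 : k⁻¹ * cOut C * k⁻¹⁻¹ = B.u C := by rw [← hk]; group
    have h1 := congrArg (trChar k⁻¹ e3) (hσ i)
    rw [trChar_trChar, trChar_trChar, trChar_indep (k⁻¹ * k) 1 _ (by group), trChar_one] at h1
    exact h1

/-- the quotient is a product of symmetric powers -/
noncomputable def toSym (r : ConjClasses G → ℕ) (A : {A : RSC G // A.r = r}) (C : ConjClasses G) :
    Sym (Subgroup.centralizer ({cOut C} : Set G) →* ℂˣ) (r C) :=
  ⟨charMS A.1 C, by simp [charMS, A.2]⟩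

lemma toSym_surj (r : ConjClasses G → ℕ) : Function.Surjective (toSym (G := G) r) := by
  intro s
  have : ∀ C, ∃ f : Fin (r C) → (Subgroup.centralizer ({cOut C} : Set G) →* ℂˣ),
      Finset.univ.val.map f = (s C).1 := by
    intro C
    obtain ⟨m, hm⟩ := s C
    induction m using Quotient.inductionOn with
    | h l =>
    have hl : l.length = r C := hm
    show ∃ f : Fin (r C) → _, Finset.univ.val.map f = Multiset.ofList l
    rw [← hl]
    refine ⟨l.get, ?_⟩
    simp
  choose f hf using this
  refine ⟨⟨⟨r, fun C => cOut C, fun C => cOut_spec C, f⟩, rfl⟩, ?_⟩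
  ext1 C
  apply Subtype.ext
  refine Eq.trans ?_ (hf C)
  refine (charMS_eq _ C 1 (by simp)).trans ?_
  congr 1; ext1 i
  exact trChar_one _ _

lemma card_quot [Finite G] [Fintype (ConjClasses G)]
    (hin : ∀ φ : G ≃* G, ∃ k : G, ∀ x, φ x = k * x * k⁻¹)
    (r : ConjClasses G → ℕ)
    (hfin : ∀ C : ConjClasses G, Finite (Subgroup.centralizer ({cOut C} : Set G) →* ℂˣ)) :
    Nat.card (Quot fun A B : {A : RSC G // A.r = r} => RSC.Iso A.1 B.1) =
      ∏ C : ConjClasses G,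
        (Nat.card (Subgroup.centralizer ({cOut C} : Set G) →* ℂˣ) + r C - 1).choose (r C) := by
  classical
  have hiff : ∀ A B : {A : RSC G // A.r = r}, RSC.Iso A.1 B.1 ↔ toSym r A = toSym r B := by
    intro A B
    rw [iso_iff_charMS hin _ _ (A.2.trans B.2.symm), funext_iff]
    exact forall_congr' fun C => ⟨fun h => Subtype.ext h, fun h => congrArg Subtype.val h⟩
  let F : (Quot fun A B : {A : RSC G // A.r = r} => RSC.Iso A.1 B.1) →
      ∀ C, Sym (Subgroup.centralizer ({cOut C} : Set G) →* ℂˣ) (r C) :=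
    Quot.lift (toSym r) fun A B h => (hiff A B).1 h
  have hF : Function.Bijective F := by
    constructor
    · rintro ⟨A⟩ ⟨B⟩ h
      exact Quot.sound ((hiff A B).2 h)
    · intro s
      obtain ⟨A, hA⟩ := toSym_surj r s
      exact ⟨Quot.mk _ A, hA⟩
  rw [Nat.card_congr (Equiv.ofBijective F hF), Nat.card_pi]
  refine Finset.prod_congr rfl fun C _ => ?_
  have := Fintype.ofFinite (Subgroup.centralizer ({cOut C} : Set G) →* ℂˣ)
  rw [Nat.card_eq_fintype_card, Sym.card_sym_eq_choose, Nat.card_eq_fintype_card]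

end P4

/-- Let `G = S_n` with `n` a positive integer, `n ≠ 6`, and let `r` be a ramification
of `G`.  Then the number `N(G, r)` of isomorphism classes of ramification systems with
characters of `G` with ramification `r` equals
`∏_{C ∈ K_r(G)} C(γ_C + r_C − 1, r_C)`, where for a conjugacy class `C` of cycle type
`1^{λ_1} 2^{λ_2} ⋯ n^{λ_n}` one sets `γ_C = (∏_{i : λ_i = 1} i) · (∏_{i : λ_i ≥ 2} 2i)`. -/
theorem card_rsc_classes_symmetricGroup (n : ℕ) (hn : 0 < n) (h6 : n ≠ 6)
    (r : ConjClasses (Equiv.Perm (Fin n)) → ℕ)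
    (γ : ConjClasses (Equiv.Perm (Fin n)) → ℕ)
    (hγ : ∀ g : Equiv.Perm (Fin n),
      γ (ConjClasses.mk g) =
        (∏ i ∈ (Finset.range (n + 1)).filter fun i => lamOf g i = 1, i) *
        (∏ i ∈ (Finset.range (n + 1)).filter fun i => 2 ≤ lamOf g i, 2 * i)) :
    Nat.card
        (Quot fun A B : {A : RSC (Equiv.Perm (Fin n)) // A.r = r} =>
          RSC.Iso A.1 B.1) =
      ∏ C ∈ Finset.univ.filter
          fun C : ConjClasses (Equiv.Perm (Fin n)) => r C ≠ 0,
        Nat.choose (γ C + r C - 1) (r C) := by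
  have hG : ∀ C, Nat.card (Subgroup.centralizer ({cOut C} : Set (Equiv.Perm (Fin n))) →* ℂˣ) = γ C := by
    intro C
    rw [card_chars, ← hγ, cOut_spec]
  have hpos : ∀ C, γ C ≠ 0 := by
    intro C
    rw [← cOut_spec C, hγ]
    have h0 : lamOf (cOut C) 0 = 0 := by
      rw [lamOf, if_neg (by norm_num), Multiset.count_eq_zero]
      intro h
      have := Equiv.Perm.two_le_of_mem_cycleType h
      omega
    rw [mul_ne_zero_iff, Finset.prod_ne_zero_iff, Finset.prod_ne_zero_iff]
    constructor <;>
    · intro i hi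
      have h2 := (Finset.mem_filter.1 hi).2
      have : i ≠ 0 := by
        rintro rfl
        omega
      omega
  rw [card_quot (aut_inner h6) r
    (fun C => Nat.finite_of_card_ne_zero (by rw [hG]; exact hpos C)), Finset.prod_filter]
  refine Finset.prod_congr rfl fun C _ => ?_
  rw [hG]
  split_ifs with h
  · rfl
  · push Not at h
    rw [h, Nat.choose_zero_right]
end

section
/- Let G = S_n with n a positive integer, n ≠ 6, and let r be the ramification with r_C = 1 for every conjugacy class C of G. Then the number N(G, r) of isomorphism classes of ramification systems with characters of G with ramification r equals ∏_{C ∈ K(G)} γ_C, the product over all conjugacy classes C of G, where for C of cycle type 1^{λ_1} 2^{λ_2} ⋯ n^{λ_n}, γ_C := (∏_{i : λ_i = 1} i) · (∏_{i : λ_i ≥ 2} 2i). -/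
theorem aux_fact_ineq (k : ℕ) : 2 ^ (k + 3) * (k + 4).factorial < (2 * (k + 3)).factorial := by
  induction k with
  | zero => decide
  | succ k ih =>
    have e : 2 * (k + 1 + 3) = 2 * (k + 3) + 1 + 1 := by ring
    rw [e, Nat.factorial_succ (2 * (k + 3) + 1), Nat.factorial_succ (2 * (k+3)), show k + 1 + 4 = (k + 4) + 1 by ring,
      Nat.factorial_succ (k+4), show k + 1 + 3 = (k + 3) + 1 by ring, pow_succ]
    calc 2 ^ (k + 3) * 2 * ((k + 4 + 1) * (k + 4).factorial)
        = (2 * (k + 5)) * (2 ^ (k + 3) * (k + 4).factorial) := by ring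
      _ < (2 * (k + 5)) * (2 * (k + 3)).factorial := by gcongr
      _ ≤ ((2 * (k + 3) + 1 + 1) * (2 * (k + 3) + 1)) * (2 * (k + 3)).factorial := by
          apply Nat.mul_le_mul_right
          nlinarith
      _ = _ := by ring

theorem aux_fact_eq (n k : ℕ) (hk : 2 * (k + 1) ≤ n) (h6 : n ≠ 6)
    (h : (n - 2 * (k + 1)).factorial * 2 ^ (k + 1) * (k + 1).factorial = (n - 2).factorial * 2) :
    k = 0 := by
  obtain ⟨m, rfl⟩ := Nat.exists_eq_add_of_le' hk
  have e1 : m + 2 * (k + 1) - 2 * (k + 1) = m := by omega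
  have e2 : m + 2 * (k + 1) - 2 = m + 2 * k := by omega
  rw [e1, e2] at h
  have h' : m.factorial * (2 ^ k * (k + 1).factorial) = (m + 2 * k).factorial := by
    have : (m.factorial * (2 ^ k * (k + 1).factorial)) * 2 = (m + 2 * k).factorial * 2 := by
      rw [← h, pow_succ]; ring
    omega
  have mp := Nat.factorial_pos m
  match k, h' with
  | 0, _ => rfl
  | 1, h' =>
    exfalso
    have : m.factorial * 4 = m.factorial * ((m + 2) * (m + 1)) := by
      rw [show m + 2 * 1 = m + 1 + 1 by ring, Nat.factorial_succ (m + 1), Nat.factorial_succ m] at h'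
      simp [Nat.factorial] at h'
      nlinarith
    have := Nat.eq_of_mul_eq_mul_left mp this
    rcases m with _ | _ | m
    · omega
    · omega
    · nlinarith
  | 2, h' =>
    exfalso
    have : m.factorial * 24 = m.factorial * ((m + 4) * (m + 3) * (m + 2) * (m + 1)) := by
      rw [show m + 2 * 2 = m + 1 + 1 + 1 + 1 by ring, Nat.factorial_succ (m + 1 + 1 + 1),
        Nat.factorial_succ (m + 1 + 1), Nat.factorial_succ (m + 1), Nat.factorial_succ m] at h'
      simp [Nat.factorial] at h'
      rw [h']; ring
    have := Nat.eq_of_mul_eq_mul_left mp this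
    rcases m with _ | m
    · omega
    · have : 24 < (m + 1 + 4) * (m + 1 + 3) * (m + 1 + 2) * (m + 1 + 1) := by
        calc 24 < 5 * 4 * 3 * 2 := by norm_num
          _ ≤ _ := by gcongr <;> omega
      omega
  | k + 3, h' =>
    exfalso
    have h1 := aux_fact_ineq k
    have h2 := Nat.le_of_dvd (Nat.factorial_pos _)
      (Nat.factorial_mul_factorial_dvd_factorial_add m (2 * (k + 3)))
    have : m.factorial * (2 ^ (k + 3) * (k + 4).factorial)
      < m.factorial * (2 * (k + 3)).factorial := by gcongr
    rw [show k + 3 + 1 = k + 4 by ring] at h'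
    omega

open Equiv Equiv.Perm in
theorem aux_isSwap {α : Type*} [Fintype α] [DecidableEq α] (h6 : Fintype.card α ≠ 6)
    (σ τ : Perm α) (hτ : τ.IsSwap) (ho : orderOf σ = 2)
    (hc : Nat.card (Subgroup.centralizer ({σ} : Set (Perm α))) =
      Nat.card (Subgroup.centralizer ({τ} : Set (Perm α)))) : σ.IsSwap := by
  obtain ⟨k, hk⟩ := cycleType_prime_order (σ := σ) (by rw [ho]; exact Nat.prime_two)
  rw [ho] at hk
  have hτc : τ.cycleType = {2} := by
    obtain ⟨a, b, hab, rfl⟩ := hτ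
    rw [(isCycle_swap hab).cycleType, card_support_swap hab]
  rw [nat_card_centralizer, nat_card_centralizer, hk, hτc] at hc
  have hle := σ.sum_cycleType_le
  rw [hk] at hle
  simp [Multiset.toFinset_replicate, -Multiset.replicate_succ] at hc hle
  have := aux_fact_eq (Fintype.card α) k (by omega) h6
    (by rw [mul_comm 2 (k+1)]; exact hc)
  subst this
  rw [← card_support_eq_two, ← sum_cycleType, hk]; simp

open Equiv Equiv.Perm in
theorem aux_aut_swap {α : Type*} [Fintype α] [DecidableEq α] (h6 : Fintype.card α ≠ 6)
    (φ : Perm α ≃* Perm α) (τ : Perm α) (hτ : τ.IsSwap) : (φ τ).IsSwap := by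
  refine aux_isSwap h6 _ τ hτ ?_ ?_
  · rw [MulEquiv.orderOf_eq]; exact hτ.orderOf
  · refine Nat.card_congr (Equiv.subtypeEquiv φ.toEquiv fun x => ?_).symm
    rw [Subgroup.mem_centralizer_singleton_iff, Subgroup.mem_centralizer_singleton_iff]
    simp only [MulEquiv.toEquiv_eq_coe, EquivLike.coe_coe]
    rw [← map_mul, ← map_mul, φ.injective.eq_iff]

open Equiv Equiv.Perm in
theorem aux_swap_of_moves {α : Type*} [DecidableEq α] (τ : Perm α) (hτ : τ.IsSwap)
    (p : α) (hp : τ p ≠ p) : τ = swap p (τ p) := by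
  obtain ⟨a, b, hab, rfl⟩ := hτ
  rcases eq_or_ne p a with rfl | ha
  · simp
  rcases eq_or_ne p b with rfl | hb
  · simp [swap_comm]
  · exact absurd (swap_apply_of_ne_of_ne ha hb) hp

/-- automorphisms of `S_n`, `n ≠ 6`, are inner -/
theorem aux_aut_inner {α : Type*} [Fintype α] [DecidableEq α] [Nonempty α]
    (h6 : Fintype.card α ≠ 6) (φ : Equiv.Perm α ≃* Equiv.Perm α) :
    ∃ s : Equiv.Perm α, ∀ x, φ x = s * x * s⁻¹ := by
  classical
  obtain ⟨o⟩ := ‹Nonempty α›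
  set τ : α → Equiv.Perm α := fun i => φ (Equiv.swap o i) with hτ
  have hsw : ∀ i, i ≠ o → (τ i).IsSwap := fun i hi =>
    aux_aut_swap h6 φ _ ⟨o, i, hi.symm, rfl⟩
  have hinj : ∀ i j, τ i = τ j → i = j := by
    intro i j h
    have := φ.injective h
    have := congrArg (fun f => f o) this
    simpa using this
  have hmeet : ∀ i j, i ≠ o → j ≠ o → i ≠ j → ∃ p, τ i p ≠ p ∧ τ j p ≠ p := by
    intro i j hi hj hij
    by_contra hcon
    push Not at hcon
    have hd : (τ i).Disjoint (τ j) := by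
      intro x
      by_cases h : τ i x = x
      · exact Or.inl h
      · exact Or.inr (hcon x h)
    have hc := hd.commute.eq
    simp only [hτ] at hc
    rw [← map_mul, ← map_mul] at hc
    have := congrArg (fun f => f i) (φ.injective hc)
    simp [Equiv.swap_apply_of_ne_of_ne hi hij] at this
    exact hj this.symm
  have hpt : ∃ p, ∀ i, i ≠ o → τ i p ≠ p := by
    by_cases h1 : ∃ i, i ≠ o
    swap
    · push Not at h1
      exact ⟨o, fun i hi => absurd (h1 i) hi⟩
    obtain ⟨i, hi⟩ := h1
    by_cases h2 : ∃ j, j ≠ o ∧ j ≠ i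
    swap
    · push Not at h2
      obtain ⟨a, b, hab, he⟩ := hsw i hi
      refine ⟨a, fun j hj => ?_⟩
      rw [h2 j hj, he]; simpa using hab.symm
    obtain ⟨j, hj, hji⟩ := h2
    obtain ⟨p, hp1, hp2⟩ := hmeet i j hi hj hji.symm
    have e1 := aux_swap_of_moves _ (hsw i hi) p hp1
    have e2 := aux_swap_of_moves _ (hsw j hj) p hp2
    refine ⟨p, fun k hk hkp => ?_⟩
    have hki : k ≠ i := by rintro rfl; exact hp1 hkp
    have hkj : k ≠ j := by rintro rfl; exact hp2 hkp
    have hab : τ i p ≠ τ j p := by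
      intro h
      rw [h, ← e2] at e1
      exact hji (hinj _ _ e1).symm
    have ha : τ k (τ i p) ≠ τ i p := by
      obtain ⟨x, hx1, hx2⟩ := hmeet k i hk hi hki
      have : x = p ∨ x = τ i p := by
        by_contra hc
        push Not at hc
        apply hx2
        rw [e1]; exact Equiv.swap_apply_of_ne_of_ne hc.1 hc.2
      rcases this with rfl | h
      · exact absurd hkp hx1
      · rwa [← h]
    have hb : τ k (τ j p) ≠ τ j p := by
      obtain ⟨x, hx1, hx2⟩ := hmeet k j hk hj hkj
      have : x = p ∨ x = τ j p := by
        by_contra hc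
        push Not at hc
        apply hx2
        rw [e2]; exact Equiv.swap_apply_of_ne_of_ne hc.1 hc.2
      rcases this with rfl | h
      · exact absurd hkp hx1
      · rwa [← h]
    have e3 := aux_swap_of_moves _ (hsw k hk) _ ha
    have hval : τ k (τ i p) = τ j p := by
      by_contra hne
      apply hb
      rw [e3]
      exact Equiv.swap_apply_of_ne_of_ne hab.symm (Ne.symm hne)
    rw [hval] at e3
    have e4 : τ k = τ i * τ j * τ i := by
      rw [e3]
      generalize τ i p = a at *
      generalize τ j p = b at *
      rw [e1, e2, Equiv.swap_comm p a, Equiv.swap_comm a b]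
      have := Equiv.swap_mul_swap_mul_swap (x := b) (y := p) (z := a) hp2 hab.symm
      rw [Equiv.swap_comm p a, Equiv.swap_comm b p, Equiv.swap_comm a b] at this
      rw [this, Equiv.swap_comm]
    simp only [hτ] at e4
    rw [← map_mul, ← map_mul] at e4
    have := congrArg (fun f => f o) (φ.injective e4)
    simp [Equiv.swap_apply_of_ne_of_ne hi hji.symm] at this
    exact hk this
  obtain ⟨p, hp⟩ := hpt
  have hτo : τ o = 1 := by simp [hτ]; rfl
  have he : ∀ i, τ i = Equiv.swap p (τ i p) := by
    intro i
    by_cases hi : i = o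
    · rw [hi, hτo]; simp; rfl
    · exact aux_swap_of_moves _ (hsw i hi) p (hp i hi)
  have hfi : Function.Injective (fun i => τ i p) := by
    intro i j h
    apply hinj
    rw [he i, he j]
    exact congrArg _ h
  let s : Equiv.Perm α := Equiv.ofBijective _ (Finite.injective_iff_bijective.1 hfi)
  have hs : ∀ i, s i = τ i p := fun i => rfl
  have hso : s o = p := by rw [hs, hτo]; rfl
  have hsw0 : ∀ i, φ (Equiv.swap o i) = s * Equiv.swap o i * s⁻¹ := by
    intro i
    rw [← Equiv.swap_apply_apply, hso, hs]
    exact he i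
  refine ⟨s, fun x => ?_⟩
  induction x using Equiv.Perm.swap_induction_on with
  | one => simp
  | swap_mul f a b hab ih =>
    have key : φ (Equiv.swap a b) = s * Equiv.swap a b * s⁻¹ := by
      rcases eq_or_ne a o with rfl | ha
      · exact hsw0 b
      rcases eq_or_ne b o with rfl | hb
      · rw [Equiv.swap_comm]; exact hsw0 a
      have := Equiv.swap_mul_swap_mul_swap (x := a) (y := o) (z := b) ha hab
      rw [Equiv.swap_comm b a] at this
      rw [← this, Equiv.swap_comm a o, map_mul, map_mul, hsw0, hsw0]
      group
    rw [map_mul, ih, key]; group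

namespace OrbAux

set_option linter.unusedSectionVars false

open Equiv Equiv.Perm

variable {X : Type*} [Fintype X] [DecidableEq X]

/-- the set of cycles of `g`, fixed points included -/
abbrev Cyc (g : Perm X) : Type _ := Quotient (SameCycle.setoid g)

/-- the cycle of a point -/
def toCyc (g : Perm X) (x : X) : Cyc g := Quotient.mk (SameCycle.setoid g) x

/-- a chosen point in each cycle -/
noncomputable def rep {g : Perm X} (q : Cyc g) : X := Quotient.out q

theorem toCyc_rep {g : Perm X} (q : Cyc g) : toCyc g (rep q) = q := Quotient.out_eq q

theorem toCyc_eq_iff {g : Perm X} {x y : X} : toCyc g x = toCyc g y ↔ g.SameCycle x y := by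
  unfold toCyc
  exact Quotient.eq (r := SameCycle.setoid g)

theorem exists_pos (g : Perm X) (x : X) : ∃ k : ℤ, (g ^ k) (rep (toCyc g x)) = x := by
  have : g.SameCycle (rep (toCyc g x)) x := toCyc_eq_iff.1 (toCyc_rep _)
  exact this

/-- position of a point in its cycle -/
noncomputable def pos (g : Perm X) (x : X) : ℤ := (exists_pos g x).choose

theorem pos_spec (g : Perm X) (x : X) : (g ^ pos g x) (rep (toCyc g x)) = x :=
  (exists_pos g x).choose_spec

theorem toCyc_zpow {g : Perm X} (k : ℤ) (q : Cyc g) : toCyc g ((g ^ k) (rep q)) = q := by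
  conv_rhs => rw [← toCyc_rep q]
  rw [toCyc_eq_iff]
  exact SameCycle.rfl.zpow_left

/-- length of a cycle -/
noncomputable def len {g : Perm X} (q : Cyc g) : ℕ := Function.minimalPeriod (fun x => g • x) (rep q)

theorem zpow_rep_eq_self {g : Perm X} (q : Cyc g) (k : ℤ) :
    (g ^ k) (rep q) = rep q ↔ (len q : ℤ) ∣ k :=
  MulAction.zpow_smul_eq_iff_minimalPeriod_dvd (a := g) (b := rep q) (n := k)

theorem zpow_rep_eq {g : Perm X} (q : Cyc g) (k l : ℤ) :
    (g ^ k) (rep q) = (g ^ l) (rep q) ↔ (len q : ℤ) ∣ k - l := by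
  rw [← zpow_rep_eq_self, sub_eq_neg_add, zpow_add, zpow_neg, Perm.mul_apply, Perm.inv_eq_iff_eq]

theorem len_pos {g : Perm X} (q : Cyc g) : 0 < len q := by
  rcases Nat.eq_zero_or_pos (len q) with h | h
  · have := (zpow_rep_eq_self q (orderOf g)).1 (by simp [pow_orderOf_eq_one])
    rw [h] at this
    have h2 := orderOf_pos g
    simp only [Nat.cast_zero, zero_dvd_iff, Nat.cast_eq_zero] at this
    omega
  · exact h

/-- the centralizer -/
abbrev Cen (g : Perm X) := Subgroup.centralizer ({g} : Set (Perm X))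

theorem cen_comm {g : Perm X} (z : Cen g) (x : X) (k : ℤ) :
    z.1 ((g ^ k) x) = (g ^ k) (z.1 x) := by
  have h : Commute z.1 g := Subgroup.mem_centralizer_singleton_iff.1 z.2
  have := (h.zpow_right k).eq
  exact congrArg (fun f => f x) this

theorem mem_cen {g z : Perm X} (h : ∀ x, z (g x) = g (z x)) :
    z ∈ Cen g := by
  rw [Subgroup.mem_centralizer_singleton_iff]
  ext x; exact h x

theorem toCyc_cen {g : Perm X} (z : Cen g) (x : X) :
    toCyc g (z.1 (rep (toCyc g x))) = toCyc g (z.1 x) := by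
  conv_rhs => rw [← pos_spec g x, cen_comm]
  rw [toCyc_eq_iff]
  exact SameCycle.rfl.zpow_right

noncomputable instance (g : Perm X) : MulAction (Cen g) (Cyc g) where
  smul z q := toCyc g (z.1 (rep q))
  one_smul q := toCyc_rep q
  mul_smul z w q := by
    change toCyc g (z.1 (w.1 (rep q))) = toCyc g (z.1 (rep (toCyc g (w.1 (rep q)))))
    rw [toCyc_cen]

theorem smul_def' {g : Perm X} (z : Cen g) (q : Cyc g) : z • q = toCyc g (z.1 (rep q)) := rfl

theorem cen_rep {g : Perm X} (z : Cen g) (q : Cyc g) :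
    z.1 (rep q) = (g ^ pos g (z.1 (rep q))) (rep (z • q)) := by
  rw [smul_def', pos_spec]

theorem len_smul {g : Perm X} (z : Cen g) (q : Cyc g) : len (z • q) = len q := by
  have : ∀ k : ℤ, (len (z • q) : ℤ) ∣ k ↔ (len q : ℤ) ∣ k := by
    intro k
    rw [← zpow_rep_eq_self, ← zpow_rep_eq_self]
    rw [← z.1.injective.eq_iff (b := rep q), cen_comm, cen_rep z q, ← Perm.mul_apply,
      ← zpow_add, add_comm, zpow_add, Perm.mul_apply, (g ^ _).injective.eq_iff]
  apply Nat.dvd_antisymm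
  · exact_mod_cast (this (len q)).2 (dvd_refl _)
  · exact_mod_cast (this (len (z • q))).1 (dvd_refl _)

/-- cycles of given length -/
abbrev CycLen (g : Perm X) (i : ℕ) := {q : Cyc g // len q = i}

noncomputable instance (g : Perm X) (i : ℕ) : MulAction (Cen g) (CycLen g i) where
  smul z q := ⟨z • q.1, by rw [len_smul, q.2]⟩
  one_smul q := Subtype.ext (one_smul (Cen g) q.1)
  mul_smul z w q := Subtype.ext (mul_smul z w q.1)

theorem coe_smul' {g : Perm X} {i : ℕ} (z : Cen g) (q : CycLen g i) :
    (z • q).1 = z • q.1 := rfl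

noncomputable instance (g : Perm X) : Fintype (Cyc g) := Fintype.ofFinite _

noncomputable instance (g : Perm X) : DecidableEq (Cyc g) := Classical.decEq _

theorem zpow_len_eq {A : Type*} [CommGroup A] {g : Perm X} (q : Cyc g) (a : A)
    (ha : a ^ len q = 1) (k l : ℤ) (h : (g ^ k) (rep q) = (g ^ l) (rep q)) : a ^ k = a ^ l := by
  rw [zpow_rep_eq] at h
  obtain ⟨m, hm⟩ := h
  have : k = l + len q * m := by omega
  rw [this, zpow_add, zpow_mul, zpow_natCast, ha]; simp

theorem zpow_pos_eq {A : Type*} [CommGroup A] {g : Perm X} (q : Cyc g) (a : A)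
    (ha : a ^ len q = 1) (k : ℤ) (x : X) (h : x = (g ^ k) (rep q)) : a ^ pos g x = a ^ k := by
  apply zpow_len_eq q a ha
  have := pos_spec g x
  have e : toCyc g x = q := by rw [h, toCyc_zpow]
  rw [e] at this
  rw [this, h]

/-- the shift character -/
noncomputable def shiftHom {A : Type*} [CommGroup A] (g : Perm X) (a : ℕ → A)
    (ha : ∀ q : Cyc g, a (len q) ^ len q = 1) : Cen g →* A :=
  MonoidHom.mk' (fun z => ∏ q : Cyc g, a (len q) ^ pos g (z.1 (rep q))) (by
    intro z w
    have : ∏ q : Cyc g, a (len q) ^ pos g (z.1 (rep q)) =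
        ∏ q : Cyc g, a (len q) ^ pos g (z.1 (rep (w • q))) := by
      rw [← Equiv.prod_comp (MulAction.toPerm w)]
      refine Finset.prod_congr rfl fun q _ => ?_
      rw [MulAction.toPerm_apply, len_smul]
    rw [this, ← Finset.prod_mul_distrib]
    refine Finset.prod_congr rfl fun q _ => ?_
    rw [← zpow_add]
    rw [← len_smul (z * w) q]
    apply zpow_pos_eq _ _ (ha _)
    rw [zpow_add, mul_smul, ← zpow_add, add_comm, zpow_add, Perm.mul_apply, ← cen_rep z, ← cen_comm, ← cen_rep w]
    rfl)

/-- lifting permutations of the cycles -/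
noncomputable def liftFun {g : Perm X} (π : Perm (Cyc g)) (x : X) : X :=
  (g ^ pos g x) (rep (π (toCyc g x)))

theorem liftFun_apply {g : Perm X} (π : Perm (Cyc g)) (hπ : ∀ q, len (π q) = len q)
    (k : ℤ) (q : Cyc g) : liftFun π ((g ^ k) (rep q)) = (g ^ k) (rep (π q)) := by
  unfold liftFun
  rw [toCyc_zpow, zpow_rep_eq, hπ, ← zpow_rep_eq]
  have := pos_spec g ((g ^ k) (rep q))
  rwa [toCyc_zpow] at this

theorem liftFun_inv {g : Perm X} (π : Perm (Cyc g)) (hπ : ∀ q, len (π q) = len q)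
    (x : X) : liftFun π⁻¹ (liftFun π x) = x := by
  have h : ∀ q, len (π⁻¹ q) = len q := by
    intro q
    rw [← hπ]; simp
  rw [← pos_spec g x, liftFun_apply π hπ, liftFun_apply _ h]
  simp

theorem liftFun_inv' {g : Perm X} (π : Perm (Cyc g)) (hπ : ∀ q, len (π q) = len q)
    (x : X) : liftFun π (liftFun π⁻¹ x) = x := by
  have h : ∀ q, len (π⁻¹ q) = len q := by
    intro q
    rw [← hπ]; simp
  have := liftFun_inv π⁻¹ h x
  rwa [inv_inv] at this

theorem len_ofSubtype {g : Perm X} {i : ℕ} (π : Perm (CycLen g i)) (q : Cyc g) :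
    len (Perm.ofSubtype π q) = len q := by
  by_cases h : len q = i
  · rw [Perm.ofSubtype_apply_of_mem π h, h]
    exact (π ⟨q, h⟩).2
  · rw [Perm.ofSubtype_apply_of_not_mem π h]

/-- lift of permutations of the cycles of given length -/
noncomputable def liftPerm {g : Perm X} {i : ℕ} (π : Perm (CycLen g i)) : Perm X where
  toFun := liftFun (Perm.ofSubtype π)
  invFun := liftFun (Perm.ofSubtype π)⁻¹
  left_inv := liftFun_inv _ (len_ofSubtype π)
  right_inv := liftFun_inv' _ (len_ofSubtype π)

theorem liftPerm_apply {g : Perm X} {i : ℕ} (π : Perm (CycLen g i)) (k : ℤ) (q : Cyc g) :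
    liftPerm π ((g ^ k) (rep q)) = (g ^ k) (rep (Perm.ofSubtype π q)) :=
  liftFun_apply _ (len_ofSubtype π) k q

theorem liftPerm_mem {g : Perm X} {i : ℕ} (π : Perm (CycLen g i)) : liftPerm π ∈ Cen g := by
  apply mem_cen
  intro x
  have hy : ∀ (k : ℤ) y, g ((g ^ k) y) = (g ^ (k + 1)) y := by
    intro k y
    rw [add_comm, zpow_add, zpow_one]; rfl
  have key : ∀ (k : ℤ) (q : Cyc g),
      liftPerm π (g ((g ^ k) (rep q))) = g (liftPerm π ((g ^ k) (rep q))) := by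
    intro k q
    rw [hy, liftPerm_apply, liftPerm_apply, hy]
  have := key (pos g x) (toCyc g x)
  rwa [pos_spec] at this

theorem liftPerm_mul {g : Perm X} {i : ℕ} (π ρ : Perm (CycLen g i)) :
    liftPerm (π * ρ) = liftPerm π * liftPerm ρ := by
  ext x
  have key : ∀ (k : ℤ) (q : Cyc g), liftPerm (π * ρ) ((g ^ k) (rep q)) =
      liftPerm π (liftPerm ρ ((g ^ k) (rep q))) := by
    intro k q
    rw [liftPerm_apply, liftPerm_apply, liftPerm_apply, map_mul]; rfl
  have := key (pos g x) (toCyc g x)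
  rwa [pos_spec] at this

/-- lift of permutations of the cycles of given length -/
noncomputable def liftC (g : Perm X) (i : ℕ) : Perm (CycLen g i) →* Cen g :=
  MonoidHom.mk' (fun π => ⟨liftPerm π, liftPerm_mem π⟩)
    (fun π ρ => Subtype.ext (liftPerm_mul π ρ))

theorem lift_apply {g : Perm X} {i : ℕ} (π : Perm (CycLen g i)) (k : ℤ) (q : Cyc g) :
    (liftC g i π).1 ((g ^ k) (rep q)) = (g ^ k) (rep (Perm.ofSubtype π q)) :=
  liftFun_apply _ (len_ofSubtype π) k q

theorem lift_rep {g : Perm X} {i : ℕ} (π : Perm (CycLen g i)) (q : Cyc g) :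
    (liftC g i π).1 (rep q) = rep (Perm.ofSubtype π q) :=
  lift_apply π 0 q

/-- single cycles -/
noncomputable def cyc {g : Perm X} (q : Cyc g) : Cen g :=
  ⟨g.cycleOf (rep q), mem_cen (by
    intro x
    rw [cycleOf_apply, cycleOf_apply]
    simp only [sameCycle_apply_right]
    split_ifs <;> rfl)⟩

theorem cyc_zpow_same {g : Perm X} (q : Cyc g) (m k : ℤ) :
    (cyc q ^ m).1 ((g ^ k) (rep q)) = (g ^ (m + k)) (rep q) := by
  rw [Subgroup.coe_zpow]
  change (g.cycleOf (rep q) ^ m) _ = _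
  rw [← cycleOf_zpow_apply_self g, ← cycleOf_zpow_apply_self g, zpow_add]
  rfl

theorem cyc_ne {g : Perm X} {q r : Cyc g} (h : q ≠ r) (k : ℤ) :
    (cyc q).1 ((g ^ k) (rep r)) = (g ^ k) (rep r) := by
  change (g.cycleOf (rep q)) _ = _
  apply cycleOf_apply_of_not_sameCycle
  rw [← toCyc_eq_iff, toCyc_rep, toCyc_zpow]
  exact h

theorem cyc_zpow_ne {g : Perm X} {q r : Cyc g} (h : q ≠ r) (m k : ℤ) :
    (cyc q ^ m).1 ((g ^ k) (rep r)) = (g ^ k) (rep r) := by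
  rw [Subgroup.coe_zpow]
  exact zpow_apply_eq_self_of_apply_eq_self (cyc_ne h k) m

theorem ext_rep {g : Perm X} {z w : Cen g} (h : ∀ q : Cyc g, z.1 (rep q) = w.1 (rep q)) :
    z = w := by
  apply Subtype.ext
  ext x
  rw [← pos_spec g x, cen_comm, cen_comm, h]

theorem gen_mem {g : Perm X} (E : Subgroup (Cen g)) (h1 : ∀ q : Cyc g, cyc q ∈ E)
    (h2 : ∀ i (a b : CycLen g i), a ≠ b → liftC g i (swap a b) ∈ E) (z : Cen g) : z ∈ E := by
  induction hN : (Finset.univ.filter fun q : Cyc g => z.1 (rep q) ≠ rep q).card using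
    Nat.strong_induction_on generalizing z with
  | _ N ih =>
  subst hN
  by_cases hz : ∃ q : Cyc g, z.1 (rep q) ≠ rep q
  swap
  · push Not at hz
    have : z = 1 := ext_rep hz
    rw [this]; exact E.one_mem
  obtain ⟨q, hq⟩ := hz
  have h2' : ∀ i (a b : CycLen g i), liftC g i (swap a b) ∈ E := by
    intro i a b
    rcases eq_or_ne a b with rfl | h
    · rw [swap_self]
      change liftC g i 1 ∈ E
      rw [map_one]; exact E.one_mem
    · exact h2 i a b h
  set q' := z • q with hq'
  set k := pos g (z.1 (rep q)) with hk
  have hlen : len q' = len q := len_smul z q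
  let a : CycLen g (len q) := ⟨q, rfl⟩
  let b : CycLen g (len q) := ⟨q', hlen⟩
  set t := liftC g (len q) (swap a b) with ht
  have htE : t ∈ E := h2' _ _ _
  have hsub : ∀ r : Cyc g, Perm.ofSubtype (swap a b) r = swap q q' r := by
    intro r
    rw [Perm.ofSubtype_swap_eq]
  have hw : ∀ r : Cyc g, (t * cyc q' ^ (-k) * z).1 (rep r) ≠ rep r → z.1 (rep r) ≠ rep r := by
    intro r hr hzr
    apply hr
    have hrq : r ≠ q := by rintro rfl; exact hq hzr
    have hzr' : z • r = r := by rw [smul_def', hzr, toCyc_rep]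
    have hrq' : r ≠ q' := by
      intro h
      rw [hq', ← hzr'] at h
      exact hrq (MulAction.injective z h)
    have e1 := cyc_zpow_ne hrq'.symm (-k) 0
    simp only [zpow_zero, Perm.one_apply] at e1
    rw [Subgroup.coe_mul, Subgroup.coe_mul, Perm.mul_apply, Perm.mul_apply, hzr, e1, lift_rep, hsub,
      swap_apply_of_ne_of_ne hrq hrq']
  have hwq : (t * cyc q' ^ (-k) * z).1 (rep q) = rep q := by
    rw [Subgroup.coe_mul, Subgroup.coe_mul, Perm.mul_apply, Perm.mul_apply, cen_rep z q, ← hk, ← hq',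
      cyc_zpow_same]
    simp only [neg_add_cancel, zpow_zero, Perm.one_apply]
    rw [lift_rep, hsub, swap_apply_right]
  have hmem : t * cyc q' ^ (-k) * z ∈ E := by
    refine ih _ ?_ _ rfl
    apply Finset.card_lt_card
    rw [Finset.ssubset_iff_of_subset]
    · exact ⟨q, by simpa using hq, by simpa using hwq⟩
    · intro r
      simpa using fun h => hw r h
  exact (E.mul_mem_cancel_left (E.mul_mem htE (E.zpow_mem (h1 q') _))).1 hmem

theorem cyc_pow_len {g : Perm X} (q : Cyc g) : cyc q ^ len q = 1 := by
  rw [← zpow_natCast]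
  apply ext_rep
  intro r
  rcases eq_or_ne q r with rfl | h
  · have := cyc_zpow_same q (len q) 0
    simp only [zpow_zero, Perm.one_apply, add_zero] at this
    rw [this, (zpow_rep_eq_self q _).2 (dvd_refl _)]; rfl
  · have := cyc_zpow_ne h (len q) 0
    simp only [zpow_zero, Perm.one_apply] at this
    rw [this]; rfl

theorem cyc_rep_self {g : Perm X} (q : Cyc g) : (cyc q).1 (rep q) = (g ^ (1 : ℤ)) (rep q) := by
  have := cyc_zpow_same q 1 0
  simpa using this

theorem cyc_rep_ne {g : Perm X} {q r : Cyc g} (h : q ≠ r) : (cyc q).1 (rep r) = rep r :=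
  cyc_ne h 0

theorem cyc_conj {g : Perm X} {i : ℕ} (a b : CycLen g i) :
    liftC g i (swap a b) * cyc a.1 = cyc b.1 * liftC g i (swap a b) := by
  apply ext_rep
  intro r
  rw [Subgroup.coe_mul, Subgroup.coe_mul, Perm.mul_apply, Perm.mul_apply, lift_rep,
    Perm.ofSubtype_swap_eq]
  rcases eq_or_ne a.1 r with h | h
  · rw [← h, swap_apply_left, cyc_rep_self, cyc_rep_self, lift_apply, Perm.ofSubtype_swap_eq,
      swap_apply_left]
  · rw [cyc_rep_ne h, lift_rep, Perm.ofSubtype_swap_eq, cyc_rep_ne]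
    intro h'
    apply h
    have := congrArg (swap a.1 b.1) h'
    simpa using this

theorem smul_cyc {g : Perm X} (q r : Cyc g) : cyc q • r = r := by
  rw [smul_def']
  rcases eq_or_ne q r with rfl | h
  · rw [cyc_rep_self, toCyc_zpow]
  · rw [cyc_rep_ne h, toCyc_rep]

theorem smul_lift {g : Perm X} {i : ℕ} (π : Perm (CycLen g i)) (r : Cyc g) :
    liftC g i π • r = Perm.ofSubtype π r := by
  rw [smul_def', lift_rep, toCyc_rep]

/-- sign characters -/
noncomputable def sgn (g : Perm X) (i : ℕ) : Cen g →* ℤˣ :=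
  Perm.sign.comp (MulAction.toPermHom (Cen g) (CycLen g i))

theorem sgn_cyc {g : Perm X} (i : ℕ) (q : Cyc g) : sgn g i (cyc q) = 1 := by
  have : MulAction.toPermHom (Cen g) (CycLen g i) (cyc q) = 1 := by
    ext r : 1
    exact Subtype.ext (smul_cyc q r.1)
  unfold sgn
  rw [MonoidHom.comp_apply, this, map_one]

theorem sgn_lift {g : Perm X} (i : ℕ) (π : Perm (CycLen g i)) :
    sgn g i (liftC g i π) = Perm.sign π := by
  have : MulAction.toPermHom (Cen g) (CycLen g i) (liftC g i π) = π := by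
    ext r : 1
    apply Subtype.ext
    refine (smul_lift π r.1).trans ?_
    rw [Perm.ofSubtype_apply_coe]
  unfold sgn
  rw [MonoidHom.comp_apply, this]

theorem sgn_lift_ne {g : Perm X} {i j : ℕ} (hij : i ≠ j) (π : Perm (CycLen g j)) :
    sgn g i (liftC g j π) = 1 := by
  have : MulAction.toPermHom (Cen g) (CycLen g i) (liftC g j π) = 1 := by
    ext r : 1
    apply Subtype.ext
    refine (smul_lift π r.1).trans ?_
    apply Perm.ofSubtype_apply_of_not_mem
    rw [r.2]; exact hij
  unfold sgn
  rw [MonoidHom.comp_apply, this, map_one]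

theorem shift_cyc {A : Type*} [CommGroup A] (g : Perm X) (a : ℕ → A)
    (ha : ∀ q : Cyc g, a (len q) ^ len q = 1) (q : Cyc g) :
    shiftHom g a ha (cyc q) = a (len q) := by
  change ∏ r : Cyc g, a (len r) ^ pos g ((cyc q).1 (rep r)) = _
  rw [Finset.prod_eq_single q]
  · rw [zpow_pos_eq q _ (ha q) 1 _ (cyc_rep_self q), zpow_one]
  · intro r _ hr
    rw [zpow_pos_eq r _ (ha r) 0 _ (by rw [cyc_rep_ne hr.symm]; rfl), zpow_zero]
  · simp

theorem shift_lift {A : Type*} [CommGroup A] (g : Perm X) (a : ℕ → A)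
    (ha : ∀ q : Cyc g, a (len q) ^ len q = 1) (i : ℕ) (π : Perm (CycLen g i)) :
    shiftHom g a ha (liftC g i π) = 1 := by
  change ∏ r : Cyc g, a (len r) ^ pos g ((liftC g i π).1 (rep r)) = _
  apply Finset.prod_eq_one
  intro r _
  rw [← len_ofSubtype π r, zpow_pos_eq (Perm.ofSubtype π r) _ (ha _) 0 _ (by rw [lift_rep]; rfl),
    zpow_zero]

end OrbAux

namespace OrbAux

open Equiv Equiv.Perm

variable {X : Type*} [Fintype X] [DecidableEq X]

/-- extension by one of a family of roots of unity -/
noncomputable def extA (I : Finset ℕ) (a : ∀ i : I, rootsOfUnity (i : ℕ) ℂ) (i : ℕ) : ℂˣ :=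
  if h : i ∈ I then (a ⟨i, h⟩ : ℂˣ) else 1

theorem extA_pow (I : Finset ℕ) (a : ∀ i : I, rootsOfUnity (i : ℕ) ℂ) (i : ℕ) :
    extA I a i ^ i = 1 := by
  unfold extA
  split_ifs with h
  · exact (mem_rootsOfUnity _ _).1 (a ⟨i, h⟩).2
  · exact one_pow _

/-- the sign characters with complex values -/
noncomputable def sgnC (g : Perm X) (i : ℕ) : Cen g →* ℂˣ :=
  (Units.map (Int.castRingHom ℂ : ℤ →* ℂ)).comp (sgn g i)

/-- all the characters -/
noncomputable def chr (g : Perm X) (I J : Finset ℕ)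
    (d : (∀ i : I, rootsOfUnity (i : ℕ) ℂ) × (J → Bool)) : Cen g →* ℂˣ :=
  shiftHom g (extA I d.1) (fun _ => extA_pow I d.1 _) *
    ∏ j : J, if d.2 j then sgnC g j else 1

theorem chr_cyc (g : Perm X) (I J : Finset ℕ)
    (d : (∀ i : I, rootsOfUnity (i : ℕ) ℂ) × (J → Bool)) (q : Cyc g) :
    chr g I J d (cyc q) = extA I d.1 (len q) := by
  unfold chr
  rw [MonoidHom.mul_apply, shift_cyc, MonoidHom.finsetProd_apply, Finset.prod_eq_one, mul_one]
  intro j _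
  split_ifs
  · simp [sgnC, sgn_cyc]
  · rfl

theorem chr_lift (g : Perm X) (I J : Finset ℕ)
    (d : (∀ i : I, rootsOfUnity (i : ℕ) ℂ) × (J → Bool)) (j : J) (a b : CycLen g j)
    (hab : a ≠ b) :
    chr g I J d (liftC g j (swap a b)) = if d.2 j then -1 else 1 := by
  unfold chr
  rw [MonoidHom.mul_apply, shift_lift, one_mul, MonoidHom.finsetProd_apply,
    Finset.prod_eq_single j]
  · split_ifs
    · simp [sgnC, sgn_lift, sign_swap hab]
    · rfl
  · intro i _ hij
    split_ifs
    · have : (i : ℕ) ≠ j := fun h => hij (Subtype.ext h)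
      simp [sgnC, sgn_lift_ne this]
    · rfl
  · simp

theorem aux_sq {u : ℂˣ} (h : u ^ 2 = 1) : u = 1 ∨ u = -1 := by
  have h1 : (u : ℂ) ^ 2 = 1 := by
    rw [← Units.val_pow_eq_pow_val, h, Units.val_one]
  rcases (show (u : ℂ) = 1 ∨ (u : ℂ) = -1 by simpa using h1) with h | h
  · exact Or.inl (Units.ext h)
  · exact Or.inr (Units.ext (by rw [h]; rfl))

theorem chr_bijective (g : Perm X) (I J : Finset ℕ)
    (hI : ∀ i, i ∈ I ↔ Nonempty (CycLen g i)) (hJ : ∀ i, i ∈ J ↔ Nontrivial (CycLen g i)) :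
    Function.Bijective (chr g I J) := by
  have hneg : (-1 : ℂˣ) ≠ 1 := by
    intro h
    have := congrArg (fun u : ℂˣ => (u : ℂ)) h
    norm_num at this
  constructor
  · rintro ⟨a, b⟩ ⟨a', b'⟩ h
    refine Prod.ext (funext fun i => ?_) (funext fun j => ?_)
    · obtain ⟨q, hq⟩ := (hI i).1 i.2
      have h1 := congrArg (fun f => f (cyc q)) h
      simp only [chr_cyc, hq] at h1
      unfold extA at h1
      simp only [i.2, dif_pos] at h1
      exact Subtype.ext h1
    · obtain ⟨q, q', hq⟩ := (hJ j).1 j.2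
      have h1 := congrArg (fun f => f (liftC g j (swap q q'))) h
      simp only [chr_lift _ _ _ _ _ _ _ hq] at h1
      change b j = b' j
      cases hb : b j <;> cases hb' : b' j <;> simp [hb, hb', hneg, hneg.symm] at h1 ⊢
  · intro χ
    have ha : ∀ i : I, ∃ a : rootsOfUnity (i : ℕ) ℂ, ∀ q : CycLen g i, χ (cyc q.1) = a := by
      intro i
      obtain ⟨q⟩ := (hI i).1 i.2
      refine ⟨⟨χ (cyc q.1), ?_⟩, fun r => ?_⟩
      · rw [mem_rootsOfUnity, ← map_pow]
        have := cyc_pow_len q.1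
        rw [q.2] at this
        rw [this, map_one]
      · have := congrArg χ (cyc_conj q r)
        rw [map_mul, map_mul, mul_comm] at this
        exact (mul_right_cancel this).symm
    have hb : ∀ j : J, ∃ b : Bool, ∀ q q' : CycLen g j, q ≠ q' →
        χ (liftC g j (swap q q')) = if b then -1 else 1 := by
      intro j
      obtain ⟨q, q', hq⟩ := (hJ j).1 j.2
      have hconj : ∀ r r' : CycLen g j, r ≠ r' →
          χ (liftC g j (swap r r')) = χ (liftC g j (swap q q')) := by
        intro r r' hr
        have h1 : IsConj (swap r r') (swap q q') := isConj_swap hr hq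
        have h2 := (χ.comp (liftC g j)).map_isConj h1
        exact isConj_iff_eq.1 h2
      have hsq : (χ (liftC g j (swap q q'))) ^ 2 = 1 := by
        rw [← map_pow, ← map_pow, pow_two, swap_mul_self, map_one, map_one]
      rcases aux_sq hsq with h | h
      · exact ⟨false, fun r r' hr => by rw [hconj r r' hr, h]; rfl⟩
      · exact ⟨true, fun r r' hr => by rw [hconj r r' hr, h]; rfl⟩
    choose a ha using ha
    choose b hb using hb
    refine ⟨(a, b), ?_⟩
    ext z : 1
    refine gen_mem (MonoidHom.eqLocus (chr g I J (a, b)) χ) ?_ ?_ z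
    · intro q
      change _ = _
      rw [chr_cyc]
      have hmem : len q ∈ I := (hI _).2 ⟨⟨q, rfl⟩⟩
      unfold extA
      rw [dif_pos hmem]
      exact (ha ⟨len q, hmem⟩ ⟨q, rfl⟩).symm
    · intro i r r' hr
      change _ = _
      have hmem : i ∈ J := (hJ _).2 ⟨r, r', hr⟩
      rw [chr_lift g I J (a, b) ⟨i, hmem⟩ r r' hr]
      exact (hb ⟨i, hmem⟩ r r' hr).symm

theorem card_chars (g : Perm X) (I J : Finset ℕ)
    (hI : ∀ i, i ∈ I ↔ Nonempty (CycLen g i)) (hJ : ∀ i, i ∈ J ↔ Nontrivial (CycLen g i)) :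
    Nat.card (Cen g →* ℂˣ) = (∏ i ∈ I, i) * ∏ _i ∈ J, 2 := by
  rw [← Nat.card_congr (Equiv.ofBijective _ (chr_bijective g I J hI hJ)), Nat.card_prod,
    Nat.card_pi, Nat.card_pi]
  congr 1
  · rw [← Finset.prod_coe_sort I]
    refine Finset.prod_congr rfl fun i _ => ?_
    obtain ⟨q, hq⟩ := (hI i).1 i.2
    have : NeZero (i : ℕ) := ⟨by rw [← hq]; exact (len_pos q).ne'⟩
    rw [Complex.card_rootsOfUnity]
  · rw [← Finset.prod_coe_sort J]
    simp

theorem len_eq_orderOf {g : Perm X} (q : Cyc g) : len q = orderOf (g.cycleOf (rep q)) := by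
  apply Nat.dvd_antisymm
  · rw [← Int.natCast_dvd_natCast, ← zpow_rep_eq_self, ← cycleOf_zpow_apply_self, zpow_natCast,
      pow_orderOf_eq_one]; rfl
  · apply orderOf_dvd_of_pow_eq_one
    exact congrArg Subtype.val (cyc_pow_len q)

theorem len_eq_one {g : Perm X} (q : Cyc g) : len q = 1 ↔ g (rep q) = rep q := by
  rw [len_eq_orderOf, orderOf_eq_one_iff, cycleOf_eq_one_iff]

theorem card_cycLen_one (g : Perm X) :
    Nat.card (CycLen g 1) = (Finset.univ.filter fun x : X => g x = x).card := by
  rw [← Fintype.card_subtype, ← Nat.card_eq_fintype_card]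
  refine Nat.card_congr (Equiv.ofBijective
    (fun q => ⟨rep q.1, (len_eq_one q.1).1 q.2⟩) ⟨?_, ?_⟩)
  · intro q r h
    apply Subtype.ext
    have := congrArg (fun x => toCyc g x.1) h
    simpa only [toCyc_rep] using this
  · rintro ⟨x, hx⟩
    have hrep : rep (toCyc g x) = x := by
      have h := toCyc_eq_iff.1 (toCyc_rep (toCyc g x))
      exact (h.symm.eq_of_left hx).symm
    refine ⟨⟨toCyc g x, ?_⟩, ?_⟩
    · rw [len_eq_one, hrep, hx]
    · exact Subtype.ext hrep

theorem card_cycLen_ne_one (g : Perm X) (i : ℕ) (hi : i ≠ 1) :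
    Nat.card (CycLen g i) = Multiset.count i g.cycleType := by
  have hcyc : ∀ q : Cyc g, len q = i → g (rep q) ≠ rep q := by
    intro q hq h
    rw [← len_eq_one, hq] at h
    exact hi h
  have e : Multiset.count i g.cycleType =
      (g.cycleFactorsFinset.filter fun c => c.support.card = i).card := by
    rw [cycleType_def, Multiset.count_map]
    rw [Finset.card_def, Finset.filter_val]
    congr 1
    apply Multiset.filter_congr
    intro c _
    simp [eq_comm]
  rw [e, ← Fintype.card_coe, ← Nat.card_eq_fintype_card]
  refine Nat.card_congr (Equiv.ofBijective
    (fun q => ⟨g.cycleOf (rep q.1), ?_⟩) ⟨?_, ?_⟩)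
  · rw [Finset.mem_filter, cycleOf_mem_cycleFactorsFinset_iff, mem_support,
      ← (isCycle_cycleOf g (hcyc _ q.2)).orderOf, ← len_eq_orderOf]
    exact ⟨hcyc _ q.2, q.2⟩
  · intro q r h
    apply Subtype.ext
    have h := congrArg Subtype.val h
    have := (sameCycle_iff_cycleOf_eq_of_mem_support (mem_support.2 (hcyc _ q.2))
      (mem_support.2 (hcyc _ r.2))).2 h
    rw [← toCyc_eq_iff, toCyc_rep, toCyc_rep] at this
    exact this
  · rintro ⟨c, hc⟩
    rw [Finset.mem_filter] at hc
    have hcc := (mem_cycleFactorsFinset_iff.1 hc.1).1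
    obtain ⟨x, hx⟩ := hcc.nonempty_support
    have h1 : c = g.cycleOf x := cycle_is_cycleOf hx hc.1
    have h2 : g.cycleOf (rep (toCyc g x)) = c := by
      rw [h1]
      exact (toCyc_eq_iff.1 (toCyc_rep (toCyc g x))).cycleOf_eq
    refine ⟨⟨toCyc g x, ?_⟩, Subtype.ext h2⟩
    rw [len_eq_orderOf, h2, hcc.orderOf, hc.2]

theorem card_cycLen {n : ℕ} (g : Perm (Fin n)) (i : ℕ) :
    Nat.card (CycLen g i) = lamOf g i := by
  unfold lamOf
  split_ifs with h
  · subst h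
    exact card_cycLen_one g
  · exact card_cycLen_ne_one g i h

theorem lamOf_pos_le {n : ℕ} (g : Perm (Fin n)) (i : ℕ) (h : 1 ≤ lamOf g i) : i ≤ n := by
  rw [← card_cycLen] at h
  have : Nonempty (CycLen g i) := (Nat.card_pos_iff.1 h).1
  obtain ⟨q, hq⟩ := this
  rw [← hq]
  have h1 : len q ≤ Fintype.card (Fin n) := by
    rw [len_eq_orderOf]
    by_cases hx : g (rep q) = rep q
    · rw [(cycleOf_eq_one_iff g).2 hx, orderOf_one]
      exact Fintype.card_pos_iff.2 ⟨rep q⟩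
    · rw [(isCycle_cycleOf g hx).orderOf]
      exact Finset.card_le_univ _
  simpa using h1

theorem card_chars_perm {n : ℕ} (g : Perm (Fin n)) :
    Nat.card (Subgroup.centralizer ({g} : Set (Perm (Fin n))) →* ℂˣ) =
      (∏ i ∈ (Finset.range (n + 1)).filter fun i => lamOf g i = 1, i) *
        (∏ i ∈ (Finset.range (n + 1)).filter fun i => 2 ≤ lamOf g i, 2 * i) := by
  rw [card_chars g ((Finset.range (n + 1)).filter fun i => 1 ≤ lamOf g i)
    ((Finset.range (n + 1)).filter fun i => 2 ≤ lamOf g i)]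
  · rw [Finset.prod_mul_distrib, mul_left_comm, mul_comm (∏ i ∈ _, i)]
    congr 1
    rw [← Finset.prod_union]
    · apply Finset.prod_congr _ fun _ _ => rfl
      ext i
      simp only [Finset.mem_filter, Finset.mem_union]
      have : 1 ≤ lamOf g i ↔ lamOf g i = 1 ∨ 2 ≤ lamOf g i := by omega
      tauto
    · rw [Finset.disjoint_left]
      intro i
      simp only [Finset.mem_filter]
      omega
  · intro i
    rw [Finset.mem_filter, Finset.mem_range]
    constructor
    · rintro ⟨_, h⟩
      rw [← card_cycLen] at h
      exact (Nat.card_pos_iff.1 h).1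
    · intro h
      have h1 : 1 ≤ lamOf g i := by
        rw [← card_cycLen]; exact Nat.card_pos
      exact ⟨Nat.lt_succ_of_le (lamOf_pos_le g i h1), h1⟩
  · intro i
    rw [Finset.mem_filter, Finset.mem_range]
    have hiff : Nontrivial (CycLen g i) ↔ 2 ≤ lamOf g i := by
      rw [← card_cycLen]
      exact Finite.one_lt_card_iff_nontrivial.symm
    rw [hiff]
    constructor
    · exact fun h => h.2
    · intro h
      exact ⟨Nat.lt_succ_of_le (lamOf_pos_le g i (by omega)), h⟩

end OrbAux

namespace RSCAux

variable {G : Type*} [Group G]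

/-- ramification systems with all multiplicities one -/
abbrev R1 (G : Type*) [Group G] := {A : RSC G // A.r = fun _ => 1}

/-- the character attached to a class -/
def ch (A : R1 G) (C : ConjClasses G) :
    Subgroup.centralizer ({A.1.u C} : Set G) →* ℂˣ :=
  A.1.chi C ⟨0, by rw [A.2]; exact Nat.one_pos⟩

theorem ch_eq (A : R1 G) (C : ConjClasses G) (i : Fin (A.1.r C)) : A.1.chi C i = ch A C := by
  unfold ch
  congr 1
  apply Fin.ext
  have h := i.2
  have h2 : A.1.r C = 1 := by rw [A.2]
  change i.1 = 0
  omega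

theorem mem_conj {h u v x : G} (hh : h * u * h⁻¹ = v)
    (hx : x ∈ Subgroup.centralizer ({u} : Set G)) :
    h * x * h⁻¹ ∈ Subgroup.centralizer ({v} : Set G) := by
  rw [Subgroup.mem_centralizer_singleton_iff] at hx ⊢
  rw [← hh]
  calc h * x * h⁻¹ * (h * u * h⁻¹) = h * (x * u) * h⁻¹ := by group
    _ = h * (u * x) * h⁻¹ := by rw [hx]
    _ = _ := by group

theorem inv_conj {h u v : G} (hh : h * u * h⁻¹ = v) : h⁻¹ * v * h⁻¹⁻¹ = u := by
  rw [← hh]; group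

/-- conjugation between centralizers -/
def conjHom {u v : G} (h : G) (hh : h * u * h⁻¹ = v) :
    Subgroup.centralizer ({u} : Set G) →* Subgroup.centralizer ({v} : Set G) :=
  MonoidHom.mk' (fun x => ⟨h * x.1 * h⁻¹, mem_conj hh x.2⟩) (by
    intro x y
    apply Subtype.ext
    change h * (x.1 * y.1) * h⁻¹ = h * x.1 * h⁻¹ * (h * y.1 * h⁻¹)
    group)

/-- simplified isomorphism relation -/
def Rel (A B : R1 G) : Prop :=
  ∀ C : ConjClasses G, ∃ (k : G) (hk : k * A.1.u C * k⁻¹ = B.1.u C),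
    (ch B C).comp (conjHom k hk) = ch A C

theorem map_inner (φ : G ≃* G) (s : G) (hs : ∀ x, φ x = s * x * s⁻¹) (C : ConjClasses G) :
    ConjClasses.map (φ : G →* G) C = C := by
  obtain ⟨a, rfl⟩ := C.exists_rep
  change ConjClasses.mk (φ a) = ConjClasses.mk a
  rw [ConjClasses.mk_eq_mk_iff_isConj, isConj_comm, isConj_iff]
  exact ⟨s, (hs a).symm⟩

theorem iso_iff (hG : ∀ φ : G ≃* G, ∃ s : G, ∀ x, φ x = s * x * s⁻¹) (A B : R1 G) :
    RSC.Iso A.1 B.1 ↔ Rel A B := by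
  constructor
  · rintro ⟨φ, hφ⟩ C
    obtain ⟨s, hs⟩ := hG φ
    obtain ⟨h, h1, h2⟩ := hφ C
    have hC := map_inner φ s hs C
    generalize ConjClasses.map (φ : G →* G) C = D at *
    subst hC
    have hr : A.1.r D ≠ 0 := by rw [A.2]; exact one_ne_zero
    obtain ⟨e, he⟩ := h2 hr
    have hk : ∀ x, φ (h * x * h⁻¹) = (s * h) * x * (s * h)⁻¹ := by
      intro x; rw [hs]; group
    refine ⟨s * h, by rw [← hk, h1], ?_⟩
    ext x : 1
    have hx' : φ (h * x.1 * h⁻¹) ∈ Subgroup.centralizer ({B.1.u D} : Set G) := by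
      rw [hk]; exact mem_conj (by rw [← hk, h1]) x.2
    have := he ⟨0, Nat.pos_of_ne_zero hr⟩ x.1 x.2 hx'
    rw [ch_eq, ch_eq] at this
    rw [← this]
    change ch B D _ = _
    congr 1
    exact Subtype.ext (hk x.1).symm
  · intro h
    refine ⟨MulEquiv.refl G, fun C => ?_⟩
    obtain ⟨k, hk, hk'⟩ := h C
    have hC := map_inner (MulEquiv.refl G) 1 (by simp) C
    generalize ConjClasses.map ((MulEquiv.refl G : G ≃* G) : G →* G) C = D at *
    subst hC
    refine ⟨k, hk, fun _ => ⟨finCongr (by rw [A.2, B.2]), fun i x hx hx' => ?_⟩⟩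
    rw [ch_eq, ch_eq, ← hk']
    rfl

/-- a fixed representative -/
noncomputable def out (C : ConjClasses G) : G := C.exists_rep.choose

theorem mk_out (C : ConjClasses G) : ConjClasses.mk (out C) = C := C.exists_rep.choose_spec

theorem exists_conj (A : R1 G) (C : ConjClasses G) : ∃ h, h * out C * h⁻¹ = A.1.u C := by
  rw [← isConj_iff, ← ConjClasses.mk_eq_mk_iff_isConj, mk_out, A.1.hu]

/-- the invariant -/
noncomputable def inv (A : R1 G) (C : ConjClasses G) :
    Subgroup.centralizer ({out C} : Set G) →* ℂˣ :=
  (ch A C).comp (conjHom _ (exists_conj A C).choose_spec)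

theorem inv_eq (A : R1 G) (C : ConjClasses G) (h : G) (hh : h * out C * h⁻¹ = A.1.u C) :
    inv A C = (ch A C).comp (conjHom h hh) := by
  unfold inv
  have hk := (exists_conj A C).choose_spec
  set k := (exists_conj A C).choose
  ext x : 1
  have hw : h * k⁻¹ ∈ Subgroup.centralizer ({A.1.u C} : Set G) := by
    rw [Subgroup.mem_centralizer_singleton_iff]
    nth_rewrite 1 [← hk]
    rw [← hh]
    group
  let w : Subgroup.centralizer ({A.1.u C} : Set G) := ⟨h * k⁻¹, hw⟩
  have : conjHom h hh x = w * conjHom k hk x * w⁻¹ := by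
    apply Subtype.ext
    change h * x.1 * h⁻¹ = (h * k⁻¹) * (k * x.1 * k⁻¹) * (h * k⁻¹)⁻¹
    group
  rw [MonoidHom.comp_apply, MonoidHom.comp_apply, this, map_mul, map_mul, map_inv,
    mul_comm (ch A C w), mul_inv_cancel_right]

theorem rel_iff (A B : R1 G) : Rel A B ↔ inv A = inv B := by
  constructor
  · intro h
    funext C
    obtain ⟨k, hk, hk'⟩ := h C
    obtain ⟨a, ha⟩ := exists_conj A C
    have hb : (k * a) * out C * (k * a)⁻¹ = B.1.u C := by
      rw [← hk, ← ha]; group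
    rw [inv_eq A C a ha, inv_eq B C (k * a) hb, ← hk']
    ext x : 1
    change ch B C _ = ch B C _
    congr 1
    apply Subtype.ext
    change k * (a * x.1 * a⁻¹) * k⁻¹ = (k * a) * x.1 * (k * a)⁻¹
    group
  · intro h C
    obtain ⟨a, ha⟩ := exists_conj A C
    obtain ⟨b, hb⟩ := exists_conj B C
    have hk : (b * a⁻¹) * A.1.u C * (b * a⁻¹)⁻¹ = B.1.u C := by
      rw [← hb, ← ha]; group
    refine ⟨b * a⁻¹, hk, ?_⟩
    have h1 := congrFun h C
    rw [inv_eq A C a ha, inv_eq B C b hb] at h1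
    ext x : 1
    have h2 := congrArg (fun f => f (conjHom a⁻¹ (inv_conj ha) x)) h1
    simp only [MonoidHom.comp_apply] at h2
    have e1 : conjHom a ha (conjHom a⁻¹ (inv_conj ha) x) = x := by
      apply Subtype.ext
      change a * (a⁻¹ * x.1 * a⁻¹⁻¹) * a⁻¹ = x.1
      group
    have e2 : conjHom b hb (conjHom a⁻¹ (inv_conj ha) x) = conjHom (b * a⁻¹) hk x := by
      apply Subtype.ext
      change b * (a⁻¹ * x.1 * a⁻¹⁻¹) * b⁻¹ = (b * a⁻¹) * x.1 * (b * a⁻¹)⁻¹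
      group
    rw [e1, e2] at h2
    exact h2.symm

theorem inv_surjective : Function.Surjective
    (inv : R1 G → ∀ C : ConjClasses G, Subgroup.centralizer ({out C} : Set G) →* ℂˣ) := by
  intro f
  refine ⟨⟨⟨fun _ => 1, out, mk_out, fun C _ => f C⟩, rfl⟩, ?_⟩
  funext C
  rw [inv_eq _ C 1 (by simp)]
  ext x : 1
  change f C _ = f C x
  congr 1
  apply Subtype.ext
  change 1 * x.1 * 1⁻¹ = x.1
  group

theorem card_quot (hG : ∀ φ : G ≃* G, ∃ s : G, ∀ x, φ x = s * x * s⁻¹) :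
    Nat.card (Quot fun A B : R1 G => RSC.Iso A.1 B.1) =
      Nat.card (∀ C : ConjClasses G, Subgroup.centralizer ({out C} : Set G) →* ℂˣ) := by
  refine Nat.card_congr (Equiv.ofBijective
    (Quot.lift inv fun A B h => (rel_iff A B).1 ((iso_iff hG A B).1 h)) ⟨?_, ?_⟩)
  · intro x y
    induction x using Quot.ind with | _ A =>
    induction y using Quot.ind with | _ B =>
    intro h
    exact Quot.sound ((iso_iff hG A B).2 ((rel_iff A B).2 h))
  · intro f
    obtain ⟨A, hA⟩ := inv_surjective f
    exact ⟨Quot.mk _ A, hA⟩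

end RSCAux

/-- Let `G = S_n` with `n` a positive integer, `n ≠ 6`, and let `r` be the ramification
with `r_C = 1` for every conjugacy class `C`.  Then the number `N(G, r)` of isomorphism
classes of ramification systems with characters of `G` with ramification `r` equals
`∏_{C ∈ K(G)} γ_C`, the product over all conjugacy classes of `G`, where for a class
`C` of cycle type `1^{λ_1} 2^{λ_2} ⋯ n^{λ_n}` one sets
`γ_C = (∏_{i : λ_i = 1} i) · (∏_{i : λ_i ≥ 2} 2i)`. -/
theorem card_rsc_classes_ramification_one (n : ℕ) (hn : 0 < n) (h6 : n ≠ 6)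
    (γ : ConjClasses (Equiv.Perm (Fin n)) → ℕ)
    (hγ : ∀ g : Equiv.Perm (Fin n),
      γ (ConjClasses.mk g) =
        (∏ i ∈ (Finset.range (n + 1)).filter fun i => lamOf g i = 1, i) *
        (∏ i ∈ (Finset.range (n + 1)).filter fun i => 2 ≤ lamOf g i, 2 * i)) :
    Nat.card
        (Quot fun A B : {A : RSC (Equiv.Perm (Fin n)) //
            A.r = fun _ => 1} => RSC.Iso A.1 B.1) =
      ∏ C : ConjClasses (Equiv.Perm (Fin n)), γ C := by
  have : Nonempty (Fin n) := ⟨⟨0, hn⟩⟩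
  refine (RSCAux.card_quot fun φ => aux_aut_inner (by simpa using h6) φ).trans ?_
  rw [Nat.card_pi]
  refine Finset.prod_congr rfl fun C _ => ?_
  rw [OrbAux.card_chars_perm, ← hγ, RSCAux.mk_out]
end

section
/- Let G = S_n with n a positive integer, n ≠ 6, let r be a ramification of G and u a fixed map from conjugacy classes to G with u(C) ∈ C. Then RSC(G, r, χ⃗, u) and RSC(G, r, χ⃗', u) are isomorphic if and only if for every C ∈ K_r(G) the multiset {χ_C^{(i)} : 1 ≤ i ≤ r_C} equals the multiset {χ'_C^{(i)} : 1 ≤ i ≤ r_C} (i.e., the two RSCs have the same type: for every character ξ of Z_{u(C)}, the number of indices i with χ_C^{(i)} = ξ equals the number of indices i with χ'_C^{(i)} = ξ). -/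
namespace RSCAux
open Equiv

theorem aux_four : ∀ t g : Perm (Fin 4), (∀ x, t (t x) = x) → (∀ x, t x ≠ x) →
    t * (g * t * g⁻¹) = (g * t * g⁻¹) * t := by
  decide +kernel

theorem aux_conj_apply {α : Type*} (g t : Perm α) {x y z w : α} (h1 : g x = y) (h2 : t x = z)
    (h3 : g z = w) : (g * t * g⁻¹) y = w := by
  subst h1 h2 h3
  simp

theorem aux_five {α : Type*} [DecidableEq α] (a b c d e : α) (h : [a, b, c, d, e].Nodup) :
    ∃ g : Perm α, g a = b ∧ g b = c ∧ g c = d ∧ g d = e ∧ g e = a := by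
  refine ⟨swap a b * swap b c * swap c d * swap d e, ?_⟩
  simp only [List.nodup_cons, List.mem_cons, not_or] at h
  simp only [Perm.mul_apply, swap_apply_def]
  grind

theorem aux_eight {α : Type*} [DecidableEq α] (a b c d e f k l : α)
    (h : [a, b, c, d, e, f, k, l].Nodup) :
    ∃ g : Perm α, g a = b ∧ g b = c ∧ g c = d ∧ g d = e ∧ g e = f ∧ g f = k ∧ g k = l ∧
      g l = a := by
  refine ⟨List.formPerm [a, b, c, d, e, f, k, l], ?_⟩
  have := fun i (hi : i < 8) => List.formPerm_apply_getElem [a, b, c, d, e, f, k, l] h i (by simpa using hi)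
  refine ⟨this 0 (by simp), this 1 (by simp), this 2 (by simp), this 3 (by simp), this 4 (by simp), this 5 (by simp), this 6 (by simp), ?_⟩
  simpa using this 7 (by simp)

theorem aux_swap_char (n : ℕ) (h6 : n ≠ 6) (t : Perm (Fin n)) (h1 : t ≠ 1)
    (h2 : ∀ x, t (t x) = x) (h3 : ∀ g : Perm (Fin n), (t * (g * t * g⁻¹)) ^ 6 = 1)
    (h4 : ∃ g : Perm (Fin n), t * (g * t * g⁻¹) ≠ (g * t * g⁻¹) * t) : t.IsSwap := by
  by_contra hs
  have hinj := t.injective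
  obtain ⟨a, ha⟩ : ∃ a, t a ≠ a := by
    by_contra! hh
    exact h1 (Equiv.ext hh)
  obtain ⟨b, hb⟩ : ∃ b, t a = b := ⟨_, rfl⟩
  have hb' : t b = a := by rw [← hb, h2]
  obtain ⟨c, hca, hcb, hc⟩ : ∃ c, c ≠ a ∧ c ≠ b ∧ t c ≠ c := by
    by_contra! hh
    refine hs ⟨a, b, by grind, Equiv.ext fun x => ?_⟩
    rw [swap_apply_def]
    grind
  obtain ⟨d, hd⟩ : ∃ d, t c = d := ⟨_, rfl⟩
  have hd' : t d = c := by rw [← hd, h2]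
  by_cases hf : ∃ e, t e = e
  · obtain ⟨e, he⟩ := hf
    obtain ⟨g, g1, g2, g3, g4, g5⟩ := aux_five a b c d e (by
      simp only [List.nodup_cons, List.mem_cons, not_or]; grind)
    have := congrArg (fun p : Perm (Fin n) => p a) (h3 g)
    have sa := aux_conj_apply g t g5 he g5
    have sb := aux_conj_apply g t g1 hb g2
    have sc := aux_conj_apply g t g2 hb' g1
    have sd := aux_conj_apply g t g3 hd g4
    have se := aux_conj_apply g t g4 hd' g3
    generalize g * t * g⁻¹ = s at *
    simp only [pow_succ, pow_zero, Perm.mul_apply, Perm.one_apply, sa, sb, sc, sd, se, hb, hb', hd, hd', he] at this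
    grind
  · push Not at hf
    by_cases h5 : ∃ e, e ≠ a ∧ e ≠ b ∧ e ≠ c ∧ e ≠ d
    · obtain ⟨e, e1, e2, e3, e4⟩ := h5
      obtain ⟨f, he⟩ : ∃ f, t e = f := ⟨_, rfl⟩
      have he' : t f = e := by rw [← he, h2]
      have hef := hf e
      obtain ⟨k, k1, k2, k3, k4, k5, k6⟩ : ∃ k, k ≠ a ∧ k ≠ b ∧ k ≠ c ∧ k ≠ d ∧ k ≠ e ∧ k ≠ f := by
        by_contra! hh
        apply h6
        have : (Finset.univ : Finset (Fin n)) = {a, b, c, d, e, f} := by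
          ext x
          have := hh x
          simp only [Finset.mem_univ, Finset.mem_insert, Finset.mem_singleton]
          tauto
        rw [← Finset.card_fin n, this]
        clear this hh h3 h4 hs
        repeat rw [Finset.card_insert_of_notMem (by
          simp only [Finset.mem_insert, Finset.mem_singleton]; grind)]
        simp
      obtain ⟨l, hk⟩ : ∃ l, t k = l := ⟨_, rfl⟩
      have hk' : t l = k := by rw [← hk, h2]
      have hkl := hf k
      obtain ⟨g, g1, g2, g3, g4, g5, g6, g7, g8⟩ := aux_eight a b c d e f k l (by
        clear h1 h2 h3 h4 hs hf hinj h6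
        have l1 : l ≠ a := by grind
        have l2 : l ≠ b := by grind
        have l3 : l ≠ c := by grind
        have l4 : l ≠ d := by grind
        have l5 : l ≠ e := by grind
        have l6 : l ≠ f := by grind
        have f1 : f ≠ a := by grind
        have f2 : f ≠ b := by grind
        have f3 : f ≠ c := by grind
        have f4 : f ≠ d := by grind
        have d1 : d ≠ a := by grind
        have d2 : d ≠ b := by grind
        rw [hb] at ha
        rw [hd] at hc
        rw [he] at hef
        rw [hk] at hkl
        simp only [List.nodup_cons, List.mem_cons, not_or, List.not_mem_nil, List.nodup_nil]
        simp only [not_false_eq_true, and_true]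
        tauto)
      have := congrArg (fun p : Perm (Fin n) => p a) (h3 g)
      have sa := aux_conj_apply g t g8 hk' g7
      have sl := aux_conj_apply g t g7 hk g8
      have sb := aux_conj_apply g t g1 hb g2
      have sc := aux_conj_apply g t g2 hb' g1
      have sd := aux_conj_apply g t g3 hd g4
      have se := aux_conj_apply g t g4 hd' g3
      have sf := aux_conj_apply g t g5 he g6
      have sk := aux_conj_apply g t g6 he' g5
      generalize g * t * g⁻¹ = s at *
      simp only [pow_succ, pow_zero, Perm.mul_apply, Perm.one_apply, sa, sb, sc, sd, se, sf, sk, sl,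
        hb, hb', hd, hd', he, he', hk, hk'] at this
      grind
    · push Not at h5
      have : n = 4 := by
        have : (Finset.univ : Finset (Fin n)) = {a, b, c, d} := by
          ext x
          have := h5 x
          simp only [Finset.mem_univ, Finset.mem_insert, Finset.mem_singleton]
          tauto
        rw [← Finset.card_fin n, this]
        clear this h5 h3 h4 hs
        repeat rw [Finset.card_insert_of_notMem (by
          simp only [Finset.mem_insert, Finset.mem_singleton]; grind)]
        simp
      subst this
      obtain ⟨g, hg⟩ := h4
      exact hg (aux_four t g h2 hf)


theorem aux_swap_comm {α : Type*} [DecidableEq α] {a b c d : α} (h1 : a ≠ c) (h2 : a ≠ d)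
    (h3 : b ≠ c) (h4 : b ≠ d) : swap a b * swap c d = swap c d * swap a b := by
  ext x
  simp only [Perm.mul_apply, swap_apply_def]
  grind

theorem aux_swap_conj {α : Type*} [DecidableEq α] {a b c : α} (h1 : a ≠ b) (h2 : a ≠ c)
    (h3 : b ≠ c) : swap a b * swap a c * swap a b = swap b c := by
  ext x
  simp only [Perm.mul_apply, swap_apply_def]
  grind

theorem aux_swap_three {α : Type*} [DecidableEq α] (a b c : α) :
    (swap a b * swap a c) ^ 6 = 1 := by
  have hsq : ∀ x y : α, swap x y ^ 6 = 1 := fun x y => by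
    rw [show 6 = 2 * 3 from rfl, pow_mul, sq, swap_mul_self, one_pow]
  by_cases hab : a = b
  · subst hab; rw [swap_self]; exact hsq a c
  by_cases hac : a = c
  · subst hac; rw [swap_self]; exact hsq a b
  by_cases hbc : b = c
  · subst hbc; rw [swap_mul_self, one_pow]
  have h : (swap a b * swap a c) ^ 3 = 1 := by
    have h1 := aux_swap_conj hab hac hbc
    have h2 := aux_swap_conj hac hab (Ne.symm hbc)
    have : (swap a b * swap a c) ^ 3 =
      (swap a b * swap a c * swap a b) * (swap a c * swap a b * swap a c) := by
      simp only [pow_succ, pow_zero, one_mul, mul_assoc]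
    rw [this, h1, h2, swap_comm c b, swap_mul_self]
  rw [show 6 = 3 * 2 from rfl, pow_mul, h, one_pow]

theorem aux_swap_pow {α : Type*} [DecidableEq α] (a b c d : α) :
    (swap a b * swap c d) ^ 6 = 1 := by
  by_cases h1 : a = c
  · subst h1; exact aux_swap_three _ _ _
  by_cases h2 : a = d
  · subst h2; rw [swap_comm c a]; exact aux_swap_three _ _ _
  by_cases h3 : b = c
  · subst h3; rw [swap_comm a b]; exact aux_swap_three _ _ _
  by_cases h4 : b = d
  · subst h4; rw [swap_comm a b, swap_comm c b]; exact aux_swap_three _ _ _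
  have := aux_swap_comm h1 h2 h3 h4
  rw [Commute.mul_pow this, show 6 = 2 * 3 from rfl, pow_mul, pow_mul, sq, sq, swap_mul_self,
    swap_mul_self]
  simp

theorem aux_map_swap (n : ℕ) (h6 : n ≠ 6) (h3 : 3 ≤ n) (φ : Perm (Fin n) ≃* Perm (Fin n))
    (a b : Fin n) (hab : a ≠ b) : (φ (swap a b)).IsSwap := by
  apply aux_swap_char n h6
  · intro h
    rw [map_eq_one_iff φ φ.injective, swap_eq_one_iff] at h
    exact hab h
  · intro x
    rw [← Perm.mul_apply, ← map_mul, swap_mul_self, map_one, Perm.one_apply]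
  · intro g
    obtain ⟨g, rfl⟩ := φ.surjective g
    rw [← map_inv, ← map_mul, ← map_mul, ← map_mul, ← map_pow, ← Equiv.swap_apply_apply,
      aux_swap_pow, map_one]
  · obtain ⟨c, hc⟩ : ∃ c, c ∉ ({a, b} : Finset (Fin n)) := by
      by_contra! hh
      have h1 : (Finset.univ : Finset (Fin n)) ⊆ {a, b} := fun x _ => hh x
      have h2 := Finset.card_le_card h1
      have h3 := Finset.card_le_two (a := a) (b := b)
      rw [Finset.card_fin] at h2
      omega
    simp only [Finset.mem_insert, Finset.mem_singleton, not_or] at hc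
    refine ⟨φ (swap b c), fun h => ?_⟩
    rw [← map_inv, ← map_mul, ← map_mul, ← map_mul, ← map_mul, φ.injective.eq_iff,
      ← Equiv.swap_apply_apply] at h
    have := congrArg (fun p : Perm (Fin n) => p a) h
    simp only [Perm.mul_apply, swap_apply_def] at this
    grind

theorem aux_meet {α : Type*} [DecidableEq α] {s t : Perm α} (hs : s.IsSwap) (ht : t.IsSwap)
    (h : s * t ≠ t * s) : ∃ p q r, p ≠ q ∧ p ≠ r ∧ q ≠ r ∧ s = swap p q ∧ t = swap p r := by
  obtain ⟨a, b, hab, rfl⟩ := hs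
  obtain ⟨c, d, hcd, rfl⟩ := ht
  by_cases h1 : a = c
  · subst h1; exact ⟨a, b, d, hab, hcd, fun e => h (by rw [e]), rfl, rfl⟩
  by_cases h2 : a = d
  · subst h2; exact ⟨a, b, c, hab, hcd.symm, fun e => h (by rw [e, swap_comm]), rfl, swap_comm _ _⟩
  by_cases h3 : b = c
  · subst h3
    exact ⟨b, a, d, hab.symm, hcd, h2, swap_comm _ _, rfl⟩
  by_cases h4 : b = d
  · subst h4
    exact ⟨b, a, c, hab.symm, hcd.symm, h1, swap_comm _ _, swap_comm _ _⟩
  exact absurd (aux_swap_comm h1 h2 h3 h4) h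

theorem aux_inner_of_swap {α : Type*} [DecidableEq α] [Finite α] (φ : Perm α ≃* Perm α)
    (hφ : ∀ a b : α, a ≠ b → (φ (swap a b)).IsSwap) (o i k : α) (hi : i ≠ o) (hk : k ≠ o)
    (hik : i ≠ k) : ∃ g : Perm α, ∀ x, φ x = g * x * g⁻¹ := by
  have hnc : ∀ j l, j ≠ o → l ≠ o → j ≠ l →
      φ (swap o j) * φ (swap o l) ≠ φ (swap o l) * φ (swap o j) := by
    intro j l hj hl hjl h
    rw [← map_mul, ← map_mul, φ.injective.eq_iff] at h
    have := congrArg (fun p : Perm α => p o) h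
    simp only [Perm.mul_apply, swap_apply_def] at this
    grind
  obtain ⟨p, q, r, hpq, hpr, hqr, h1, h2⟩ :=
    aux_meet (hφ o i hi.symm) (hφ o k hk.symm) (hnc i k hi hk hik)
  have key : ∀ j, ∃ x, j ≠ o → x ≠ p ∧ φ (swap o j) = swap p x := by
    intro j
    by_cases hj : j = o
    · exact ⟨p, fun h => absurd hj h⟩
    by_cases hji : j = i
    · exact ⟨q, fun _ => ⟨hpq.symm, by rw [hji, h1]⟩⟩
    by_cases hjk : j = k
    · exact ⟨r, fun _ => ⟨hpr.symm, by rw [hjk, h2]⟩⟩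
    obtain ⟨p', q', x, hpq', hpx', hqx', h1', h2'⟩ :=
      aux_meet (hφ o i hi.symm) (hφ o j (Ne.symm hj)) (hnc i j hi hj (Ne.symm hji))
    have hp : p' = p ∨ p' = q := by
      have e := congrArg (fun s : Perm α => s p') (h1.symm.trans h1')
      simp only [swap_apply_def] at e
      grind
    rcases hp with rfl | rfl
    · exact ⟨x, fun _ => ⟨hpx'.symm, h2'⟩⟩
    by_cases hxp : x = p
    · exact ⟨p', fun _ => ⟨hpq.symm, by rw [h2', hxp, swap_comm]⟩⟩
    exfalso
    by_cases hxr : x = r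
    · subst hxr
      have e : φ (swap i k) = φ (swap o j) := by
        rw [← aux_swap_conj hi.symm hk.symm hik, map_mul, map_mul, h1, h2, h2',
          aux_swap_conj hpq hpr hqr]
      rw [φ.injective.eq_iff] at e
      have := congrArg (fun s : Perm α => s o) e
      simp only [swap_apply_def] at this
      grind
    · apply hnc j k hj hk hjk
      rw [h2', h2]
      exact aux_swap_comm hpq.symm hqr hxp hxr
  choose f hf using key
  let g0 : α → α := fun j => if j = o then p else f j
  have hg0 : Function.Injective g0 := by
    intro j l hjl
    by_cases hj : j = o <;> by_cases hl : l = o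
    · rw [hj, hl]
    · simp only [g0, hj, hl, if_true, if_false] at hjl
      exact absurd hjl.symm (hf l hl).1
    · simp only [g0, hj, hl, if_true, if_false] at hjl
      exact absurd hjl (hf j hj).1
    · simp only [g0, hj, hl, if_false] at hjl
      have e : φ (swap o j) = φ (swap o l) := by rw [(hf j hj).2, (hf l hl).2, hjl]
      rw [φ.injective.eq_iff] at e
      have := congrArg (fun s : Perm α => s o) e
      simpa using this
  let g : Perm α := Equiv.ofBijective g0 (Finite.injective_iff_bijective.mp hg0)
  have hgo : g o = p := by simp [g, g0]
  have hgj : ∀ j, j ≠ o → g j = f j := fun j hj => by simp [g, g0, hj]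
  have star : ∀ j, j ≠ o → φ (swap o j) = g * swap o j * g⁻¹ := by
    intro j hj
    rw [← Equiv.swap_apply_apply, hgo, hgj j hj, (hf j hj).2]
  have all : ∀ a b, a ≠ b → φ (swap a b) = g * swap a b * g⁻¹ := by
    intro a b hab
    by_cases ha : a = o
    · subst ha; exact star b hab.symm
    by_cases hb : b = o
    · subst hb; rw [swap_comm]; exact star a hab
    rw [← aux_swap_conj (Ne.symm ha) (Ne.symm hb) hab, map_mul, map_mul, star a ha, star b hb]
    group
  refine ⟨g, fun x => ?_⟩
  induction x using Equiv.Perm.swap_induction_on with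
  | one => simp
  | swap_mul s a b hab ih => rw [map_mul, ih, all a b hab]; group

theorem aux_inner (n : ℕ) (h6 : n ≠ 6) (φ : Perm (Fin n) ≃* Perm (Fin n)) :
    ∃ g : Perm (Fin n), ∀ x, φ x = g * x * g⁻¹ := by
  by_cases h3 : 3 ≤ n
  · exact aux_inner_of_swap φ (aux_map_swap n h6 h3 φ) ⟨0, by omega⟩ ⟨1, by omega⟩ ⟨2, by omega⟩
      (by simp) (by simp) (by simp)
  · refine ⟨1, fun x => ?_⟩
    have hc : ∀ x y : Perm (Fin n), x ≠ 1 → y ≠ 1 → x = y := by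
      have : n = 0 ∨ n = 1 ∨ n = 2 := by omega
      rcases this with rfl | rfl | rfl <;> decide
    by_cases hx : x = 1
    · simp [hx]
    · simpa using hc _ _ (by rwa [Ne, map_eq_one_iff φ φ.injective]) hx

theorem aux_fiber {ι κ X : Type*} [Finite ι] [Finite κ] (f : ι → X) (g : κ → X)
    (h : ∀ ξ, Nat.card {i // f i = ξ} = Nat.card {j // g j = ξ}) :
    ∃ e : ι ≃ κ, ∀ i, g (e i) = f i := by
  have (ξ : X) : Nonempty ({i // f i = ξ} ≃ {j // g j = ξ}) := Finite.card_eq.mp (h ξ)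
  let e := fun ξ => (this ξ).some
  refine ⟨(Equiv.sigmaFiberEquiv f).symm.trans
    ((Equiv.sigmaCongrRight e).trans (Equiv.sigmaFiberEquiv g)), fun i => ?_⟩
  exact (e (f i) ⟨i, rfl⟩).2

end RSCAux

/-- Let `G = S_n` with `n` a positive integer, `n ≠ 6`, let `r` be a ramification of
`G` and `u` a fixed choice of representatives of the conjugacy classes.  Then
`RSC(G, r, χ⃗, u)` and `RSC(G, r, χ⃗', u)` are isomorphic if and only if for every
`C ∈ K_r(G)` the multiset `{χ_C^{(i)}}` equals the multiset `{χ'_C^{(i)}}`, i.e. for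
every character `ξ` of `Z_{u(C)}` the number of indices `i` with `χ_C^{(i)} = ξ`
equals the number of indices `i` with `χ'_C^{(i)} = ξ`. -/
theorem rsc_iso_iff_same_type (n : ℕ) (hn : 0 < n) (h6 : n ≠ 6)
    (A B : RSC (Equiv.Perm (Fin n))) (hr : A.r = B.r) (hu : A.u = B.u) :
    RSC.Iso A B ↔
      ∀ C : ConjClasses (Equiv.Perm (Fin n)), A.r C ≠ 0 →
        ∀ ξ : Subgroup.centralizer ({A.u C} : Set (Equiv.Perm (Fin n))) →* ℂˣ,
          Nat.card {i : Fin (A.r C) // A.chi C i = ξ} =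
            Nat.card {j : Fin (B.r C) //
              ∀ (x : Equiv.Perm (Fin n))
                (hx : x ∈ Subgroup.centralizer ({A.u C} : Set (Equiv.Perm (Fin n))))
                (hx' : x ∈ Subgroup.centralizer ({B.u C} : Set (Equiv.Perm (Fin n)))),
                B.chi C j ⟨x, hx'⟩ = ξ ⟨x, hx⟩} := by
  constructor
  · rintro ⟨φ, H⟩ C hC ξ
    obtain ⟨g, hg⟩ := RSCAux.aux_inner n h6 φ
    obtain ⟨h, h1, h2⟩ := H C
    have hmap : ConjClasses.map (φ : Equiv.Perm (Fin n) →* Equiv.Perm (Fin n)) C = C := by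
      obtain ⟨a, rfl⟩ := ConjClasses.mk_surjective C
      change ConjClasses.mk (φ a) = ConjClasses.mk a
      rw [ConjClasses.mk_eq_mk_iff_isConj]
      exact IsConj.symm (isConj_iff.mpr ⟨g, (hg a).symm⟩)
    rw [hmap] at h1 h2
    obtain ⟨e, he⟩ := h2 hC
    obtain ⟨rA, uA, huA, chiA⟩ := A
    obtain ⟨rB, uB, huB, chiB⟩ := B
    dsimp only at hr hu hC ξ h1 e he ⊢
    subst hr hu
    have hk : g * h ∈ Subgroup.centralizer ({uA C} : Set (Equiv.Perm (Fin n))) := by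
      rw [Subgroup.mem_centralizer_singleton_iff]
      rw [hg] at h1
      calc g * h * uA C = (g * (h * uA C * h⁻¹) * g⁻¹) * (g * h) := by group
        _ = uA C * (g * h) := by rw [h1]
    have key : ∀ i, chiB C (e i) = chiA C i := by
      intro i
      ext1 x
      have hx : φ (h * x.1 * h⁻¹) = g * h * x.1 * (g * h)⁻¹ := by rw [hg]; group
      have hx' : φ (h * x.1 * h⁻¹) ∈
          Subgroup.centralizer ({uA C} : Set (Equiv.Perm (Fin n))) := by
        rw [hx]
        exact mul_mem (mul_mem hk x.2) (inv_mem hk)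
      rw [← he i x.1 x.2 hx']
      have e1 : (⟨φ (h * x.1 * h⁻¹), hx'⟩ :
          Subgroup.centralizer ({uA C} : Set (Equiv.Perm (Fin n)))) =
          ⟨g * h, hk⟩ * x * ⟨g * h, hk⟩⁻¹ := Subtype.ext hx
      rw [e1, map_mul, map_mul, map_inv, mul_comm (chiB C (e i) _), mul_inv_cancel_right]
    refine Nat.card_congr (e.subtypeEquiv fun i => ?_)
    rw [← key i]
    constructor
    · intro hh x hx hx'
      rw [hh]
    · intro hh
      ext1 x
      exact hh x.1 x.2 x.2
  · intro H
    obtain ⟨rA, uA, huA, chiA⟩ := A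
    obtain ⟨rB, uB, huB, chiB⟩ := B
    dsimp only at hr hu H
    subst hr hu
    refine ⟨MulEquiv.refl _, fun C => ⟨1, ?_⟩⟩
    have hmap : ConjClasses.map ((MulEquiv.refl (Equiv.Perm (Fin n)) :
        Equiv.Perm (Fin n) ≃* Equiv.Perm (Fin n)) :
        Equiv.Perm (Fin n) →* Equiv.Perm (Fin n)) C = C := by
      obtain ⟨a, rfl⟩ := ConjClasses.mk_surjective C
      rfl
    rw [hmap]
    refine ⟨by simp, fun hC => ?_⟩
    obtain ⟨e, he⟩ := RSCAux.aux_fiber (chiA C) (chiB C) (fun ξ => by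
      rw [H C hC ξ]
      refine Nat.card_congr (Equiv.subtypeEquivRight fun j => ?_)
      constructor
      · intro hh
        ext1 x
        exact hh x.1 x.2 x.2
      · intro hh x hx hx'
        rw [hh])
    refine ⟨e, fun i x hx hx' => ?_⟩
    dsimp only
    rw [he i]
    congr 1
end
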